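/- arXiv:1009.6109 — 2 statements merged into one kernel-verified Lean document; each statement's English description precedes it below -/
import Mathlib

section
/- Let q > 2 be a prime power and K a finite field with q² elements. Let 𝒰 be a unital in PG(2,q²) and let M be the subgroup of PGL(3,K) consisting of the projectivities that map 𝒰 onto itself. If there exist two distinct points P, Q ∈ 𝒰 such that the stabiliser G = M_{P,Q} (the subgroup of M fixing both P and Q) has order q² − 1, then 𝒰 is classical, i.e. 𝒰 is the image of the Hermitian curve {(x:y:z) : x^{q+1} + y^{q+1} + z^{q+1} = 0} under some element of PGL(3,K). -/
open Projectivization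
open scoped LinearAlgebra.Projectivization

variable (K : Type*) [Field K]

/-- The point set of `PG(2,K)`. -/
abbrev PGPt := ℙ K (Fin 3 → K)

/-- A line of `PG(2,K)`: a 2-dimensional subspace of `K³`. -/
def PGLn := {W : Submodule K (Fin 3 → K) // Module.finrank K W = 2}

variable {K}

/-- Incidence between points and lines of `PG(2,K)`. -/
def PGMem (P : PGPt K) (L : PGLn K) : Prop := P.submodule ≤ L.1

/-- A unital in `PG(2,q²)`: a set of `q³+1` points meeting every line in `1` or `q+1` points. -/
def IsUnital (q : ℕ) (U : Set (PGPt K)) : Prop :=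
  U.ncard = q ^ 3 + 1 ∧
    ∀ L : PGLn K, {P ∈ U | PGMem P L}.ncard = 1 ∨ {P ∈ U | PGMem P L}.ncard = q + 1

lemma projmap_mul (f g : (Fin 3 → K) ≃ₗ[K] (Fin 3 → K)) (P : PGPt K) :
    Projectivization.map f.toLinearMap f.injective
      (Projectivization.map g.toLinearMap g.injective P) =
    Projectivization.map (f * g).toLinearMap (f * g).injective P := by
  induction' P using Projectivization.ind with v hv
  rfl

lemma projmap_one (P : PGPt K) :
    Projectivization.map (1 : (Fin 3 → K) ≃ₗ[K] (Fin 3 → K)).toLinearMap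
      (1 : (Fin 3 → K) ≃ₗ[K] (Fin 3 → K)).injective P = P := by
  induction' P using Projectivization.ind with v hv
  rfl

/-- The permutation of the projective plane induced by a linear automorphism of `K³`. -/
def projPerm (e : (Fin 3 → K) ≃ₗ[K] (Fin 3 → K)) : Equiv.Perm (PGPt K) where
  toFun := Projectivization.map e.toLinearMap e.injective
  invFun := Projectivization.map e.symm.toLinearMap e.symm.injective
  left_inv := fun P => by
    rw [projmap_mul, show e.symm * e = 1 from LinearEquiv.ext fun v => e.symm_apply_apply v, projmap_one]
  right_inv := fun P => by
    rw [projmap_mul, show e * e.symm = 1 from LinearEquiv.ext fun v => e.apply_symm_apply v, projmap_one]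

/-- The homomorphism from linear automorphisms of `K³` to permutations of `PG(2,K)`;
its range is the group `PGL(3,K)` of projectivities, acting faithfully on the plane. -/
def projHom : ((Fin 3 → K) ≃ₗ[K] (Fin 3 → K)) →* Equiv.Perm (PGPt K) where
  toFun := projPerm
  map_one' := by ext P; exact projmap_one P
  map_mul' := fun f g => by ext P; exact (projmap_mul f g P).symm

/-- `PGL(3,K)` as a group of permutations of the plane. -/
def PGL3 (K : Type*) [Field K] : Subgroup (Equiv.Perm (PGPt K)) := (projHom (K := K)).range

/-- The subgroup of `PGL(3,K)` preserving a point set `U`. -/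
def presGroup (U : Set (PGPt K)) : Subgroup (Equiv.Perm (PGPt K)) where
  carrier := {σ | σ ∈ PGL3 K ∧ σ '' U = U}
  one_mem' := ⟨one_mem _, by simp⟩
  mul_mem' := fun {a b} ha hb => ⟨mul_mem ha.1 hb.1, by
    rw [show ⇑(a * b) = ⇑a ∘ ⇑b from rfl, Set.image_comp, hb.2, ha.2]⟩
  inv_mem' := fun {a} ha => ⟨inv_mem ha.1, by
    conv_lhs => rw [← ha.2]
    rw [show (a⁻¹ : Equiv.Perm (PGPt K)) = a.symm from rfl]
    exact Equiv.symm_image_image a U⟩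

/-- The stabiliser of two points inside the group preserving `U`. -/
def twoPtStab (U : Set (PGPt K)) (P Q : PGPt K) : Subgroup (Equiv.Perm (PGPt K)) where
  carrier := {σ | σ ∈ presGroup U ∧ σ P = P ∧ σ Q = Q}
  one_mem' := ⟨one_mem _, rfl, rfl⟩
  mul_mem' := fun {a b} ha hb => ⟨mul_mem ha.1 hb.1, by
    simp [Equiv.Perm.mul_apply, hb.2.1, ha.2.1], by simp [Equiv.Perm.mul_apply, hb.2.2, ha.2.2]⟩
  inv_mem' := fun {a} ha => ⟨inv_mem ha.1,
    by rw [Equiv.Perm.inv_def, Equiv.symm_apply_eq]; exact ha.2.1.symm,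
    by rw [Equiv.Perm.inv_def, Equiv.symm_apply_eq]; exact ha.2.2.symm⟩

/-- The classical (Hermitian) unital: image of the Hermitian curve
`x^{q+1} + y^{q+1} + z^{q+1} = 0` under an element of `PGL(3,K)`. -/
def IsClassicalUnital (q : ℕ) (U : Set (PGPt K)) : Prop :=
  ∃ σ ∈ PGL3 K, σ '' {P : PGPt K |
    P.rep 0 ^ (q + 1) + P.rep 1 ^ (q + 1) + P.rep 2 ^ (q + 1) = 0} = U

open Polynomial in
lemma uc_prod_of_roots {F : Type*} [Field F] [DecidableEq F] (P : F[X]) (hP : P.Monic) (s : Finset F)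
    (hs : s.card = P.natDegree) (h : ∀ a ∈ s, P.eval a = 0) : P = ∏ a ∈ s, (X - C a) := by
  have h2 : (∏ a ∈ s, (X - C a)).Monic := monic_prod_of_monic _ _ fun a _ => monic_X_sub_C a
  have hd : (∏ a ∈ s, (X - C a)).natDegree = s.card := natDegree_finsetProd_X_sub_C_eq_card s (fun a => a)
  refine Polynomial.eq_of_degree_sub_lt_of_eval_finset_eq s ?_ ?_
  · have := degree_sub_lt_left (p := P) (q := ∏ a ∈ s, (X - C a)) ?_ hP.ne_zero ?_
    · rwa [degree_eq_natDegree hP.ne_zero, ← hs] at this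
    · rw [degree_eq_natDegree hP.ne_zero, degree_eq_natDegree h2.ne_zero, hd, hs]
    · rw [hP.leadingCoeff, h2.leadingCoeff]
  · intro a ha
    rw [h a ha, eval_prod, Finset.prod_eq_zero ha]; simp

/-- bundle of the running assumptions on the finite field -/
structure QF (F : Type*) [Field F] [Fintype F] (q p h : ℕ) : Prop where
  card : Fintype.card F = q ^ 2
  hq : q = p ^ h
  hp : p.Prime
  char : CharP F p
  hh : 1 ≤ h
  q2 : 2 < q

namespace QF
variable {F : Type*} [Field F] [Fintype F] [DecidableEq F] {q p h : ℕ} (H : QF F q p h)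
include H

lemma add_pow (a b : F) : (a + b) ^ q = a ^ q + b ^ q := by
  have := H.char; have := Fact.mk H.hp
  rw [H.hq]; exact add_pow_char_pow a b p h

lemma sub_pow (a b : F) : (a - b) ^ q = a ^ q - b ^ q := by
  have := H.char; have := Fact.mk H.hp
  rw [H.hq]; exact sub_pow_char_pow a b h

lemma zero_pow' : (0 : F) ^ q = 0 := by
  have := H.q2; exact zero_pow (by omega)

lemma neg_pow' (a : F) : (-a) ^ q = - a ^ q := by
  have := H.sub_pow 0 a
  rwa [H.zero_pow', zero_sub, zero_sub] at this

lemma sum_pow {ι : Type*} (s : Finset ι) (f : ι → F) : (∑ i ∈ s, f i) ^ q = ∑ i ∈ s, f i ^ q := by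
  have := H.char; have := Fact.mk H.hp
  rw [H.hq]; exact sum_pow_char_pow p h s f

lemma powqq (a : F) : (a ^ q) ^ q = a := by
  rw [← pow_mul, ← sq, ← H.card, FiniteField.pow_card]

lemma powq2 (a : F) : a ^ (q ^ 2) = a := by
  rw [← H.card, FiniteField.pow_card]

lemma pow1 {a : F} (ha : a ≠ 0) : a ^ (q ^ 2 - 1) = 1 := by
  rw [← H.card, FiniteField.pow_card_sub_one_eq_one a ha]

lemma qfac : q ^ 2 - 1 = (q + 1) * (q - 1) := by
  have := H.q2
  obtain ⟨k, rfl⟩ : ∃ k, q = k + 3 := ⟨q - 3, by omega⟩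
  have e : k + 3 - 1 = k + 2 := by omega
  rw [e]
  have : (k+3)^2 = (k+3+1) * (k+2) + 1 := by ring
  omega

lemma pow_inj {a b : F} (h : a ^ q = b ^ q) : a = b := by
  rw [← H.powqq a, h, H.powqq]

lemma norm_pow {a : F} (ha : a ≠ 0) : (a ^ (q + 1)) ^ (q - 1) = 1 := by
  rw [← pow_mul, ← H.qfac, H.pow1 ha]

lemma norm_q (a : F) : (a ^ (q + 1)) ^ q = a ^ (q + 1) := by
  rw [pow_succ, mul_pow, H.powqq, mul_comm]

lemma fu_iff (a : F) : a ^ (q - 1) = 1 ↔ a ^ q = a ∧ a ≠ 0 := by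
  have hq := H.q2
  have e : a ^ q = a ^ (q - 1) * a := by rw [← pow_succ]; congr 1; omega
  constructor
  · intro h
    refine ⟨by rw [e, h, one_mul], ?_⟩
    rintro rfl
    rw [zero_pow (by omega)] at h; exact zero_ne_one h
  · rintro ⟨h1, h2⟩
    rw [e] at h1
    exact mul_right_cancel₀ h2 (by rw [h1, one_mul])

omit H in
lemma card_pow_le (n : ℕ) (hn : 0 < n) (β : F) : (Finset.univ.filter fun x : F => x ^ n = β).card ≤ n := by
  have : (Finset.univ.filter fun x : F => x ^ n = β) ⊆ (Polynomial.nthRoots n β).toFinset := by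
    intro x hx
    simp only [Finset.mem_filter, Finset.mem_univ, true_and] at hx
    simp [Polynomial.mem_nthRoots hn, hx]
  exact (Finset.card_le_card this).trans ((Multiset.toFinset_card_le _).trans (Polynomial.card_nthRoots n β))

lemma fiber_sum : q ^ 2 - 1 = ∑ β ∈ Finset.univ.filter (fun β : F => β ^ (q - 1) = 1),
    (Finset.univ.filter fun x : F => x ^ (q + 1) = β).card := by
  have hq := H.q2
  have h1 : (Finset.univ.filter fun x : F => x ≠ 0).card = q ^ 2 - 1 := by
    rw [Finset.filter_ne', Finset.card_erase_of_mem (Finset.mem_univ _), Finset.card_univ, H.card]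
  rw [← h1, Finset.card_eq_sum_card_fiberwise (f := fun x => x ^ (q + 1)) (t := Finset.univ.filter (fun β : F => β ^ (q - 1) = 1))]
  · refine Finset.sum_congr rfl fun β hβ => ?_
    congr 1; ext x
    simp only [Finset.mem_filter, Finset.mem_univ, true_and, and_iff_right_iff_imp] at hβ ⊢
    rintro rfl rfl
    rw [zero_pow (by omega), zero_pow (by omega)] at hβ
    exact zero_ne_one hβ
  · intro x hx
    simp only [Finset.coe_filter, Finset.mem_univ, true_and, Set.mem_ofPred_eq] at hx ⊢
    exact H.norm_pow hx

lemma card_FU : (Finset.univ.filter (fun β : F => β ^ (q - 1) = 1)).card = q - 1 := by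
  have hq := H.q2
  refine le_antisymm (card_pow_le _ (by omega) _) ?_
  have h1 := H.fiber_sum (F := F)
  have h2 := Finset.sum_le_card_nsmul (Finset.univ.filter (fun β : F => β ^ (q - 1) = 1)) 
    (fun β => (Finset.univ.filter fun x : F => x ^ (q + 1) = β).card) (q + 1)
    (fun β _ => card_pow_le _ (by omega) _)
  rw [← h1, H.qfac, smul_eq_mul, mul_comm] at h2
  exact Nat.le_of_mul_le_mul_right h2 (by omega)

lemma card_norm {β : F} (hβ : β ^ (q - 1) = 1) :
    (Finset.univ.filter fun x : F => x ^ (q + 1) = β).card = q + 1 := by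
  have hq := H.q2
  have h1 := H.fiber_sum (F := F)
  have h3 : ∑ β ∈ Finset.univ.filter (fun β : F => β ^ (q - 1) = 1), (q + 1) = q ^ 2 - 1 := by
    rw [Finset.sum_const, H.card_FU, H.qfac, smul_eq_mul, mul_comm]
  rw [← h3] at h1
  exact ((Finset.sum_eq_sum_iff_of_le fun β _ => card_pow_le _ (by omega) _).1 h1.symm β (by simp [hβ]))

lemma exists_norm {β : F} (hβ : β ^ (q - 1) = 1) : ∃ x : F, x ^ (q + 1) = β := by
  have := H.card_norm hβ
  obtain ⟨x, hx⟩ := Finset.card_pos.1 (by rw [this]; omega)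
  exact ⟨x, by simpa using hx⟩

lemma card_Fs : (Finset.univ.filter (fun β : F => β ^ q = β)).card = q := by
  have hq := H.q2
  have : (Finset.univ.filter (fun β : F => β ^ q = β)) = insert 0 (Finset.univ.filter (fun β : F => β ^ (q - 1) = 1)) := by
    ext x
    simp only [Finset.mem_filter, Finset.mem_univ, true_and, Finset.mem_insert, H.fu_iff]
    by_cases hx : x = 0
    · subst hx; simp [H.zero_pow']
    · simp [hx]
  rw [this, Finset.card_insert_of_notMem, H.card_FU]
  · omega
  · simp [H.fu_iff]

lemma card_C : (Finset.univ.filter (fun β : F => β ^ q ≠ β)).card = q ^ 2 - q := by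
  have := Finset.card_filter_add_card_filter_not (s := (Finset.univ : Finset F)) (fun β : F => β ^ q = β)
  rw [H.card_Fs, Finset.card_univ, H.card] at this
  simp only [ne_eq]
  omega

open Polynomial

lemma prod_FU : (X ^ (q - 1) - 1 : F[X]) = ∏ β ∈ Finset.univ.filter (fun β : F => β ^ (q - 1) = 1), (X - C β) := by
  have hq := H.q2
  apply uc_prod_of_roots
  · exact monic_X_pow_sub_C (1 : F) (by omega : q - 1 ≠ 0)
  · rw [H.card_FU]; exact (natDegree_X_pow_sub_C (r := (1 : F))).symm
  · intro a ha; simp at ha; simp [ha]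

lemma prod_Fs : (X ^ q - X : F[X]) = ∏ β ∈ Finset.univ.filter (fun β : F => β ^ q = β), (X - C β) := by
  have hq := H.q2
  apply uc_prod_of_roots
  · exact monic_X_pow_sub (by rw [degree_X]; exact_mod_cast (by omega : 1 < q))
  · rw [H.card_Fs, FiniteField.X_pow_card_sub_X_natDegree_eq F (by omega)]
  · intro a ha; simp at ha; simp [ha]

lemma prod_all : (X ^ (q ^ 2) - X : F[X]) = ∏ β : F, (X - C β) := by
  have hq := H.q2
  apply uc_prod_of_roots
  · exact monic_X_pow_sub (by rw [degree_X]; exact_mod_cast (by nlinarith : 1 < q ^ 2))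
  · rw [Finset.card_univ, H.card, FiniteField.X_pow_card_sub_X_natDegree_eq F (by nlinarith)]
  · intro a ha; simp [H.powq2]

/-- value of the product over the units of the subfield -/
lemma prodFU_val : ∏ β ∈ Finset.univ.filter (fun β : F => β ^ (q - 1) = 1), β = -1 := by
  have hq := H.q2
  have h1 := congrArg (eval 0) (H.prod_FU (F := F))
  simp only [eval_sub, eval_pow, eval_X, eval_one, eval_prod, eval_C, zero_sub, zero_pow (by omega : q - 1 ≠ 0)] at h1
  rw [Finset.prod_neg, H.card_FU] at h1
  have h2 : ((-1 : F)) ^ (q - 1) = 1 := by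
    rw [H.fu_iff, H.neg_pow', one_pow]; simp
  rw [h2, one_mul] at h1; exact h1.symm

end QF

open Polynomial in
lemma uc_coeff_natDegree {F ι : Type*} [Field F] [DecidableEq ι] (d : ℕ) (v : ι → F[X]) (s : Finset ι)
    (hv : ∀ c ∈ s, (v c).natDegree ≤ d) :
    ∀ i, ((∏ c ∈ s, (X - C (v c))).coeff i).natDegree ≤ (s.card - i) * d := by
  induction s using Finset.induction_on with
  | empty =>
    intro i
    simp only [Finset.prod_empty, coeff_one]
    split_ifs <;> simp
  | insert a s ha ih =>
    have ih := ih (fun c hc => hv c (Finset.mem_insert_of_mem hc))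
    have hva := hv a (Finset.mem_insert_self _ _)
    intro i
    rw [Finset.prod_insert ha, Finset.card_insert_of_notMem ha]
    cases i with
    | zero =>
      rw [mul_coeff_zero]
      simp only [coeff_sub, coeff_X_zero, coeff_C_zero, zero_sub, neg_mul, natDegree_neg]
      refine natDegree_mul_le.trans ?_
      have := ih 0
      simp only [tsub_zero] at this ⊢
      rw [add_mul]; omega
    | succ i =>
      rw [coeff_X_sub_C_mul]
      refine (natDegree_sub_le _ _).trans (max_le ?_ ?_)
      · refine (ih i).trans (Nat.mul_le_mul_right _ (by omega))
      · by_cases h : i + 1 ≤ s.card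
        · refine natDegree_mul_le.trans ?_
          have := ih (i + 1)
          have e : s.card + 1 - (i + 1) = (s.card - (i + 1)) + 1 := by omega
          rw [e, add_mul]; omega
        · rw [coeff_eq_zero_of_natDegree_lt]
          · simp
          · rw [natDegree_finsetProd_X_sub_C_eq_card]; omega

open Polynomial in
lemma uc_dcoeff {F ι : Type*} [Field F] [DecidableEq ι] (v : ι → F[X]) (s : Finset ι) :
    ∀ k, derivative ((∏ c ∈ s, (X - C (v c))).coeff k) =
      - ∑ c ∈ s, derivative (v c) * (∏ c' ∈ s.erase c, (X - C (v c'))).coeff k := by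
  induction s using Finset.induction_on with
  | empty =>
    intro i
    simp only [Finset.prod_empty, coeff_one]
    split_ifs <;> simp
  | insert a s ha ih =>
    intro k
    have e : ∀ c ∈ s, (∏ c' ∈ (insert a s).erase c, (X - C (v c'))) = 
        (X - C (v a)) * ∏ c' ∈ s.erase c, (X - C (v c')) := by
      intro c hc
      have hac : a ≠ c := by rintro rfl; exact ha hc
      rw [Finset.erase_insert_of_ne hac, Finset.prod_insert]
      simp [ha]
    rw [Finset.prod_insert ha, Finset.sum_insert ha, Finset.erase_insert ha]
    rw [Finset.sum_congr rfl (fun c hc => by rw [e c hc])]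
    cases k with
    | zero =>
      simp only [mul_coeff_zero, coeff_sub, coeff_X_zero, coeff_C_zero, zero_sub]
      rw [derivative_mul, derivative_neg, ih 0]
      simp only [mul_neg, Finset.mul_sum, Finset.sum_neg_distrib, neg_mul, neg_neg, neg_add]
      congr 1
      exact Finset.sum_congr rfl fun c _ => by ring
    | succ k =>
      simp only [coeff_X_sub_C_mul]
      rw [derivative_sub, derivative_mul, ih, ih]
      simp only [mul_sub, Finset.sum_sub_distrib, mul_neg, Finset.mul_sum, neg_add, neg_sub]
      have : ∀ c, derivative (v c) * (v a * (∏ x ∈ s.erase c, (X - C (v x))).coeff (k+1)) =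
        v a * (derivative (v c) * (∏ x ∈ s.erase c, (X - C (v x))).coeff (k+1)) := fun c => by ring
      simp only [this]
      ring

open Polynomial in
/-- hypothesis on a pair of functions -/
structure FHyp {F : Type*} [Field F] [Fintype F] [DecidableEq F] (q : ℕ) (f fs : F → F) : Prop where
  fq : ∀ x, f x ^ q = f x
  f0 : ∀ x, f x = 0 ↔ x ^ q = x
  sq : ∀ x, fs x ^ q = fs x
  s0 : ∀ x, fs x = 0 ↔ x ^ q = x
  out : ∀ m, m ^ q ≠ m → ∀ β, β ^ (q - 1) = 1 →
    (Finset.univ.filter fun c : F => c ^ q ≠ c ∧ (c - m) ^ (q + 1) = β * f c).card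
      = if β = fs m then 1 else q + 1
  inn : ∀ m, m ^ q = m → ∀ β, β ^ (q - 1) = 1 →
    (Finset.univ.filter fun c : F => c ^ q ≠ c ∧ (c - m) ^ (q + 1) = β * f c).card = q

namespace FHyp
open Polynomial
variable {F : Type*} [Field F] [Fintype F] [DecidableEq F] {q p h : ℕ} {f fs : F → F}

lemma neg1 (H : QF F q p h) : (-1 : F) ^ (q + 1) = 1 := by
  rw [pow_succ, H.neg_pow']; simp

lemma norm_sub_comm (H : QF F q p h) (a b : F) : (a - b) ^ (q + 1) = (b - a) ^ (q + 1) := by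
  rw [← neg_sub b a, neg_pow, neg1 H, one_mul]

lemma poly_sub_pow (H : QF F q p h) (a b : F[X]) : (a - b) ^ q = a ^ q - b ^ q := by
  have := H.char; have := Fact.mk H.hp
  rw [H.hq]; exact sub_pow_char_pow a b h

/-- common fibering lemma -/
lemma prod_fib (H : QF F q p h) (A : FHyp q f fs) (m : F) (s : Finset F)
    (hs : ∀ c ∈ s, c ^ q ≠ c ∧ c ≠ m) :
    ∏ c ∈ s, (X - C ((f c)⁻¹ * (m - c) ^ (q + 1))) =
      ∏ β ∈ Finset.univ.filter (fun β : F => β ^ (q - 1) = 1),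
        (X - C β) ^ (s.filter fun c => (c - m) ^ (q + 1) = β * f c).card := by
  rw [← Finset.prod_fiberwise_of_maps_to (g := fun c => (f c)⁻¹ * (m - c) ^ (q + 1))
    (t := Finset.univ.filter (fun β : F => β ^ (q - 1) = 1))]
  · refine Finset.prod_congr rfl fun β hβ => ?_
    rw [Finset.prod_congr rfl (g := fun _ => X - C β), Finset.prod_const]
    · congr 2
      ext c
      simp only [Finset.mem_filter, and_congr_right_iff]
      intro hc
      have : f c ≠ 0 := fun h => (hs c hc).1 ((A.f0 c).1 h)
      rw [norm_sub_comm H m c, inv_mul_eq_iff_eq_mul₀ this, mul_comm]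
    · intro c hc
      rw [(Finset.mem_filter.1 hc).2]
  · intro c hc
    have h0 : f c ≠ 0 := fun h => (hs c hc).1 ((A.f0 c).1 h)
    simp only [Finset.mem_filter, Finset.mem_univ, true_and]
    rw [H.fu_iff, mul_pow, H.norm_q, inv_pow, A.fq]
    refine ⟨rfl, mul_ne_zero (inv_ne_zero h0) (pow_ne_zero _ (sub_ne_zero.2 (hs c hc).2.symm))⟩

lemma R_in (H : QF F q p h) (A : FHyp q f fs) (m : F) (hm : m ^ q = m) :
    ∏ c ∈ Finset.univ.filter (fun c : F => c ^ q ≠ c), (X - C ((f c)⁻¹ * (m - c) ^ (q + 1))) =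
      X ^ (q ^ 2 - q) - 1 := by
  rw [prod_fib H A m]
  · rw [Finset.prod_congr rfl (g := fun β => (X - C β) ^ q)]
    · rw [Finset.prod_pow, ← H.prod_FU, poly_sub_pow H, one_pow, ← pow_mul]
      congr 2
      rw [Nat.sub_mul]; ring_nf
    · intro β hβ
      congr 1
      rw [Finset.filter_filter]
      exact A.inn m hm β (Finset.mem_filter.1 hβ).2
  · intro c hc
    have := (Finset.mem_filter.1 hc).2
    refine ⟨this, ?_⟩
    rintro rfl; exact this hm

lemma R_out (H : QF F q p h) (A : FHyp q f fs) (m : F) (hm : m ^ q ≠ m) :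
    (∏ c ∈ Finset.univ.filter (fun c : F => c ^ q ≠ c), (X - C ((f c)⁻¹ * (m - c) ^ (q + 1)))) *
      (X ^ q - C (fs m)) = (X ^ q - X) * (X ^ (q ^ 2 - q) - 1) := by
  have hq := H.q2
  have hfsm : fs m ^ (q - 1) = 1 := by
    rw [H.fu_iff]; exact ⟨A.sq m, fun h => hm ((A.s0 m).1 h)⟩
  have hmm : m ∈ Finset.univ.filter (fun c : F => c ^ q ≠ c) := by simp [hm]
  rw [← Finset.mul_prod_erase _ _ hmm, prod_fib H A m]
  · have e1 : X ^ q - C (fs m) = (X - C (fs m)) ^ q := by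
      rw [poly_sub_pow H, ← C_pow, A.sq]
    have hmem : fs m ∈ Finset.univ.filter (fun β : F => β ^ (q - 1) = 1) := by simp [hfsm]
    have e2 : ∀ β ∈ Finset.univ.filter (fun β : F => β ^ (q - 1) = 1),
        (((Finset.univ.filter (fun c : F => c ^ q ≠ c)).erase m).filter 
          fun c => (c - m) ^ (q + 1) = β * f c).card = if β = fs m then 1 else q + 1 := by
      intro β hβ
      have hβ' := (Finset.mem_filter.1 hβ).2
      rw [← A.out m hm β hβ']
      congr 1
      ext c
      simp only [Finset.mem_filter, Finset.mem_erase, Finset.mem_univ, true_and]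
      constructor
      · rintro ⟨⟨_, h1⟩, h2⟩; exact ⟨h1, h2⟩
      · rintro ⟨h1, h2⟩
        refine ⟨⟨?_, h1⟩, h2⟩
        rintro rfl
        rw [sub_self, zero_pow (by omega)] at h2
        rcases mul_eq_zero.1 h2.symm with h3 | h3
        · exact ((H.fu_iff β).1 hβ').2 h3
        · exact h1 ((A.f0 c).1 h3)
    rw [Finset.prod_congr rfl (fun β hβ => by rw [e2 β hβ]), e1]
    rw [← Finset.mul_prod_erase _ _ hmem]
    rw [if_pos rfl, pow_one]
    rw [Finset.prod_congr rfl (g := fun β => (X - C β) ^ (q + 1))]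
    · have e3 := Finset.mul_prod_erase _ (fun β : F => (X - C β) ^ (q + 1)) hmem
      have e3' := Finset.prod_pow (Finset.univ.filter (fun β : F => β ^ (q - 1) = 1)) (q + 1)
        (fun β : F => X - C β)
      rw [e3', ← H.prod_FU] at e3
      have e4 : (X ^ (q ^ 2 - q) - 1 : F[X]) = (X ^ (q - 1) - 1) ^ q := by
        rw [poly_sub_pow H, one_pow, ← pow_mul]
        congr 2
        rw [Nat.sub_mul]; ring_nf
      have e5 : (X ^ q - X : F[X]) = X * (X ^ (q - 1) - 1) := by
        rw [mul_sub, ← pow_succ', mul_one]; congr 2; omega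
      rw [e4, e5, mul_assoc X, ← pow_succ' (X ^ (q - 1) - 1 : F[X]), ← e3]
      simp only [sub_self, zero_pow (by omega : q + 1 ≠ 0), mul_zero, C_0, sub_zero]
      ring
    · intro β hβ
      rw [if_neg (Finset.mem_erase.1 hβ).1]
  · intro c hc
    have := (Finset.mem_erase.1 hc)
    exact ⟨(Finset.mem_filter.1 this.2).2, this.1⟩

lemma n_facts (H : QF F q p h) : 2 * q ≤ q ^ 2 - q ∧ (q ^ 2 - q) + q = q ^ 2 := by
  have hq := H.q2
  have : 3 * q ≤ q ^ 2 := by nlinarith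
  omega

lemma coeff_in (H : QF F q p h) (l : ℕ) (h1 : 1 ≤ l) (h2 : l ≤ q) :
    (X ^ (q ^ 2 - q) - 1 : F[X]).coeff (q ^ 2 - q - l) = 0 := by
  have := n_facts H
  have := H.q2
  rw [coeff_sub, coeff_X_pow, coeff_one, if_neg (by omega), if_neg (by omega), sub_zero]

lemma coeff_out (H : QF F q p h) (R : F[X]) (hR : R.Monic) (hd : R.natDegree = q ^ 2 - q) (b : F)
    (hRe : R * (X ^ q - C b) = (X ^ q - X) * (X ^ (q ^ 2 - q) - 1)) :
    (∀ l, 1 ≤ l → l ≤ q - 2 → R.coeff (q ^ 2 - q - l) = 0) ∧ R.coeff (q ^ 2 - q - q) = b := by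
  have hn := n_facts H
  have hq := H.q2
  have key : ∀ k, R.coeff k - b * R.coeff (k + q) = 
      ((X ^ q - X) * (X ^ (q ^ 2 - q) - 1) : F[X]).coeff (k + q) := by
    intro k
    rw [← hRe, mul_sub, coeff_sub, coeff_mul_X_pow, coeff_mul_C, mul_comm]
  have rhs : ((X ^ q - X) * (X ^ (q ^ 2 - q) - 1) : F[X]) = 
      X ^ (q ^ 2) - X ^ (q ^ 2 - q + 1) - X ^ q + X ^ 1 := by
    have : (X : F[X]) ^ (q ^ 2) = X ^ q * X ^ (q ^ 2 - q) := by rw [← pow_add]; congr 1; omega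
    rw [this]; ring
  constructor
  · intro l h1 h2
    have := key (q ^ 2 - q - l)
    rw [rhs, coeff_eq_zero_of_natDegree_lt (p := R) (n := q ^ 2 - q - l + q) (by omega)] at this
    simp only [coeff_add, coeff_sub, coeff_X_pow] at this
    rw [if_neg (by omega), if_neg (by omega), if_neg (by omega), if_neg (by omega)] at this
    simpa using this
  · have := key (q ^ 2 - q - q)
    have e : R.coeff (q ^ 2 - q - q + q) = 1 := by
      rw [show q ^ 2 - q - q + q = R.natDegree by omega]; exact hR
    rw [rhs, e] at this
    simp only [coeff_add, coeff_sub, coeff_X_pow] at this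
    rw [if_neg (by omega), if_neg (by omega), if_neg (by omega), if_neg (by omega)] at this
    simp only [mul_one, sub_zero, add_zero] at this
    exact sub_eq_zero.1 this

theorem key (H : QF F q p h) (A : FHyp q f fs) :
    ∃ P : F[X], P.degree < (q ^ 2 : ℕ) ∧ (∀ x, P.eval x = fs x) ∧ (derivative P).natDegree ≤ q := by
  have hn := n_facts H
  have hq := H.q2
  have hchar := H.char
  set v : F → F[X] := fun c => C (f c)⁻¹ * (X - C c) ^ (q + 1) with hv
  set S := Finset.univ.filter (fun c : F => c ^ q ≠ c) with hS
  set R : F[X][X] := ∏ c ∈ S, (X - C (v c)) with hR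
  have hScard : S.card = q ^ 2 - q := H.card_C
  have hRm : R.Monic := monic_prod_of_monic _ _ fun a _ => monic_X_sub_C _
  have hRd : R.natDegree = q ^ 2 - q := by
    rw [hR, natDegree_finsetProd_X_sub_C_eq_card, hScard]
  have hRdeg : ∀ i, (R.coeff i).natDegree ≤ (q ^ 2 - q - i) * (q + 1) := by
    rw [← hScard]
    apply uc_coeff_natDegree
    intro c _
    refine (natDegree_C_mul_le _ _).trans (natDegree_pow_le.trans ?_)
    rw [natDegree_X_sub_C, mul_one]
  have hmap : ∀ m, R.map (evalRingHom m) = ∏ c ∈ S, (X - C ((f c)⁻¹ * (m - c) ^ (q + 1))) := by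
    intro m
    rw [hR, Polynomial.map_prod]
    refine Finset.prod_congr rfl fun c _ => ?_
    simp [hv]
  have hcm : ∀ m i, (R.coeff i).eval m = (R.map (evalRingHom m)).coeff i := by
    intro m i; rw [coeff_map]; rfl
  have hval : ∀ m, (∀ l, 1 ≤ l → l ≤ q - 2 → (R.coeff (q ^ 2 - q - l)).eval m = 0) ∧
      (R.coeff (q ^ 2 - q - q)).eval m = fs m := by
    intro m
    by_cases hm : m ^ q = m
    · simp only [hcm, hmap m]
      rw [R_in H A m hm]
      refine ⟨fun l h1 h2 => coeff_in H l h1 (by omega), ?_⟩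
      rw [coeff_in H q (by omega) le_rfl, (A.s0 m).2 hm]
    · have := coeff_out H (R.map (evalRingHom m)) (hRm.map _) (by rw [hRm.natDegree_map, hRd]) (fs m)
        (by rw [hmap]; exact R_out H A m hm)
      simpa only [hcm] using this
  have hzero : ∀ l, 1 ≤ l → l ≤ q - 2 → R.coeff (q ^ 2 - q - l) = 0 := by
    intro l h1 h2
    refine eq_zero_of_natDegree_lt_card_of_eval_eq_zero' _ Finset.univ (fun m _ => (hval m).1 l h1 h2) ?_
    rw [Finset.card_univ, H.card]
    refine (hRdeg _).trans_lt ?_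
    have : q ^ 2 - q - (q ^ 2 - q - l) = l := by omega
    rw [this]
    calc l * (q + 1) ≤ (q - 2) * (q + 1) := Nat.mul_le_mul_right _ h2
      _ < q ^ 2 := by
        obtain ⟨k, rfl⟩ : ∃ k, q = k + 2 := ⟨q - 2, by omega⟩
        rw [Nat.add_sub_cancel]; nlinarith
  set Φ := R.coeff (q ^ 2 - q - q) with hΦ
  have hΦd : Φ.natDegree ≤ q ^ 2 + q := by
    refine (hRdeg _).trans ?_
    have : q ^ 2 - q - (q ^ 2 - q - q) = q := by omega
    rw [this]; apply le_of_eq; ring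
  -- the erased products
  set Q : F → F[X][X] := fun c => ∏ c' ∈ S.erase c, (X - C (v c')) with hQ
  have hQm : ∀ c, (Q c).Monic := fun c => monic_prod_of_monic _ _ fun a _ => monic_X_sub_C _
  have hRQ : ∀ c ∈ S, R = (X - C (v c)) * Q c := fun c hc => (Finset.mul_prod_erase _ _ hc).symm
  have hQd : ∀ c ∈ S, (Q c).natDegree = q ^ 2 - q - 1 := by
    intro c hc
    rw [hQ]; simp only
    rw [natDegree_finsetProd_X_sub_C_eq_card, Finset.card_erase_of_mem hc, hScard]
  have hrec : ∀ c ∈ S, ∀ k, (Q c).coeff k = R.coeff (k + 1) + v c * (Q c).coeff (k + 1) := by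
    intro c hc k
    rw [hRQ c hc, coeff_X_sub_C_mul]; ring
  have hQl : ∀ c ∈ S, ∀ l, l ≤ q - 2 → (Q c).coeff (q ^ 2 - q - 1 - l) = v c ^ l := by
    intro c hc l
    induction l with
    | zero => intro _; rw [Nat.sub_zero, ← hQd c hc, pow_zero]; exact hQm c
    | succ l ih =>
      intro hl
      rw [hrec c hc, show q ^ 2 - q - 1 - (l + 1) + 1 = q ^ 2 - q - (l + 1) by omega, 
        hzero (l + 1) (by omega) hl, show q ^ 2 - q - (l + 1) = q ^ 2 - q - 1 - l by omega, ih (by omega)]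
      ring
  have hQq : ∀ c ∈ S, (Q c).coeff (q ^ 2 - q - q) = R.coeff (q ^ 2 - q - q + 1) + v c ^ (q - 1) := by
    intro c hc
    rw [hrec c hc, show q ^ 2 - q - q + 1 = q ^ 2 - q - 1 - (q - 2) by omega, hQl c hc _ le_rfl, 
      ← pow_succ', show q - 2 + 1 = q - 1 by omega]
  have hsum : ∑ c ∈ S, derivative (v c) = 0 := by
    have h1 := uc_dcoeff v S (q ^ 2 - q - 1)
    have h2 : (∏ c ∈ S, (X - C (v c))).coeff (q ^ 2 - q - 1) = 0 := hzero 1 le_rfl (by omega)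
    rw [h2, derivative_zero] at h1
    rw [eq_comm, neg_eq_zero] at h1
    rw [← h1]
    refine Finset.sum_congr rfl fun c hc => ?_
    have := hQl c hc 0 (by omega)
    simp only [hQ, Nat.sub_zero, pow_zero] at this
    rw [this, mul_one]
  have hdv : ∀ c, derivative (v c) = C (f c)⁻¹ * (X - C c) ^ q := by
    intro c
    have hq0 : ((q : ℕ) : F) = 0 := by
      rw [H.hq, Nat.cast_pow, CharP.cast_eq_zero, zero_pow (by have := H.hh; omega)]
    simp only [hv]
    rw [derivative_C_mul, derivative_X_sub_C_pow]
    simp [hq0]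
  set Z : F[X] := ∑ c ∈ S, C (f c)⁻¹ * (X - C c) ^ (q - 1) with hZ
  have hdΦ : derivative Φ = - ((X ^ (q ^ 2) - X) * Z) := by
    have h1 : derivative Φ = - ∑ c ∈ S, derivative (v c) * (Q c).coeff (q ^ 2 - q - q) := 
      uc_dcoeff v S (q ^ 2 - q - q)
    rw [h1, Finset.sum_congr rfl (fun c hc => by rw [hQq c hc, mul_add]), Finset.sum_add_distrib,
      ← Finset.sum_mul, hsum, zero_mul, zero_add]
    congr 1
    rw [← add_zero ((X ^ (q ^ 2) - X) * Z), ← hsum, hZ, Finset.mul_sum, ← Finset.sum_add_distrib]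
    refine Finset.sum_congr rfl fun c hc => ?_
    have hfc : f c ≠ 0 := fun h => (Finset.mem_filter.1 hc).2 ((A.f0 c).1 h)
    have hfc1 : (f c)⁻¹ ^ (q - 1) = 1 := by
      rw [inv_pow, (H.fu_iff _).2 ⟨A.fq c, hfc⟩, inv_one]
    have hvq : v c ^ (q - 1) = (X - C c) ^ (q ^ 2 - 1) := by
      simp only [hv]
      rw [mul_pow, ← C_pow, hfc1, C_1, one_mul, ← pow_mul, H.qfac]
    rw [hdv, hvq]
    have e1 : (X - C c : F[X]) ^ q * (X - C c) ^ (q ^ 2 - 1) = (X - C c) ^ (q ^ 2) * (X - C c) ^ (q - 1) := by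
      rw [← pow_add, ← pow_add]; congr 1; omega
    have e2 : (X - C c : F[X]) ^ (q ^ 2) = X ^ (q ^ 2) - C c := by
      rw [_root_.sq, pow_mul, poly_sub_pow H, poly_sub_pow H, ← C_pow, ← C_pow, H.powqq, ← pow_mul]
    have e3 : (X - C c : F[X]) ^ q = (X - C c) * (X - C c) ^ (q - 1) := by
      rw [← pow_succ']; congr 1; omega
    rw [mul_assoc, e1, e2]
    rw [e3]; ring
  -- reduction
  set W : F[X] := X ^ (q ^ 2) - X with hW
  have hWm : W.Monic := monic_X_pow_sub (by rw [degree_X]; exact_mod_cast (by nlinarith : 1 < q ^ 2))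
  have hWd : W.natDegree = q ^ 2 := FiniteField.X_pow_card_sub_X_natDegree_eq F (by nlinarith)
  have hWdeg : W.degree = (q ^ 2 : ℕ) := by rw [degree_eq_natDegree hWm.ne_zero, hWd]
  have hdec := modByMonic_add_div Φ W
  set f' := Φ %ₘ W with hf'
  set T := Φ /ₘ W with hT
  have hf'd : f'.degree < (q ^ 2 : ℕ) := by rw [← hWdeg]; exact degree_modByMonic_lt _ hWm
  have hTd : T.natDegree ≤ q := by rw [hT, natDegree_divByMonic _ hWm, hWd]; omega
  refine ⟨f', hf'd, ?_, ?_⟩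
  · intro x
    rw [← (hval x).2, ← hdec]
    simp [hW, H.powq2]
  · have hdW : derivative W = -1 := by
      have hq0 : ((q : ℕ) : F) = 0 := by
        rw [H.hq, Nat.cast_pow, CharP.cast_eq_zero, zero_pow (by have := H.hh; omega)]
      rw [hW, derivative_sub, derivative_X_pow, Nat.cast_pow, hq0]
      simp
    have h1 : derivative f' - T = W * (-(Z + derivative T)) := by
      have := congrArg derivative hdec
      rw [derivative_add, derivative_mul, hdW, hdΦ] at this
      linear_combination this
    have h2 : (derivative f' - T).degree < W.degree := by
      rw [hWdeg]
      refine (degree_sub_le _ _).trans_lt (max_lt ?_ ?_)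
      · exact (degree_derivative_le).trans_lt hf'd
      · refine degree_le_natDegree.trans_lt ?_
        exact_mod_cast (by nlinarith : T.natDegree < q ^ 2)
    have h3 : derivative f' - T = 0 := by
      by_contra hne
      have hne2 : -(Z + derivative T) ≠ 0 := by
        intro h0; rw [h0, mul_zero] at h1; exact hne h1
      rw [h1, degree_mul] at h2
      have : (0 : WithBot ℕ) ≤ (-(Z + derivative T)).degree := zero_le_degree_iff.2 hne2
      exact absurd h2 (not_lt.2 (le_add_of_nonneg_right this))
    rw [sub_eq_zero.1 h3]; exact hTd

end FHyp

namespace QF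
open Polynomial
variable {F : Type*} [Field F] [Fintype F] [DecidableEq F] {q p h : ℕ} (H : QF F q p h)
include H

lemma exists_gen : ∃ w : F, w ≠ 0 ∧ (∀ n : ℕ, w ^ n = 1 ↔ (q ^ 2 - 1) ∣ n) ∧ ∀ x : F, x ≠ 0 → ∃ k : ℕ, w ^ k = x := by
  obtain ⟨g, hg⟩ := IsCyclic.exists_generator (α := Fˣ)
  have ho : orderOf g = q ^ 2 - 1 := by
    rw [orderOf_eq_card_of_forall_mem_zpowers hg, Nat.card_eq_fintype_card, Fintype.card_units, H.card]
  refine ⟨g, g.ne_zero, fun n => ?_, fun x hx => ?_⟩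
  · rw [← ho, orderOf_dvd_iff_pow_eq_one, ← Units.val_pow_eq_pow_val, Units.val_eq_one]
  · have := hg (Units.mk0 x hx)
    rw [← mem_powers_iff_mem_zpowers] at this
    obtain ⟨k, hk⟩ := this
    refine ⟨k, ?_⟩
    have := congrArg Units.val hk
    simpa using this

lemma power_sum (k : ℕ) : ∑ x : F, x ^ k = if 0 < k ∧ (q ^ 2 - 1) ∣ k then -1 else 0 := by
  have h1 := FiniteField.sum_pow_units F k
  rw [H.card] at h1
  rcases Nat.eq_zero_or_pos k with rfl | hk
  · have := FiniteField.cast_card_eq_zero F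
    simp only [pow_zero, Finset.sum_const, Finset.card_univ, nsmul_eq_mul, mul_one, lt_irrefl, false_and, if_false]
    exact this
  · have e : ∑ x : F, x ^ k = ∑ x ∈ Finset.univ.filter (fun x : F => x ≠ 0), x ^ k := by
      rw [Finset.sum_filter]
      refine Finset.sum_congr rfl fun x _ => ?_
      split_ifs with hx
      · rfl
      · rw [not_not.1 hx, zero_pow (by omega)]
    have e2 : ∑ x ∈ Finset.univ.filter (fun x : F => x ≠ 0), x ^ k = ∑ x : Fˣ, ((x : F) ^ k) := by
      refine (Finset.sum_bij (fun (x : Fˣ) _ => (x : F)) ?_ ?_ ?_ ?_).symm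
      · intro a _; simp
      · intro a _ b _ hab; exact Units.ext hab
      · intro b hb; exact ⟨Units.mk0 b (by simpa using hb), by simp, by simp⟩
      · intro a _; rfl
    rw [e, e2, h1]
    simp [hk]

lemma q2pos : 9 ≤ q ^ 2 := by have := H.q2; nlinarith

lemma eval_sum (P : F[X]) (hP : P.degree < (q ^ 2 : ℕ)) (x : F) :
    P.eval x = ∑ e ∈ Finset.range (q ^ 2), P.coeff e * x ^ e := by
  have h9 := H.q2pos
  rw [eval_eq_sum_range' (n := q ^ 2)]
  by_cases h0 : P = 0
  · rw [h0]; simp; omega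
  · exact (natDegree_lt_iff_degree_lt h0).2 hP

lemma coeff_formula (P : F[X]) (hP : P.degree < (q ^ 2 : ℕ)) (e : ℕ) (h1 : 1 ≤ e) (h2 : e ≤ q ^ 2 - 1) :
    ∑ x : F, P.eval x * x ^ (q ^ 2 - 1 - e) = - P.coeff e := by
  have h9 := H.q2pos
  calc ∑ x : F, P.eval x * x ^ (q ^ 2 - 1 - e) 
      = ∑ x : F, ∑ j ∈ Finset.range (q ^ 2), P.coeff j * x ^ (j + (q ^ 2 - 1 - e)) := by
        refine Finset.sum_congr rfl fun x _ => ?_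
        rw [H.eval_sum P hP, Finset.sum_mul]
        exact Finset.sum_congr rfl fun j _ => by rw [pow_add]; ring
    _ = ∑ j ∈ Finset.range (q ^ 2), P.coeff j * (if j = e then -1 else 0) := by
        rw [Finset.sum_comm]
        refine Finset.sum_congr rfl fun j hj => ?_
        rw [← Finset.mul_sum, H.power_sum]
        congr 1
        have hj := Finset.mem_range.1 hj
        refine if_congr ?_ rfl rfl
        constructor
        · rintro ⟨h3, t, ht⟩
          have : t = 1 := by
            have h4 : t < 2 := by
              by_contra h5
              have : (q ^ 2 - 1) * 2 ≤ (q ^ 2 - 1) * t := Nat.mul_le_mul_left _ (by omega)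
              omega
            have : t ≠ 0 := by rintro rfl; omega
            omega
          rw [this] at ht; omega
        · rintro rfl
          exact ⟨by omega, 1, by omega⟩
    _ = - P.coeff e := by
        rw [Finset.sum_eq_single e]
        · simp
        · intro b _ hb; simp [hb]
        · intro h; exact absurd (Finset.mem_range.2 (by omega)) h

lemma pow_eq_of_mod {x : F} (hx : x ≠ 0) {a b : ℕ} (h : a ≡ b [MOD (q ^ 2 - 1)]) : x ^ a = x ^ b := by
  have h1 : orderOf x ∣ q ^ 2 - 1 := orderOf_dvd_of_pow_eq_one (H.pow1 hx)
  have h2 : IsOfFinOrder x := isOfFinOrder_iff_pow_eq_one.2 ⟨_, by have := H.q2pos; omega, H.pow1 hx⟩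
  exact h2.pow_eq_pow_iff_modEq.2 (h.of_dvd h1)

lemma conj (P : F[X]) (hP : P.degree < (q ^ 2 : ℕ)) (hq : ∀ x, P.eval x ^ q = P.eval x) (h0 : P.eval 0 = 0)
    (i j : ℕ) (hi : i < q) (hj : j < q) (hij : 1 ≤ i + j) :
    P.coeff (i + q * j) ^ q = P.coeff (j + q * i) := by
  have h9 := H.q2pos
  have hb : ∀ a b : ℕ, a < q → b < q → a + q * b ≤ q ^ 2 - 1 := by
    intro a b ha hb
    have : q * b + q ≤ q ^ 2 := by nlinarith
    omega
  have hb1 : ∀ a b : ℕ, 1 ≤ a + b → 1 ≤ a + q * b := by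
    intro a b hab
    rcases Nat.eq_zero_or_pos b with rfl | h
    · omega
    · have := H.q2; nlinarith
  have e1 := H.coeff_formula P hP (i + q * j) (hb1 _ _ hij) (hb _ _ hi hj)
  have e2 := H.coeff_formula P hP (j + q * i) (hb1 _ _ (by omega)) (hb _ _ hj hi)
  have e3 := congrArg (· ^ q) e1
  simp only [H.neg_pow', H.sum_pow] at e3
  rw [← neg_inj, ← e3, ← e2]
  refine Finset.sum_congr rfl fun x _ => ?_
  by_cases hx : x = 0
  · rw [hx, h0]; simp [H.zero_pow']
  · rw [mul_pow, hq, ← pow_mul]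
    congr 1
    apply H.pow_eq_of_mod hx
    have hA := hb i j hi hj
    have hB := hb j i hj hi
    obtain ⟨A, hA'⟩ := Nat.exists_eq_add_of_le hA
    obtain ⟨B, hB'⟩ := Nat.exists_eq_add_of_le hB
    have e1 : q ^ 2 - 1 - (i + q * j) = A := by omega
    have e2 : q ^ 2 - 1 - (j + q * i) = B := by omega
    rw [e1, e2, ← Int.natCast_modEq_iff, Int.modEq_iff_dvd]
    have hA2 : ((q ^ 2 - 1 : ℕ) : ℤ) = i + q * j + A := by rw [hA']; push_cast; ring
    have hB2 : ((q ^ 2 - 1 : ℕ) : ℤ) = j + q * i + B := by rw [hB']; push_cast; ring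
    have hN : ((q ^ 2 - 1 : ℕ) : ℤ) = (q : ℤ) ^ 2 - 1 := by
      rw [Nat.cast_sub (by omega)]; push_cast; ring
    refine ⟨1 - q + j, ?_⟩
    push_cast
    rw [hN] at hA2 hB2 ⊢
    linear_combination (-1 : ℤ) * hB2 + (q : ℤ) * hA2

/-- support of the coefficients -/
lemma supp (P : F[X]) (hP : P.degree < (q ^ 2 : ℕ)) (hq : ∀ x, P.eval x ^ q = P.eval x) (h0 : P.eval 0 = 0)
    (hd : (derivative P).natDegree ≤ q) (s : ℕ) (hs1 : 1 ≤ s) (hs2 : s ≤ q - 2) (hs3 : s ≠ 2)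
    (hom : ∀ l : F, l ^ (q - 1) = 1 → ∀ x, P.eval (l * x) = l ^ s * P.eval x)
    (i j : ℕ) (hi : i < q) (hj : j < q) (hc : P.coeff (i + q * j) ≠ 0) :
    (i + j = s ∨ i + j = s + (q - 1)) ∧ ((p ∣ i ∧ p ∣ j) ∨ (i = s ∧ j = 0) ∨ (i = 0 ∧ j = s)) := by
  have h9 := H.q2pos
  have hq2 := H.q2
  have hchar := H.char
  obtain ⟨w, hw0, hw, -⟩ := H.exists_gen
  have hcong : ∀ e, P.coeff e ≠ 0 → e ≡ s [MOD (q - 1)] := by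
    intro e he
    have hl : (w ^ (q + 1)) ^ (q - 1) = 1 := H.norm_pow hw0
    have hpol : P.comp (C (w ^ (q + 1)) * X) = C ((w ^ (q + 1)) ^ s) * P := by
      refine eq_of_degree_sub_lt_of_eval_finset_eq Finset.univ ?_ ?_
      · rw [Finset.card_univ, H.card]
        refine (degree_sub_le _ _).trans_lt (max_lt ?_ ?_)
        · rw [degree_lt_iff_coeff_zero]
          intro m hm
          rw [comp_C_mul_X_coeff, coeff_eq_zero_of_degree_lt, zero_mul]
          exact hP.trans_le (by exact_mod_cast hm)
        · rw [degree_lt_iff_coeff_zero]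
          intro m hm
          rw [coeff_C_mul, coeff_eq_zero_of_degree_lt, mul_zero]
          exact hP.trans_le (by exact_mod_cast hm)
      · intro x _
        simp only [eval_comp, eval_mul, eval_C, eval_X]
        exact hom _ hl x
    have h1 := congrArg (fun R => R.coeff e) hpol
    simp only [comp_C_mul_X_coeff, coeff_C_mul] at h1
    rw [mul_comm] at h1
    have h2 := mul_right_cancel₀ he h1
    have hfin : IsOfFinOrder w := isOfFinOrder_iff_pow_eq_one.2 ⟨_, by omega, H.pow1 hw0⟩
    rw [← pow_mul, ← pow_mul, hfin.pow_eq_pow_iff_modEq] at h2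
    have ho : orderOf w = q ^ 2 - 1 := by
      apply Nat.dvd_antisymm
      · exact orderOf_dvd_of_pow_eq_one ((hw _).2 dvd_rfl)
      · exact (hw _).1 (pow_orderOf_eq_one w)
    rw [ho, H.qfac] at h2
    exact Nat.ModEq.mul_left_cancel' (by omega) h2
  have hder : ∀ e, P.coeff e ≠ 0 → ¬ p ∣ e → e ≤ q + 1 := by
    intro e he hpe
    by_contra hlt
    have h1 : (derivative P).coeff (e - 1) = 0 := coeff_eq_zero_of_natDegree_lt (by omega)
    rw [coeff_derivative, show e - 1 + 1 = e by omega] at h1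
    have h2 : ((e : ℕ) : F) = 0 := by
      have : ((e - 1 : ℕ) : F) + 1 = (e : F) := by
        rw [← Nat.cast_succ]; congr 1; omega
      rw [this] at h1
      exact (mul_eq_zero.1 h1).resolve_left he
    exact hpe ((CharP.cast_eq_zero_iff F p e).1 h2)
  have hpq : p ∣ q := by rw [H.hq]; exact dvd_pow_self p (by have := H.hh; omega)
  have hsum : ∀ i j, P.coeff (i + q * j) ≠ 0 → i + j ≡ s [MOD (q - 1)] := by
    intro i j h
    have h1 := hcong _ h
    have h2 : q * j ≡ j [MOD (q - 1)] := by
      have : q ≡ 1 [MOD (q - 1)] := (Nat.modEq_iff_dvd' (by omega)).2 dvd_rfl |>.symm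
      simpa using this.mul_right j
    exact ((Nat.ModEq.refl i).add h2).symm.trans h1
  have hmain : ∀ i j, i < q → j < q → P.coeff (i + q * j) ≠ 0 → ¬ p ∣ i → i = s ∧ j = 0 := by
    intro i j hi hj h hpi
    have h1 : i + q * j ≤ q + 1 := by
      refine hder _ h fun h2 => hpi ?_
      exact (Nat.dvd_add_left (hpq.mul_right j)).1 h2
    have hi0 : i ≠ 0 := by rintro rfl; exact hpi (dvd_zero _)
    have h2 := hsum i j h
    have hj1 : j ≤ 1 := by
      by_contra hj2
      have : q * 2 ≤ q * j := Nat.mul_le_mul_left _ (by omega)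
      omega
    have hj0 : j = 0 := by
      by_contra hjne
      have : j = 1 := by omega
      subst this
      have : i = 1 := by omega
      subst this
      rcases le_total s 2 with h3 | h3
      · have h4 := (Nat.modEq_iff_dvd' h3).1 h2.symm
        have := Nat.le_of_dvd (by omega) h4
        omega
      · have h4 := (Nat.modEq_iff_dvd' h3).1 h2
        have := Nat.le_of_dvd (by omega) h4
        omega
    subst hj0
    refine ⟨?_, rfl⟩
    rw [add_zero] at h2
    rcases le_total i s with h3 | h3
    · have h4 := (Nat.modEq_iff_dvd' h3).1 h2
      rcases Nat.eq_zero_or_pos (s - i) with h5 | h5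
      · omega
      · have := Nat.le_of_dvd h5 h4; omega
    · have h4 := (Nat.modEq_iff_dvd' h3).1 h2.symm
      rcases Nat.eq_zero_or_pos (i - s) with h5 | h5
      · omega
      · have := Nat.le_of_dvd h5 h4; omega
  have h1 := hsum i j hc
  have hij0 : 1 ≤ i + j := by
    by_contra h2
    have h3 : i + j = 0 := by omega
    rw [h3] at h1
    have h4 := (Nat.modEq_iff_dvd' (Nat.zero_le s)).1 h1
    have := Nat.le_of_dvd (by omega) h4
    omega
  refine ⟨?_, ?_⟩
  · rcases le_total (i + j) s with h3 | h3
    · have h4 := (Nat.modEq_iff_dvd' h3).1 h1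
      rcases Nat.eq_zero_or_pos (s - (i + j)) with h5 | h5
      · omega
      · have := Nat.le_of_dvd h5 h4; omega
    · obtain ⟨t, ht⟩ := (Nat.modEq_iff_dvd' h3).1 h1.symm
      have : t < 2 := by
        by_contra h5
        have : (q - 1) * 2 ≤ (q - 1) * t := Nat.mul_le_mul_left _ (by omega)
        omega
      interval_cases t <;> omega
  · by_cases hpi : p ∣ i
    · by_cases hpj : p ∣ j
      · exact Or.inl ⟨hpi, hpj⟩
      · have h3 : P.coeff (j + q * i) ≠ 0 := by
          rw [← H.conj P hP hq h0 i j hi hj hij0]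
          exact pow_ne_zero _ hc
        have := hmain j i hj hi h3 hpj
        exact Or.inr (Or.inr ⟨this.2, this.1⟩)
    · exact Or.inr (Or.inl (hmain i j hi hj hc hpi))

end QF

namespace QF
open Polynomial
variable {F : Type*} [Field F] [Fintype F] [DecidableEq F] {q p h : ℕ} (H : QF F q p h)
include H

lemma nt1 (I J k : ℕ) (hS : I + J = 2 + k * (q - 1)) (hpos : 1 ≤ J + k) (hlt : J + k < 2 * (q + 1))
    (hd : (q ^ 2 - 1) ∣ q ^ 2 - 3 + (I + q * J)) : J + k = q + 1 := by
  have h9 := H.q2pos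
  have hq := H.q2
  have e : q ^ 2 - 3 + (I + q * J) = (q ^ 2 - 1) + (q - 1) * (J + k) := by
    obtain ⟨r, rfl⟩ : ∃ r, q = r + 1 := ⟨q - 1, by omega⟩
    simp only [Nat.add_sub_cancel] at *
    have : I + (r + 1) * J = 2 + r * (J + k) := by
      have : (r + 1) * J = r * J + J := by ring
      rw [this, ← add_assoc]
      have e2 : r * (J + k) = r * J + k * r := by ring
      omega
    rw [this]; omega
  rw [e] at hd
  have h1 : (q ^ 2 - 1) ∣ (q - 1) * (J + k) := (Nat.dvd_add_right dvd_rfl).1 hd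
  rw [H.qfac, mul_comm (q + 1)] at h1
  have h2 := Nat.dvd_of_mul_dvd_mul_left (by omega) h1
  obtain ⟨t, ht⟩ := h2
  have ht1 : t < 2 := by
    by_contra h5
    have : (q + 1) * 2 ≤ (q + 1) * t := Nat.mul_le_mul_left _ (by omega)
    omega
  have ht0 : t ≠ 0 := by rintro rfl; omega
  have : t = 1 := by omega
  rw [ht, this, mul_one]

/-- the digit sets cannot meet: asymmetric case -/
lemma nt2 (s s' : ℕ) (hss : s + s' = q + 1) (hs1 : 3 ≤ s) (hs2 : s ≤ q - 2)
    (i j i' j' : ℕ) (hi : i < q) (hj : j < q) (hi' : i' < q) (hj' : j' < q)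
    (h1 : (i + j = s ∨ i + j = s + (q - 1)))
    (h2 : (p ∣ i ∧ p ∣ j) ∨ (i = s ∧ j = 0) ∨ (i = 0 ∧ j = s))
    (h1' : (i' + j' = s' ∨ i' + j' = s' + (q - 1)))
    (h2' : (p ∣ i' ∧ p ∣ j') ∨ (i' = s' ∧ j' = 0) ∨ (i' = 0 ∧ j' = s'))
    (hps : p ∣ s)
    (hd : (q ^ 2 - 1) ∣ q ^ 2 - 3 + ((i + i') + q * (j + j'))) : False := by
  have hq := H.q2
  have hpq : p ∣ q := by rw [H.hq]; exact dvd_pow_self p (by have := H.hh; omega)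
  have hp1 : ¬ p ∣ 1 := H.hp.one_lt.not_ge ∘ Nat.le_of_dvd one_pos
  have hps' : ¬ p ∣ s' := by
    intro h3
    have h4 : p ∣ q + 1 := hss ▸ dvd_add hps h3
    exact hp1 ((Nat.dvd_add_right hpq).1 h4)
  have hpij : p ∣ i ∧ p ∣ j := by
    rcases h2 with h2 | ⟨rfl, rfl⟩ | ⟨rfl, rfl⟩
    · exact h2
    · exact ⟨hps, dvd_zero _⟩
    · exact ⟨dvd_zero _, hps⟩
  have hsum : i + j = s := by
    rcases h1 with h1 | h1
    · exact h1
    · exfalso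
      have h3 : p ∣ s + (q - 1) := h1 ▸ dvd_add hpij.1 hpij.2
      have h4 : p ∣ q - 1 := (Nat.dvd_add_right hps).1 h3
      have h5 : p ∣ (q - 1) + 1 := by rwa [show q - 1 + 1 = q by omega]
      exact hp1 ((Nat.dvd_add_right h4).1 h5)
  rcases h2' with ⟨hpi', hpj'⟩ | ⟨rfl, rfl⟩ | ⟨rfl, rfl⟩
  · have h3 : i' + j' = s' + (q - 1) := by
      rcases h1' with h1' | h1'
      · exact absurd (h1' ▸ dvd_add hpi' hpj') hps'
      · exact h1'
    have := H.nt1 (i + i') (j + j') 2 (by omega) (by omega) (by omega) hd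
    have h4 : i + i' = q + 1 := by omega
    have h5 : p ∣ q + 1 := h4 ▸ dvd_add hpij.1 hpi'
    exact hp1 ((Nat.dvd_add_right hpq).1 h5)
  · have := H.nt1 (i + i') (j + 0) 1 (by omega) (by omega) (by omega) hd
    omega
  · have := H.nt1 (i + 0) (j + j') 1 (by omega) (by omega) (by omega) hd
    have h4 : i = 1 := by omega
    rw [h4] at hpij; exact hp1 hpij.1

lemma nt3 (s s' : ℕ) (hss : s + s' = q + 1) (hs1 : 3 ≤ s) (hs2 : s ≤ q - 2)
    (i j i' j' : ℕ) (hi : i < q) (hj : j < q) (hi' : i' < q) (hj' : j' < q)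
    (h1 : (i + j = s ∨ i + j = s + (q - 1)))
    (h2 : (p ∣ i ∧ p ∣ j) ∨ (i = s ∧ j = 0) ∨ (i = 0 ∧ j = s))
    (h1' : (i' + j' = s' ∨ i' + j' = s' + (q - 1)))
    (h2' : (p ∣ i' ∧ p ∣ j') ∨ (i' = s' ∧ j' = 0) ∨ (i' = 0 ∧ j' = s'))
    (hd : (q ^ 2 - 1) ∣ q ^ 2 - 3 + ((i + i') + q * (j + j'))) : False := by
  have hq := H.q2
  have hpq : p ∣ q := by rw [H.hq]; exact dvd_pow_self p (by have := H.hh; omega)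
  by_cases hps : p ∣ s
  · exact H.nt2 s s' hss hs1 hs2 i j i' j' hi hj hi' hj' h1 h2 h1' h2' hps hd
  by_cases hps' : p ∣ s'
  · refine H.nt2 s' s (by omega) (by omega) (by omega) i' j' i j hi' hj' hi hj h1' h2' h1 h2 hps' ?_
    rwa [add_comm i', add_comm j']
  have aux : ∀ s s' i j : ℕ, s + s' = q + 1 → ¬ p ∣ s → ¬ p ∣ s' → 
      (i + j = s ∨ i + j = s + (q - 1)) → 
      ((p ∣ i ∧ p ∣ j) ∨ (i = s ∧ j = 0) ∨ (i = 0 ∧ j = s)) → (i = s ∧ j = 0) ∨ (i = 0 ∧ j = s) := by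
    intro s s' i j hss hs hs' h1 h2
    rcases h2 with ⟨ha, hb⟩ | h2
    · exfalso
      rcases h1 with h1 | h1
      · exact hs (h1 ▸ dvd_add ha hb)
      · have h3 : p ∣ s + (q - 1) := h1 ▸ dvd_add ha hb
        have h4 : s + (q - 1) + s' = 2 * q := by omega
        have h5 : p ∣ s + (q - 1) + s' := by rw [h4]; exact hpq.mul_left 2
        exact hs' ((Nat.dvd_add_right h3).1 h5)
    · exact h2
  have a1 := aux s s' i j hss hps hps' h1 h2
  have a2 := aux s' s i' j' (by omega) hps' hps h1' h2'
  have := H.nt1 (i + i') (j + j') 1 (by omega) (by omega) (by omega) hd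
  omega

lemma double_sum (P P' : F[X]) (hP : P.degree < (q ^ 2 : ℕ)) (hP' : P'.degree < (q ^ 2 : ℕ)) (m : ℕ) (hm : 0 < m)
    (hno : ∀ i j i' j', i < q → j < q → i' < q → j' < q → P.coeff (i + q * j) ≠ 0 → P'.coeff (i' + q * j') ≠ 0 →
      ¬ (q ^ 2 - 1) ∣ m + ((i + i') + q * (j + j'))) :
    ∑ x : F, x ^ m * (P.eval x * P'.eval x) = 0 := by
  have hq := H.q2
  have e1 : ∀ x : F, x ^ m * (P.eval x * P'.eval x) = ∑ e ∈ Finset.range (q ^ 2), ∑ e' ∈ Finset.range (q ^ 2),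
      (P.coeff e * P'.coeff e') * x ^ (m + (e + e')) := by
    intro x
    rw [H.eval_sum P hP, H.eval_sum P' hP', Finset.sum_mul_sum, Finset.mul_sum]
    refine Finset.sum_congr rfl fun e _ => ?_
    rw [Finset.mul_sum]
    refine Finset.sum_congr rfl fun e' _ => ?_
    ring
  simp only [e1]
  rw [Finset.sum_comm]
  refine Finset.sum_eq_zero fun e he => ?_
  rw [Finset.sum_comm]
  refine Finset.sum_eq_zero fun e' he' => ?_
  rw [← Finset.mul_sum, H.power_sum]
  by_cases h1 : P.coeff e = 0
  · simp [h1]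
  by_cases h2 : P'.coeff e' = 0
  · simp [h2]
  rw [if_neg, mul_zero]
  rintro ⟨-, hdvd⟩
  have hdig : ∀ e ∈ Finset.range (q ^ 2), e / q < q := by
    intro e he
    rw [Nat.div_lt_iff_lt_mul (by omega), ← sq]; exact Finset.mem_range.1 he
  have d1 : e % q + q * (e / q) = e := Nat.mod_add_div e q
  have d2 : e' % q + q * (e' / q) = e' := Nat.mod_add_div e' q
  refine hno (e % q) (e / q) (e' % q) (e' / q) (Nat.mod_lt _ (by omega)) (hdig e he) (Nat.mod_lt _ (by omega)) 
    (hdig e' he') (by rwa [d1]) (by rwa [d2]) ?_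
  have : e % q + e' % q + q * (e / q + e' / q) = e + e' := by
    rw [mul_add]; omega
  rwa [this]

lemma Ysum : ∑ x : F, x ^ (q ^ 2 - 3) * (x ^ q - x) ^ 2 = -1 := by
  have h9 := H.q2pos
  have hq := H.q2
  have hqq : 3 * q ≤ q ^ 2 := by nlinarith
  have e : ∀ x : F, x ^ (q ^ 2 - 3) * (x ^ q - x) ^ 2 = 
      x ^ (q ^ 2 - 3 + 2 * q) - 2 * x ^ (q ^ 2 - 3 + (q + 1)) + x ^ (q ^ 2 - 3 + 2) := by
    intro x; simp only [pow_add, pow_mul]; ring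
  simp only [e]
  rw [Finset.sum_add_distrib, Finset.sum_sub_distrib, ← Finset.mul_sum, H.power_sum, H.power_sum, H.power_sum]
  have hnd : ∀ a, 0 < a → a < q ^ 2 - 1 → ¬ (q ^ 2 - 1) ∣ (q ^ 2 - 1) + a := by
    intro a h1 h2 h3
    have := (Nat.dvd_add_right dvd_rfl).1 h3
    exact absurd (Nat.le_of_dvd h1 this) (by omega)
  rw [if_neg, if_neg, if_pos]
  · ring
  · exact ⟨by omega, by rw [show q ^ 2 - 3 + 2 = q ^ 2 - 1 by omega]⟩
  · rintro ⟨-, h1⟩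
    rw [show q ^ 2 - 3 + (q + 1) = q ^ 2 - 1 + (q - 1) by omega] at h1
    exact hnd _ (by omega) (by omega) h1
  · rintro ⟨-, h1⟩
    rw [show q ^ 2 - 3 + 2 * q = q ^ 2 - 1 + (2 * q - 2) by omega] at h1
    exact hnd _ (by omega) (by omega) h1

/-- case s = 1: polynomial in u -/
lemma caseOne (P : F[X]) (hP : P.degree < (q ^ 2 : ℕ)) (hq : ∀ x, P.eval x ^ q = P.eval x) (h0 : P.eval 0 = 0)
    (hd : (derivative P).natDegree ≤ q) 
    (hom : ∀ l : F, l ^ (q - 1) = 1 → ∀ x, P.eval (l * x) = l ^ 1 * P.eval x) :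
    ∃ c : F[X], c.natDegree ≤ p ^ (h - 1) ∧ ∀ x : F, x ≠ 0 → P.eval x = x * c.eval ((x ^ ((q - 1) * p))⁻¹) := by
  have h9 := H.q2pos
  have hq2 := H.q2
  have hp2 := H.hp.two_le
  set T := p ^ (h - 1) with hT
  have hTq : p * T = q := by
    rw [hT, H.hq, ← pow_succ']; congr 1; have := H.hh; omega
  have hT0 : 0 < T := by rw [hT]; exact pow_pos (by omega) _
  have hsupp := H.supp P hP hq h0 hd 1 le_rfl (by omega) (by omega) hom
  set E : ℕ → ℕ := fun k => if k = 0 then 1 else q ^ 2 - (q - 1) * (p * k) with hE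
  have hpk : ∀ k, k ≤ T → p * k ≤ q := fun k hk => by rw [← hTq]; exact Nat.mul_le_mul_left _ hk
  have hbound : ∀ k, k ≤ T → (q - 1) * (p * k) + q ≤ q ^ 2 := by
    intro k hk
    calc (q - 1) * (p * k) + q ≤ (q - 1) * q + q := by
          have := Nat.mul_le_mul_left (q - 1) (hpk k hk); omega
      _ = q ^ 2 := by
          obtain ⟨r, rfl⟩ : ∃ r, q = r + 1 := ⟨q - 1, by omega⟩
          simp only [Nat.add_sub_cancel]; ring
  have hinj : Set.InjOn E (Finset.range (T + 1)) := by
    have key : ∀ k, k ≤ T → (q - 1) * (p * k) = q ^ 2 - 1 → False := by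
      intro k hk h
      have := hbound k hk; omega
    intro a ha b hb hab
    simp only [Finset.coe_range, Set.mem_Iio] at ha hb
    have ha' := hbound a (by omega)
    have hb' := hbound b (by omega)
    simp only [hE] at hab
    split_ifs at hab with h1 h2 h2
    · omega
    · omega
    · omega
    · have h3 : (q - 1) * (p * a) = (q - 1) * (p * b) := by omega
      have h4 := Nat.eq_of_mul_eq_mul_left (by omega) h3
      exact Nat.eq_of_mul_eq_mul_left (by omega) h4
  have hElt : ∀ k, k ≤ T → E k < q ^ 2 := by
    intro k hk
    simp only [hE]
    split_ifs with h1
    · omega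
    · have : 0 < (q - 1) * (p * k) := Nat.mul_pos (by omega) (Nat.mul_pos (by omega) (by omega))
      omega
  refine ⟨∑ k ∈ Finset.range (T + 1), C (P.coeff (E k)) * X ^ k, ?_, ?_⟩
  · refine natDegree_sum_le_of_forall_le _ _ fun k hk => ?_
    refine (natDegree_C_mul_X_pow_le _ _).trans ?_
    have := Finset.mem_range.1 hk; omega
  · intro x hx
    rw [H.eval_sum P hP, eval_finsetSum, Finset.mul_sum]
    rw [← Finset.sum_subset (s₁ := (Finset.range (T + 1)).image E)]
    · rw [Finset.sum_image hinj]
      refine Finset.sum_congr rfl fun k hk => ?_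
      have hk' : k ≤ T := by have := Finset.mem_range.1 hk; omega
      simp only [eval_mul, eval_C, eval_pow, eval_X]
      have : x ^ E k = x * ((x ^ ((q - 1) * p))⁻¹) ^ k := by
        simp only [hE]
        split_ifs with h1
        · subst h1; simp
        · have e : x ^ (q ^ 2 - (q - 1) * (p * k)) * x ^ ((q - 1) * p * k) = x := by
            have := hbound k hk'
            rw [← mul_assoc] at this ⊢
            have e3 : q ^ 2 - (q - 1) * p * k + (q - 1) * p * k = q ^ 2 := by omega
            rw [← pow_add, e3, H.powq2]
          rw [inv_pow, ← pow_mul]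
          exact (eq_mul_inv_iff_mul_eq₀ (pow_ne_zero _ hx)).2 e
      rw [this]; ring
    · intro e he
      obtain ⟨k, hk, rfl⟩ := Finset.mem_image.1 he
      exact Finset.mem_range.2 (hElt k (by have := Finset.mem_range.1 hk; omega))
    · intro e he hne
      by_contra hcon
      have hce : P.coeff e ≠ 0 := fun h => hcon (by rw [h, zero_mul])
      apply hne
      have he := Finset.mem_range.1 he
      have d1 : e % q + q * (e / q) = e := Nat.mod_add_div e q
      have hdig : e / q < q := by
        rw [Nat.div_lt_iff_lt_mul (by omega), ← sq]; exact he
      have hmod : e % q < q := Nat.mod_lt _ (by omega)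
      have := hsupp (e % q) (e / q) hmod hdig (by rwa [d1])
      generalize e % q = i at *
      generalize e / q = j at *
      rw [Finset.mem_image]
      obtain ⟨hs, ⟨hpi, hpj⟩ | ⟨rfl, rfl⟩ | ⟨rfl, rfl⟩⟩ := this
      · rcases hs with hs | hs
        · exfalso
          have : p ∣ 1 := hs ▸ dvd_add hpi hpj
          exact absurd (Nat.le_of_dvd one_pos this) (by omega)
        · obtain ⟨k, rfl⟩ := hpi
          have hk0 : k ≠ 0 := by rintro rfl; simp at hs; omega
          have hkT : k ≤ T := by
            have h3 : p * k ≤ p * T := by rw [hTq]; omega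
            exact Nat.le_of_mul_le_mul_left h3 (by omega)
          refine ⟨k, Finset.mem_range.2 (by omega), ?_⟩
          simp only [hE, if_neg hk0]
          have hj : j = q - p * k := by omega
          have hpkq := hpk k hkT
          have hb := hbound k hkT
          obtain ⟨r, hr⟩ := Nat.exists_eq_add_of_le hpkq
          rw [← d1]
          have hjr : j = r := by omega
          rw [hjr]
          have e5 : (q - 1) * (p * k) + (p * k + q * r) = q ^ 2 := by
            have : (q - 1) * (p * k) + p * k = q * (p * k) := by
              obtain ⟨r, rfl⟩ : ∃ r, q = r + 1 := ⟨q - 1, by omega⟩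
              simp only [Nat.add_sub_cancel]; ring
            rw [← add_assoc, this, ← mul_add, ← hr]; ring
          omega
      · refine ⟨0, by simp, ?_⟩
        simp only [hE, if_pos]; omega
      · refine ⟨T, by simp, ?_⟩
        simp only [hE]
        rw [if_neg (by omega), hTq, ← d1]
        have : (q - 1) * q + q = q ^ 2 := by
          obtain ⟨r, rfl⟩ : ∃ r, q = r + 1 := ⟨q - 1, by omega⟩
          simp only [Nat.add_sub_cancel]; ring
        omega

theorem finalAlg (g gs : F → F) (A : FHyp q g gs) (A' : FHyp q gs g) 
    (hprod : ∀ x, g x * gs x = (x ^ q - x) ^ 2) (s s' : ℕ)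
    (hs : (s = 1 ∧ s' = 1) ∨ (3 ≤ s ∧ s ≤ q - 2 ∧ s + s' = q + 1))
    (hg : ∀ l : F, l ^ (q - 1) = 1 → ∀ x, g (l * x) = l ^ s * g x)
    (hgs : ∀ l : F, l ^ (q - 1) = 1 → ∀ x, gs (l * x) = l ^ s' * gs x) :
    ∃ b : F, b ≠ 0 ∧ ∀ x, g x = b * (x ^ q - x) := by
  have h9 := H.q2pos
  have hq2 := H.q2
  have hp2 := H.hp.two_le
  obtain ⟨P, hP, hPe, hPd⟩ := FHyp.key H A'
  obtain ⟨P', hP', hPe', hPd'⟩ := FHyp.key H A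
  have hg0 : P.eval 0 = 0 := by rw [hPe, A.f0, H.zero_pow']
  have hg0' : P'.eval 0 = 0 := by rw [hPe', A.s0, H.zero_pow']
  rcases hs with ⟨rfl, rfl⟩ | ⟨hs1, hs2, hss⟩
  · obtain ⟨c, hcd, hc⟩ := H.caseOne P hP (by intro x; rw [hPe, A.fq]) hg0 hPd (by simpa only [hPe] using hg)
    obtain ⟨c', hcd', hc'⟩ := H.caseOne P' hP' (by intro x; rw [hPe', A.sq]) hg0' hPd' (by simpa only [hPe'] using hgs)
    set T := p ^ (h - 1) with hT
    have hTq : p * T = q := by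
      rw [hT, H.hq, ← pow_succ']; congr 1; have := H.hh; omega
    have hT0 : 0 < T := by rw [hT]; exact pow_pos (by omega) _
    have hT2 : 2 * T ≤ q := by rw [← hTq]; exact Nat.mul_le_mul_right _ hp2
    have hchar := H.char
    have hfact := Fact.mk H.hp
    have huT : ∀ x : F, x ≠ 0 → ((x ^ ((q - 1) * p))⁻¹) ^ T = x ^ (q - 1) := by
      intro x hx
      rw [inv_pow, ← pow_mul, mul_assoc, hTq]
      refine inv_eq_of_mul_eq_one_right ?_
      rw [← pow_add]
      have : (q - 1) * q + (q - 1) = q ^ 2 - 1 := by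
        rw [H.qfac, mul_comm (q + 1), mul_add, mul_one]
      rw [this, H.pow1 hx]
    -- polynomial identity
    have hpoly : c * c' = (X - C 1) ^ (2 * T) := by
      refine eq_of_degree_sub_lt_of_eval_finset_eq (Finset.univ.filter fun u : F => u ^ (q + 1) = 1) ?_ ?_
      · rw [H.card_norm (one_pow _)]
        refine (degree_sub_le _ _).trans_lt (max_lt ?_ ?_)
        · refine degree_le_natDegree.trans_lt ?_
          have := natDegree_mul_le (p := c) (q := c')
          exact_mod_cast (by omega : (c * c').natDegree < q + 1)
        · rw [degree_pow, degree_X_sub_C]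
          simp only [nsmul_eq_mul, mul_one]
          exact_mod_cast (by omega : 2 * T < q + 1)
      · intro u hu
        have hu1 := (Finset.mem_filter.1 hu).2
        have hu0 : u ≠ 0 := by rintro rfl; rw [zero_pow (by omega)] at hu1; exact zero_ne_one hu1
        -- find x
        obtain ⟨x, hx, hxu⟩ : ∃ x : F, x ≠ 0 ∧ (x ^ ((q - 1) * p))⁻¹ = u := by
          obtain ⟨w, hw0, hw, hws⟩ := H.exists_gen
          obtain ⟨v, hv⟩ : ∃ v : F, v ^ p = u⁻¹ := by
            have := (frobenius_inj F p)
            obtain ⟨v, hv⟩ := (Finite.injective_iff_surjective.1 this) u⁻¹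
            exact ⟨v, hv⟩
          have hv0 : v ≠ 0 := by
            rintro rfl; rw [zero_pow (by omega)] at hv; exact inv_ne_zero hu0 hv.symm
          have hv1 : v ^ (q + 1) = 1 := by
            apply frobenius_inj F p
            simp only [frobenius_def, one_pow]
            rw [← pow_mul, mul_comm, pow_mul, hv, inv_pow, hu1, inv_one]
          obtain ⟨k, hk⟩ := hws v hv0
          rw [← hk, ← pow_mul, hw, H.qfac, mul_comm k] at hv1
          obtain ⟨t, ht⟩ := Nat.dvd_of_mul_dvd_mul_left (by omega) hv1
          refine ⟨w ^ t, pow_ne_zero _ hw0, ?_⟩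
          rw [inv_eq_iff_eq_inv, ← hv, ← hk, ht]
          simp only [← pow_mul]
          congr 1; ring
        have e1 := hc x hx
        have e2 := hc' x hx
        have e3 := huT x hx
        rw [hxu] at e1 e2 e3
        have e4 := hprod x
        rw [← hPe, ← hPe', e1, e2] at e4
        rw [eval_mul, eval_pow, eval_sub, eval_X, eval_C, mul_comm 2, pow_mul, hT, sub_pow_char_pow, ← hT, one_pow, e3]
        have e5 : x ^ q = x * x ^ (q - 1) := by rw [← pow_succ']; congr 1; omega
        rw [e5] at e4
        have : x ^ 2 * (eval u c * eval u c') = x ^ 2 * (x ^ (q - 1) - 1) ^ 2 := by linear_combination e4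
        exact mul_left_cancel₀ (pow_ne_zero 2 hx) this
    have hX : (X - C 1 : F[X]) ≠ 0 := X_sub_C_ne_zero 1
    have hne : c * c' ≠ 0 := by rw [hpoly]; exact pow_ne_zero _ hX
    have hcne := left_ne_zero_of_mul hne
    have hcne' := right_ne_zero_of_mul hne
    have hdeg : c.natDegree + c'.natDegree = 2 * T := by
      rw [← natDegree_mul hcne hcne', hpoly, natDegree_pow, natDegree_X_sub_C, mul_one]
    obtain ⟨i, hi, hassoc⟩ := (dvd_prime_pow (prime_X_sub_C (1 : F)) (2 * T)).1 ⟨c', hpoly.symm⟩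
    have hiT : i = T := by
      have := natDegree_eq_of_degree_eq (degree_eq_degree_of_associated hassoc)
      rw [natDegree_pow, natDegree_X_sub_C, mul_one] at this
      omega
    rw [hiT] at hassoc
    obtain ⟨b, hb⟩ := hassoc.symm
    obtain ⟨b', hb', hbb⟩ := isUnit_iff.1 b.isUnit
    refine ⟨b', hb'.ne_zero, fun x => ?_⟩
    by_cases hx : x = 0
    · rw [hx, ← hPe, hg0, H.zero_pow']; simp
    · rw [← hPe, hc x hx, ← hb, ← hbb, eval_mul, eval_C, eval_pow, eval_sub, eval_X, eval_C, hT, sub_pow_char_pow, 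
        ← hT, one_pow, huT x hx]
      have e5 : x ^ q = x * x ^ (q - 1) := by rw [← pow_succ']; congr 1; omega
      rw [e5]; ring
  · exfalso
    have hz := H.double_sum P P' hP hP' (q ^ 2 - 3) (by omega) (by
      intro i j i' j' hi hj hi' hj' h1 h2 h3
      have s1 := H.supp P hP (by intro x; rw [hPe, A.fq]) hg0 hPd s (by omega) hs2 (by omega) (by simpa only [hPe] using hg)
        i j hi hj h1
      have s2 := H.supp P' hP' (by intro x; rw [hPe', A.sq]) hg0' hPd' s' (by omega) (by omega) (by omega) 
        (by simpa only [hPe'] using hgs) i' j' hi' hj' h2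
      exact H.nt3 s s' hss hs1 hs2 i j i' j' hi hj hi' hj' s1.1 s1.2 s2.1 s2.2 h3)
    simp only [hPe, hPe', hprod] at hz
    rw [H.Ysum] at hz
    simp at hz

end QF

/-- the combinatorial hypotheses obtained from the unital -/
structure GHyp {F : Type*} [Field F] [Fintype F] [DecidableEq F] (q : ℕ) (g : F → F) : Prop where
  gq : ∀ x, g x ^ q = g x
  g0 : ∀ x, g x = 0 ↔ x ^ q = x
  fib : ∀ β : F, β ^ (q - 1) = 1 → (Finset.univ.filter fun c : F => g c = β).card = q
  out : ∀ m, m ^ q ≠ m → ∀ β, β ^ (q - 1) = 1 →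
    (Finset.univ.filter fun c : F => c ^ q ≠ c ∧ (c - m) ^ (q + 1) = β * g c).card = 1 ∨
    (Finset.univ.filter fun c : F => c ^ q ≠ c ∧ (c - m) ^ (q + 1) = β * g c).card = q + 1
  inn : ∀ m, m ^ q = m → ∀ β, β ^ (q - 1) = 1 →
    (Finset.univ.filter fun c : F => c ^ q ≠ c ∧ (c - m) ^ (q + 1) = β * g c).card ≤ q
  hom : ∀ l : F, l ^ (q - 1) = 1 → ∃ k : F, ∀ x, g (l * x) = k * g x

namespace GHyp
open Finset
variable {F : Type*} [Field F] [Fintype F] [DecidableEq F] {q p h : ℕ} {g : F → F}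

lemma prod_nz (H : QF F q p h) : ∏ x ∈ univ.filter (fun x : F => x ≠ 0), x = -1 := by
  open Polynomial in
  have h9 := H.q2pos
  have h1 : (X ^ (q ^ 2 - 1) - 1 : F[X]) = ∏ β ∈ univ.filter (fun x : F => x ≠ 0), (X - C β) := by
    apply uc_prod_of_roots
    · exact monic_X_pow_sub_C (1 : F) (by omega)
    · have e := natDegree_X_pow_sub_C (n := q ^ 2 - 1) (r := (1 : F))
      rw [C_1] at e
      rw [e, Finset.filter_ne', Finset.card_erase_of_mem (Finset.mem_univ _), Finset.card_univ, H.card]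
    · intro a ha
      have := H.pow1 (Finset.mem_filter.1 ha).2
      simp [this]
  have h2 := congrArg (eval 0) h1
  simp only [eval_sub, eval_pow, eval_X, eval_one, eval_prod, eval_C, zero_sub,
    zero_pow (by omega : q ^ 2 - 1 ≠ 0)] at h2
  rw [Finset.prod_neg, Finset.filter_ne', Finset.card_erase_of_mem (Finset.mem_univ _), Finset.card_univ, H.card,
    H.pow1 (by simp), one_mul] at h2
  rw [Finset.filter_ne']; exact h2.symm

lemma prod_shift (H : QF F q p h) (a : F) : ∏ c ∈ univ.erase a, (a - c) = -1 := by
  rw [← prod_nz H]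
  refine Finset.prod_bij (fun c _ => a - c) ?_ ?_ ?_ ?_
  · intro c hc; simp only [mem_filter, mem_univ, true_and]
    exact sub_ne_zero.2 (ne_of_mem_erase hc).symm
  · intro c _ d _ hcd; simpa using hcd
  · intro b hb
    refine ⟨a - b, ?_, by ring⟩
    simp only [mem_filter, mem_univ, true_and] at hb
    simp [hb]
  · intro c _; rfl

lemma prod_C (H : QF F q p h) (a : F) : 
    (a ^ q - a) * ∏ c ∈ (univ.filter fun c : F => c ^ q ≠ c).erase a, (a - c) = -1 ∨ a ^ q = a := by
  by_cases ha : a ^ q = a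
  · exact Or.inr ha
  left
  rw [← prod_shift H a, ← Finset.prod_filter_mul_prod_filter_not (univ.erase a) (fun c : F => c ^ q = c)]
  congr 1
  · have := congrArg (Polynomial.eval a) (H.prod_Fs (F := F))
    simp only [Polynomial.eval_sub, Polynomial.eval_pow, Polynomial.eval_X, Polynomial.eval_prod, Polynomial.eval_C] at this
    rw [this]
    refine Finset.prod_congr ?_ fun _ _ => rfl
    ext c
    simp only [mem_filter, mem_univ, true_and, mem_erase, and_true]
    exact ⟨fun h => ⟨by rintro rfl; exact ha h, h⟩, fun h => h.2⟩
  · refine Finset.prod_congr ?_ fun _ _ => rfl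
    ext c
    simp only [mem_filter, mem_univ, true_and, mem_erase, and_true]

/-- fibering over the units of the subfield -/
lemma maps (H : QF F q p h) (A : GHyp q g) (m : F) (s : Finset F) (hs : ∀ c ∈ s, c ^ q ≠ c ∧ c ≠ m) :
    ∀ c ∈ s, (c - m) ^ (q + 1) / g c ∈ univ.filter (fun β : F => β ^ (q - 1) = 1) := by
  intro c hc
  have h0 : g c ≠ 0 := fun h => (hs c hc).1 ((A.g0 c).1 h)
  simp only [mem_filter, mem_univ, true_and]
  rw [H.fu_iff, div_pow, H.norm_q, A.gq]
  exact ⟨rfl, div_ne_zero (pow_ne_zero _ (sub_ne_zero.2 (hs c hc).2)) h0⟩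

lemma fib_eq (A : GHyp q g) (H : QF F q p h) (m : F) {β : F} (hβ : β ^ (q - 1) = 1) :
    (((univ.filter fun c : F => c ^ q ≠ c).erase m).filter fun c => (c - m) ^ (q + 1) / g c = β) =
    (univ.filter fun c : F => c ^ q ≠ c ∧ (c - m) ^ (q + 1) = β * g c) := by
  ext c
  simp only [mem_filter, mem_erase, mem_univ, true_and]
  constructor
  · rintro ⟨⟨h1, h2⟩, h3⟩
    have h0 : g c ≠ 0 := fun h => h2 ((A.g0 c).1 h)
    exact ⟨h2, (div_eq_iff h0).1 h3⟩
  · rintro ⟨h2, h3⟩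
    have h0 : g c ≠ 0 := fun h => h2 ((A.g0 c).1 h)
    refine ⟨⟨?_, h2⟩, (div_eq_iff h0).2 h3⟩
    rintro rfl
    rw [sub_self, zero_pow (by omega)] at h3
    exact (mul_ne_zero ((H.fu_iff β).1 hβ).2 h0) h3.symm

lemma total (H : QF F q p h) (A : GHyp q g) (m : F) :
    ∑ β ∈ univ.filter (fun β : F => β ^ (q - 1) = 1),
      (univ.filter fun c : F => c ^ q ≠ c ∧ (c - m) ^ (q + 1) = β * g c).card =
    ((univ.filter fun c : F => c ^ q ≠ c).erase m).card := by
  rw [Finset.card_eq_sum_card_fiberwise (f := fun c => (c - m) ^ (q + 1) / g c) 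
    (t := univ.filter (fun β : F => β ^ (q - 1) = 1))]
  · refine Finset.sum_congr rfl fun β hβ => ?_
    rw [A.fib_eq H m (mem_filter.1 hβ).2]
  · exact maps H A m _ (fun c hc => ⟨(mem_filter.1 (mem_of_mem_erase hc)).2, ne_of_mem_erase hc⟩)

lemma inn_eq (H : QF F q p h) (A : GHyp q g) (m : F) (hm : m ^ q = m) (β : F) (hβ : β ^ (q - 1) = 1) :
    (univ.filter fun c : F => c ^ q ≠ c ∧ (c - m) ^ (q + 1) = β * g c).card = q := by
  have hq := H.q2
  have h1 := total H A m
  rw [erase_eq_of_notMem (by simp [hm]), H.card_C] at h1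
  have h3 : ∑ β ∈ univ.filter (fun β : F => β ^ (q - 1) = 1), q = q ^ 2 - q := by
    rw [Finset.sum_const, H.card_FU, smul_eq_mul, Nat.sub_mul, sq, one_mul]
  rw [← h3] at h1
  exact (Finset.sum_eq_sum_iff_of_le fun β hβ => A.inn m hm β (mem_filter.1 hβ).2).1 h1 β (by simp [hβ])

lemma out_ex (H : QF F q p h) (A : GHyp q g) (m : F) (hm : m ^ q ≠ m) :
    ∃ b : F, b ^ (q - 1) = 1 ∧ ∀ β : F, β ^ (q - 1) = 1 →
    (univ.filter fun c : F => c ^ q ≠ c ∧ (c - m) ^ (q + 1) = β * g c).card = if β = b then 1 else q + 1 := by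
  have hq := H.q2
  have h1 := total H A m
  rw [card_erase_of_mem (by simp [hm]), H.card_C] at h1
  set U := univ.filter (fun β : F => β ^ (q - 1) = 1) with hU
  set M : F → ℕ := fun β => (univ.filter fun c : F => c ^ q ≠ c ∧ (c - m) ^ (q + 1) = β * g c).card with hM
  have hMv : ∀ β ∈ U, M β = 1 ∨ M β = q + 1 := fun β hβ => A.out m hm β (mem_filter.1 hβ).2
  have h2 : ∀ β ∈ U, M β + (if M β = 1 then q else 0) = q + 1 := by
    intro β hβ
    rcases hMv β hβ with h | h
    · simp [h]; omega
    · rw [h, if_neg (by omega)]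
  have h3 : ∑ β ∈ U, M β + q * (U.filter fun β => M β = 1).card = q ^ 2 - 1 := by
    have : ∑ β ∈ U, (M β + (if M β = 1 then q else 0)) = ∑ β ∈ U, (q + 1) := Finset.sum_congr rfl h2
    rw [Finset.sum_add_distrib, Finset.sum_const, H.card_FU, ← Finset.sum_filter, Finset.sum_const] at this
    rw [H.qfac, mul_comm (q + 1), mul_comm q]; simpa using this
  have h9 := H.q2pos
  have hn : q + q ≤ q ^ 2 := by nlinarith
  have h4 : (U.filter fun β => M β = 1).card = 1 := by
    have : q * (U.filter fun β => M β = 1).card = q * 1 := by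
      change ∑ β ∈ U, M β = _ at h1
      omega
    exact Nat.eq_of_mul_eq_mul_left (by omega) this
  obtain ⟨b, hb⟩ := card_eq_one.1 h4
  have hbm : b ∈ U.filter fun β => M β = 1 := by rw [hb]; simp
  refine ⟨b, (mem_filter.1 (mem_filter.1 hbm).1).2, fun β hβ => ?_⟩
  have hβU : β ∈ U := by simp [hU, hβ]
  change M β = _
  split_ifs with h5
  · rw [h5]; exact (mem_filter.1 hbm).2
  · rcases hMv β hβU with h | h
    · exfalso
      have : β ∈ U.filter fun β => M β = 1 := mem_filter.2 ⟨hβU, h⟩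
      rw [hb, mem_singleton] at this
      exact h5 this
    · exact h

lemma prod_g (H : QF F q p h) (A : GHyp q g) : ∏ c ∈ univ.filter (fun c : F => c ^ q ≠ c), g c = -1 := by
  have hq := H.q2
  rw [← Finset.prod_fiberwise_of_maps_to (g := g) (t := univ.filter (fun β : F => β ^ (q - 1) = 1))]
  · rw [Finset.prod_congr rfl (g := fun β => β ^ q), Finset.prod_pow, H.prodFU_val, H.neg_pow', one_pow]
    intro β hβ
    rw [Finset.prod_congr rfl (g := fun _ => β), Finset.prod_const, filter_filter, 
      ← A.fib β (mem_filter.1 hβ).2]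
    · congr 2
      ext c
      simp only [mem_filter, mem_univ, true_and, and_iff_right_iff_imp]
      rintro rfl h0
      rw [A.fib (g c) (mem_filter.1 hβ).2] at h0
      exact ((H.fu_iff _).1 (mem_filter.1 hβ).2).2 ((A.g0 c).2 h0)
    · intro c hc; exact (mem_filter.1 hc).2
  · intro c hc
    simp only [mem_filter, mem_univ, true_and] at hc ⊢
    rw [H.fu_iff]
    exact ⟨A.gq c, fun h => hc ((A.g0 c).1 h)⟩

lemma out_val (H : QF F q p h) (A : GHyp q g) (m : F) (hm : m ^ q ≠ m) (b : F) (hb1 : b ^ (q - 1) = 1)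
    (hb : ∀ β : F, β ^ (q - 1) = 1 →
    (univ.filter fun c : F => c ^ q ≠ c ∧ (c - m) ^ (q + 1) = β * g c).card = if β = b then 1 else q + 1) :
    b = (m ^ q - m) ^ 2 / g m := by
  have hq := H.q2
  have hbb := (H.fu_iff b).1 hb1
  have hgm : g m ≠ 0 := fun h => hm ((A.g0 m).1 h)
  have hY : m ^ q - m ≠ 0 := sub_ne_zero.2 hm
  set S := univ.filter fun c : F => c ^ q ≠ c with hS
  have hmS : m ∈ S := by simp [hS, hm]
  have hbU : b ∈ univ.filter (fun β : F => β ^ (q - 1) = 1) := by simp [hb1]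
  have e1 : (∏ c ∈ S.erase m, (c - m) ^ (q + 1) / g c) * b = 1 := by
    rw [← Finset.prod_fiberwise_of_maps_to (g := fun c => (c - m) ^ (q + 1) / g c) 
      (t := univ.filter (fun β : F => β ^ (q - 1) = 1))]
    · have : ∀ β ∈ univ.filter (fun β : F => β ^ (q - 1) = 1), 
          ∏ c ∈ (S.erase m).filter (fun c => (c - m) ^ (q + 1) / g c = β), (c - m) ^ (q + 1) / g c = 
          β ^ (if β = b then 1 else q + 1) := by
        intro β hβ
        have hβ' := (mem_filter.1 hβ).2
        rw [Finset.prod_congr rfl (g := fun _ => β), Finset.prod_const, A.fib_eq H m hβ', hb β hβ']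
        intro c hc; exact (mem_filter.1 hc).2
      rw [Finset.prod_congr rfl this, ← Finset.mul_prod_erase _ _ hbU, if_pos rfl, pow_one]
      rw [Finset.prod_congr rfl (g := fun β => β ^ (q + 1))]
      · have e3 := Finset.mul_prod_erase _ (fun β : F => β ^ (q + 1)) hbU
        have e3' := Finset.prod_pow (univ.filter (fun β : F => β ^ (q - 1) = 1)) (q + 1) (fun β : F => β)
        rw [e3', H.prodFU_val, FHyp.neg1 H] at e3
        have e4 : b ^ (q + 1) = b * b := by rw [pow_succ, hbb.1]
        rw [e4] at e3
        linear_combination e3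
      · intro β hβ
        rw [if_neg (ne_of_mem_erase hβ)]
    · exact maps H A m _ (fun c hc => ⟨(mem_filter.1 (mem_of_mem_erase hc)).2, ne_of_mem_erase hc⟩)
  rw [Finset.prod_div_distrib, Finset.prod_pow] at e1
  have e2 : g m * ∏ c ∈ S.erase m, g c = -1 := by
    rw [Finset.mul_prod_erase _ _ hmS]; exact prod_g H A
  have e3 : (m ^ q - m) * ∏ c ∈ S.erase m, (m - c) = -1 := (prod_C H m).resolve_right hm
  have e4 : (∏ c ∈ S.erase m, (c - m)) ^ (q + 1) = (∏ c ∈ S.erase m, (m - c)) ^ (q + 1) := by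
    rw [← Finset.prod_pow, ← Finset.prod_pow]
    exact Finset.prod_congr rfl fun c _ => FHyp.norm_sub_comm H _ _
  have e5 : (m ^ q - m) ^ (q + 1) = - (m ^ q - m) ^ 2 := by
    rw [pow_succ, H.sub_pow, H.powqq]; ring
  have e6 : - (m ^ q - m) ^ 2 * (∏ c ∈ S.erase m, (m - c)) ^ (q + 1) = 1 := by
    rw [← e5, ← mul_pow, e3, FHyp.neg1 H]
  rw [e4] at e1
  set Pg := ∏ c ∈ S.erase m, g c
  have hPg : Pg ≠ 0 := by intro h; rw [h, mul_zero] at e2; simp at e2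
  rw [div_mul_eq_mul_div, div_eq_one_iff_eq hPg] at e1
  rw [eq_div_iff hgm]
  generalize (∏ c ∈ S.erase m, (m - c)) ^ (q + 1) = Z at *
  have : Z ≠ 0 := by rintro rfl; simp at e6
  apply mul_left_cancel₀ this
  linear_combination g m * e1 + e2 + e6

/-- the dual function -/
def dual (q : ℕ) (g : F → F) : F → F := fun m => (m ^ q - m) ^ 2 / g m

lemma dual_q (H : QF F q p h) (A : GHyp q g) (x : F) : dual q g x ^ q = dual q g x := by
  unfold dual
  rw [div_pow, A.gq, ← pow_mul, mul_comm 2, pow_mul, H.sub_pow, H.powqq]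
  congr 1; ring

lemma dual_0 (A : GHyp q g) (x : F) : dual q g x = 0 ↔ x ^ q = x := by
  unfold dual
  rw [div_eq_zero_iff, A.g0, pow_eq_zero_iff two_ne_zero, sub_eq_zero, or_self]

lemma fhyp1 (H : QF F q p h) (A : GHyp q g) : FHyp q g (dual q g) where
  fq := A.gq
  f0 := A.g0
  sq := dual_q H A
  s0 := dual_0 A
  out := by
    intro m hm β hβ
    obtain ⟨b, hb1, hb⟩ := out_ex H A m hm
    have := out_val H A m hm b hb1 hb
    rw [hb β hβ, this]; rfl
  inn := fun m hm β hβ => inn_eq H A m hm β hβ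

end GHyp

namespace GHyp
open Finset
variable {F : Type*} [Field F] [Fintype F] [DecidableEq F] {q p h : ℕ} {g gs : F → F}

lemma cnt_y (H : QF F q p h) {c d κ : F} (hcd : c ≠ d) (hκ : κ ^ (q - 1) = 1) :
    ((univ.erase c).filter fun a : F => (d - a) ^ (q + 1) = κ * (c - a) ^ (q + 1)).card
      + (if κ = 1 then 1 else 0) = q + 1 := by
  have h1 : ((univ.erase c).filter fun a : F => (d - a) ^ (q + 1) = κ * (c - a) ^ (q + 1)).card =
      ((univ.filter fun y : F => y ^ (q + 1) = κ).erase 1).card := by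
    refine Finset.card_nbij' (fun a => (d - a) / (c - a)) (fun y => (d - y * c) / (1 - y)) ?_ ?_ ?_ ?_
    · intro a ha
      simp only [coe_filter, mem_erase, mem_univ, and_true, Set.mem_ofPred_eq, mem_coe, mem_filter, true_and] at ha ⊢
      have h0 : c - a ≠ 0 := sub_ne_zero.2 (Ne.symm ha.1)
      refine ⟨?_, ?_⟩
      · rw [ne_eq, div_eq_one_iff_eq h0]
        intro h; exact hcd (by linear_combination -h)
      · rw [div_pow, ha.2, mul_div_cancel_right₀ _ (pow_ne_zero _ h0)]
    · intro y hy
      simp only [coe_filter, mem_erase, mem_univ, and_true, Set.mem_ofPred_eq, mem_coe, mem_filter, true_and] at hy ⊢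
      have h0 : 1 - y ≠ 0 := sub_ne_zero.2 (Ne.symm hy.1)
      refine ⟨?_, ?_⟩
      · rw [ne_eq, div_eq_iff h0]
        intro h; exact hcd (by linear_combination -h)
      · rw [← hy.2, ← mul_pow]
        congr 1
        field_simp
        ring
    · intro a ha
      simp only [coe_filter, mem_erase, mem_univ, and_true, Set.mem_ofPred_eq] at ha
      have h0 : c - a ≠ 0 := sub_ne_zero.2 (Ne.symm ha.1)
      have h1 : c - d ≠ 0 := sub_ne_zero.2 hcd
      have e : 1 - (d - a) / (c - a) = (c - d) / (c - a) := by field_simp; ring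
      show (d - (d - a) / (c - a) * c) / (1 - (d - a) / (c - a)) = a
      rw [e]
      field_simp
      ring
    · intro y hy
      simp only [mem_erase, mem_coe, mem_filter, mem_univ, true_and] at hy
      have h0 : 1 - y ≠ 0 := sub_ne_zero.2 (Ne.symm hy.1)
      have h1 : c - d ≠ 0 := sub_ne_zero.2 hcd
      have e : c - (d - y * c) / (1 - y) = (c - d) / (1 - y) := by field_simp; ring
      show (d - (d - y * c) / (1 - y)) / (c - (d - y * c) / (1 - y)) = y
      rw [e]
      field_simp
      ring
  rw [h1, card_erase_eq_ite, H.card_norm hκ]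
  by_cases h : κ = 1
  · rw [if_pos h, if_pos (by simp [h])]; omega
  · rw [if_neg h, if_neg (by simpa using Ne.symm h)]

lemma dualCount (H : QF F q p h) (A : FHyp q g gs)
    (fib : ∀ β : F, β ^ (q - 1) = 1 → (Finset.univ.filter fun c : F => g c = β).card = q)
    (c γ : F) (hγ : γ ^ (q - 1) = 1) :
    (univ.filter fun a : F => a ^ q ≠ a ∧ (a - c) ^ (q + 1) = γ * gs a).card =
      if c ^ q = c then q else if γ = g c then 1 else q + 1 := by
  have hq := H.q2
  have h9 := H.q2pos
  have hγ' := (H.fu_iff γ).1 hγ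
  set t := (univ.filter fun a : F => a ^ q ≠ a ∧ (a - c) ^ (q + 1) = γ * gs a).card with ht
  set S := univ.filter fun c : F => c ^ q ≠ c with hS
  have key := Finset.sum_card_bipartiteAbove_eq_sum_card_bipartiteBelow (s := univ.erase c) (t := S)
    (fun a d : F => γ * (d - a) ^ (q + 1) = (c - a) ^ (q + 1) * g d)
  simp only [bipartiteAbove, bipartiteBelow] at key
  have left : ∑ a ∈ univ.erase c, (S.filter fun d : F => γ * (d - a) ^ (q + 1) = (c - a) ^ (q + 1) * g d).card
      + q * t = ∑ a ∈ univ.erase c, (if a ^ q = a then q else q + 1) := by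
    have e1 : ∀ a ∈ univ.erase c, (S.filter fun d : F => γ * (d - a) ^ (q + 1) = (c - a) ^ (q + 1) * g d).card
      + (if a ^ q ≠ a ∧ (a - c) ^ (q + 1) = γ * gs a then q else 0) = (if a ^ q = a then q else q + 1) := by
      intro a ha
      have hac : a ≠ c := ne_of_mem_erase ha
      have h0 : (c - a) ≠ 0 := sub_ne_zero.2 hac.symm
      have hβ : ((c - a) ^ (q + 1) / γ) ^ (q - 1) = 1 := by
        rw [div_pow, H.norm_pow h0, hγ, div_one]
      have e2 : (S.filter fun d : F => γ * (d - a) ^ (q + 1) = (c - a) ^ (q + 1) * g d) =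
          univ.filter fun d : F => d ^ q ≠ d ∧ (d - a) ^ (q + 1) = ((c - a) ^ (q + 1) / γ) * g d := by
        rw [hS, filter_filter]
        refine filter_congr fun d _ => and_congr_right fun _ => ?_
        rw [div_mul_eq_mul_div, eq_div_iff hγ'.2, mul_comm γ]
      rw [e2]
      by_cases haF : a ^ q = a
      · rw [A.inn a haF _ hβ]; simp [haF]
      · rw [A.out a haF _ hβ, if_neg haF]
        simp only [div_eq_iff hγ'.2, FHyp.norm_sub_comm H c a, mul_comm (gs a)]
        by_cases h : (a - c) ^ (q + 1) = γ * gs a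
        · rw [if_pos h, if_pos ⟨haF, h⟩]; omega
        · rw [if_neg h, if_neg (fun h' => h h'.2)]
    rw [← Finset.sum_congr rfl e1, Finset.sum_add_distrib]
    congr 1
    rw [← Finset.sum_filter, Finset.sum_const, smul_eq_mul, mul_comm, ht]
    congr 2
    ext a
    simp only [mem_filter, mem_erase, mem_univ, true_and, and_true]
    constructor
    · rintro ⟨h1, h2⟩
      refine ⟨?_, h1, h2⟩
      rintro rfl
      rw [sub_self, zero_pow (by omega)] at h2
      exact mul_ne_zero hγ'.2 (fun h => h1 ((A.s0 a).1 h)) h2.symm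
    · exact fun h => h.2
  have right : ∑ d ∈ S.erase c, ((univ.erase c).filter fun a : F => γ * (d - a) ^ (q + 1) = (c - a) ^ (q + 1) * g d).card
      + ((S.erase c).filter fun d => g d = γ).card = (S.erase c).card * (q + 1) := by
    rw [Finset.card_filter, ← Finset.sum_add_distrib, ← smul_eq_mul, ← Finset.sum_const]
    refine Finset.sum_congr rfl fun d hd => ?_
    have hdc := ne_of_mem_erase hd
    have hdF : d ^ q ≠ d := (mem_filter.1 (mem_of_mem_erase hd)).2
    have hgd : g d ≠ 0 := fun h => hdF ((A.f0 d).1 h)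
    have hκ : (g d / γ) ^ (q - 1) = 1 := by
      rw [div_pow, hγ, div_one, H.fu_iff]; exact ⟨A.fq d, hgd⟩
    have := cnt_y H hdc.symm hκ
    simp only [div_eq_one_iff_eq hγ'.2] at this
    refine Eq.trans ?_ this
    congr 2
    refine filter_congr fun a _ => ?_
    rw [div_mul_eq_mul_div, eq_div_iff hγ'.2, mul_comm γ, mul_comm (g d)]
  have fibS : S.filter (fun d => g d = γ) = univ.filter fun d => g d = γ := by
    rw [hS, filter_filter]
    refine filter_congr fun d _ => ?_
    simp only [and_iff_right_iff_imp]
    rintro rfl h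
    exact hγ'.2 ((A.f0 d).2 h)
  have sumE : ∀ E : Finset F, ∑ a ∈ E, (if a ^ q = a then q else q + 1) = 
      (E.filter fun a => a ^ q = a).card * q + (E.filter fun a => a ^ q ≠ a).card * (q + 1) := by
    intro E
    rw [Finset.sum_ite]; simp
  rw [sumE] at left
  have hCc := H.card_C (F := F)
  have hFc := H.card_Fs (F := F)
  have hn : q + 1 ≤ q ^ 2 := by nlinarith
  have f1 : ((univ.erase c).filter fun a => a ^ q ≠ a) = S.erase c := by
    rw [hS, filter_erase]
  have f2 : ((univ.erase c).filter fun a => a ^ q = a) = (univ.filter fun a : F => a ^ q = a).erase c := by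
    rw [filter_erase]
  rw [f1, f2] at left
  by_cases hc : c ^ q = c
  · rw [if_pos hc]
    have hcS : c ∉ S := by simp [hS, hc]
    rw [erase_eq_of_notMem hcS] at right left
    rw [card_erase_of_mem (by simp [hc]), hFc, hCc] at left
    rw [fibS, fib γ hγ, hCc] at right
    rw [← key] at right
    have hm : (q - 1) * q = q * q - q := by rw [Nat.sub_mul, one_mul]
    have : q * q ≥ q := Nat.le_mul_self q
    have : q * t = q * q := by omega
    exact Nat.eq_of_mul_eq_mul_left (by omega) this
  · rw [if_neg hc]
    have hcS : c ∈ S := by simp [hS, hc]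
    rw [card_erase_of_mem hcS, hCc] at left right
    rw [erase_eq_of_notMem (s := univ.filter fun a : F => a ^ q = a) (a := c) (by simp [hc]), hFc] at left
    rw [filter_erase, fibS] at right
    rw [key, ← Finset.add_sum_erase _ _ hcS] at left
    have cc : ((univ.erase c).filter fun a : F => γ * (c - a) ^ (q + 1) = (c - a) ^ (q + 1) * g c).card =
        if γ = g c then q ^ 2 - 1 else 0 := by
      split_ifs with h
      · rw [filter_true_of_mem, card_erase_of_mem (mem_univ _), card_univ, H.card]
        intro a _; rw [h, mul_comm]
      · rw [card_eq_zero, filter_eq_empty_iff]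
        intro a ha h'
        have h0 : (c - a) ≠ 0 := sub_ne_zero.2 (ne_of_mem_erase ha).symm
        rw [mul_comm γ] at h'
        exact h (mul_left_cancel₀ (pow_ne_zero _ h0) h')
    rw [cc] at left
    rw [card_erase_eq_ite, fib γ hγ] at right
    simp only [mem_filter, mem_univ, true_and] at right
    have e : q * (q + 1) = q * q + q := by ring
    have hsq : q ^ 2 = q * q := sq q
    by_cases h : γ = g c
    · rw [if_pos h] at left ⊢
      rw [if_pos h.symm] at right
      have : q * t = q * 1 := by omega
      exact Nat.eq_of_mul_eq_mul_left (by omega) this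
    · rw [if_neg h] at left ⊢
      rw [if_neg (Ne.symm h)] at right
      have : q * t = q * (q + 1) := by omega
      exact Nat.eq_of_mul_eq_mul_left (by omega) this

lemma fhyp2 (H : QF F q p h) (A : GHyp q g) : FHyp q (dual q g) g where
  fq := dual_q H A
  f0 := dual_0 A
  sq := A.gq
  s0 := A.g0
  out := by
    intro m hm β hβ
    rw [dualCount H (fhyp1 H A) A.fib m β hβ, if_neg hm]
  inn := by
    intro m hm β hβ
    rw [dualCount H (fhyp1 H A) A.fib m β hβ, if_pos hm]

end GHyp

namespace GHyp
open Finset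
variable {F : Type*} [Field F] [Fintype F] [DecidableEq F] {q p h : ℕ} {g gs : F → F}

lemma orb (H : QF F q p h) (S : Finset F) (h0 : 0 ∉ S)
    (hS : ∀ l : F, l ^ (q - 1) = 1 → ∀ x ∈ S, l * x ∈ S) : (q - 1) ∣ S.card := by
  rw [Finset.card_eq_sum_card_image (fun x => x ^ (q - 1)) S]
  refine Finset.dvd_sum fun b hb => ?_
  obtain ⟨x, hx, rfl⟩ := mem_image.1 hb
  have hx0 : x ≠ 0 := fun h => h0 (h ▸ hx)
  have : (S.filter fun y => y ^ (q - 1) = x ^ (q - 1)) = 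
      (univ.filter (fun β : F => β ^ (q - 1) = 1)).image (fun l => l * x) := by
    ext y
    simp only [mem_filter, mem_image, mem_univ, true_and]
    constructor
    · rintro ⟨hy, h⟩
      refine ⟨y / x, ?_, by field_simp⟩
      rw [div_pow, h, div_self (pow_ne_zero _ hx0)]
    · rintro ⟨l, hl, rfl⟩
      exact ⟨hS l hl x hx, by rw [mul_pow, hl, one_mul]⟩
  rw [this, card_image_of_injective _ (mul_left_injective₀ hx0), H.card_FU]

lemma homExp (H : QF F q p h) (A : GHyp q g) : ∃ s : ℕ, (s = 1 ∨ (3 ≤ s ∧ s ≤ q - 2)) ∧ 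
    ∀ l : F, l ^ (q - 1) = 1 → ∀ x, g (l * x) = l ^ s * g x := by
  have hq := H.q2
  obtain ⟨w, hw0, hw1, hw2⟩ := H.exists_gen
  have hgen : ∀ l : F, l ^ (q - 1) = 1 → ∃ k : ℕ, l = (w ^ (q + 1)) ^ k := by
    intro l hl
    obtain ⟨k, rfl⟩ := hw2 l ((H.fu_iff l).1 hl).2
    rw [← pow_mul, hw1, H.qfac] at hl
    obtain ⟨j, rfl⟩ := Nat.dvd_of_mul_dvd_mul_right (by omega) hl
    exact ⟨j, by rw [pow_mul]⟩
  set l0 := w ^ (q + 1) with hl0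
  have hl1 : l0 ^ (q - 1) = 1 := H.norm_pow hw0
  obtain ⟨k0, hk0⟩ := A.hom l0 hl1
  obtain ⟨c, hc⟩ := Finset.card_pos.1 (show 0 < (univ.filter fun c : F => g c = 1).card by 
    rw [A.fib 1 (one_pow _)]; omega)
  have hc1 : g c = 1 := (mem_filter.1 hc).2
  have hcF : c ^ q ≠ c := by
    intro h; rw [(A.g0 c).2 h] at hc1; exact zero_ne_one hc1
  have hk1 : k0 ^ (q - 1) = 1 := by
    have e : k0 = g (l0 * c) := by rw [hk0, hc1, mul_one]
    rw [H.fu_iff, e]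
    refine ⟨A.gq _, fun h => hcF ?_⟩
    have := (A.g0 _).1 h
    rw [mul_pow, ((H.fu_iff l0).1 hl1).1] at this
    exact mul_left_cancel₀ ((H.fu_iff l0).1 hl1).2 this
  obtain ⟨s0, hs0⟩ := hgen k0 hk1
  -- normalise the exponent
  obtain ⟨s, hs1, hs2, hs⟩ : ∃ s, 1 ≤ s ∧ s ≤ q - 1 ∧ k0 = l0 ^ s := by
    by_cases hz : s0 % (q - 1) = 0
    · refine ⟨q - 1, by omega, le_refl _, ?_⟩
      rw [hs0, hl1, ← Nat.div_add_mod s0 (q - 1), hz, add_zero, pow_mul, hl1, one_pow]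
    · refine ⟨s0 % (q - 1), by omega, (Nat.mod_lt _ (by omega)).le, ?_⟩
      rw [hs0]
      conv_lhs => rw [← Nat.div_add_mod s0 (q - 1), pow_add, pow_mul, hl1, one_pow, one_mul]
  have hhom : ∀ l : F, l ^ (q - 1) = 1 → ∀ x, g (l * x) = l ^ s * g x := by
    intro l hl
    obtain ⟨k, rfl⟩ := hgen l hl
    clear hl
    induction k with
    | zero => intro x; simp
    | succ k ih =>
      intro x
      rw [pow_succ, mul_assoc, ih, hk0, hs, mul_pow, mul_assoc]
  refine ⟨s, ?_, hhom⟩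
  have hnd : ¬ (q - 1) ∣ q := by
    intro h
    have : (q - 1) ∣ 1 := by
      have := Nat.dvd_sub h (dvd_refl (q - 1))
      rwa [show q - (q - 1) = 1 by omega] at this
    have := Nat.le_of_dvd one_pos this
    omega
  have n1 : s ≠ q - 1 := by
    intro h
    apply hnd
    refine (?_ : _ ∣ _).trans (dvd_of_eq (A.fib 1 (one_pow _)))
    apply orb H
    · simp only [mem_filter, mem_univ, true_and]
      rw [(A.g0 0).2 H.zero_pow']; exact zero_ne_one
    · intro l hl x hx
      simp only [mem_filter, mem_univ, true_and] at hx ⊢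
      rw [hhom l hl, h, hl, one_mul, hx]
  have n2 : s ≠ 2 := by
    intro h
    apply hnd
    refine (?_ : _ ∣ _).trans (dvd_of_eq (inn_eq H A 0 H.zero_pow' 1 (one_pow _)))
    apply orb H
    · simp [H.zero_pow']
    · intro l hl x hx
      have hl' := (H.fu_iff l).1 hl
      simp only [mem_filter, mem_univ, true_and, sub_zero, one_mul] at hx ⊢
      rw [hhom l hl, h, mul_pow, mul_pow, hx.2, pow_succ l, hl'.1]
      refine ⟨fun h' => hx.1 (mul_left_cancel₀ hl'.2 h'), by ring⟩
  omega

theorem main (H : QF F q p h) (A : GHyp q g) : ∃ b : F, b ≠ 0 ∧ ∀ x, g x = b * (x ^ q - x) := by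
  have hq := H.q2
  obtain ⟨s, hs, hhom⟩ := homExp H A
  have hprod : ∀ x, g x * dual q g x = (x ^ q - x) ^ 2 := by
    intro x
    unfold dual
    by_cases hx : g x = 0
    · rw [hx, zero_mul, (A.g0 x).1 hx]; ring
    · field_simp
  have hd : ∀ s', s + s' = 2 ∨ s + s' = q + 1 → 
      ∀ l : F, l ^ (q - 1) = 1 → ∀ x, dual q g (l * x) = l ^ s' * dual q g x := by
    intro s' hs' l hl x
    have hl' := (H.fu_iff l).1 hl
    have e : l ^ s * l ^ s' = l ^ 2 := by
      rw [← pow_add]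
      rcases hs' with h | h
      · rw [h]
      · rw [h, pow_succ, hl'.1]; ring
    unfold dual
    rw [hhom l hl, mul_pow, hl'.1, ← mul_sub, mul_pow, ← e]
    have := pow_ne_zero s hl'.2
    rw [mul_assoc, mul_div_mul_left _ _ this, mul_div_assoc]
  rcases hs with rfl | hs
  · exact H.finalAlg g (dual q g) (fhyp1 H A) (fhyp2 H A) hprod 1 1 (Or.inl ⟨rfl, rfl⟩) hhom (hd 1 (Or.inl rfl))
  · exact H.finalAlg g (dual q g) (fhyp1 H A) (fhyp2 H A) hprod s (q + 1 - s) (Or.inr ⟨hs.1, hs.2, by omega⟩) hhom 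
      (hd _ (Or.inr (by omega)))

end GHyp

open Finset in
/-- product trick -/
lemma uc_prod_trick {F : Type*} [Field F] [DecidableEq F] (T : Finset F) (h0 : 0 ∉ T) (a : F) (ha : a ≠ 0)
    (hT : ∀ x ∈ T, a * x ∈ T) : a ^ T.card = 1 := by
  have himg : T.image (fun x => a * x) = T := by
    apply Finset.eq_of_subset_of_card_le
    · intro y hy
      obtain ⟨x, hx, rfl⟩ := mem_image.1 hy
      exact hT x hx
    · rw [card_image_of_injective _ (mul_right_injective₀ ha)]
  have h1 : ∏ x ∈ T, x = a ^ T.card * ∏ x ∈ T, x := by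
    conv_lhs => rw [← himg]
    rw [Finset.prod_image (fun x _ y _ h => mul_left_cancel₀ ha h), Finset.prod_mul_distrib, Finset.prod_const]
  have h2 : ∏ x ∈ T, x ≠ 0 := Finset.prod_ne_zero_iff.2 fun x hx h => h0 (h ▸ hx)
  exact (mul_right_cancel₀ h2 (by rw [one_mul]; exact h1)).symm

/-- diagonal symmetries -/
def Gam {F : Type*} [Field F] (S : Finset (F × F)) (S0 : Finset F) (t : F × F) : Prop :=
  t.1 ≠ 0 ∧ t.2 ≠ 0 ∧ (∀ x z, (x, z) ∈ S → (t.1 * x, t.2 * z) ∈ S) ∧ (∀ x ∈ S0, t.1 / t.2 * x ∈ S0)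

/-- affine version of the hypotheses -/
structure AH {F : Type*} [Field F] [Fintype F] [DecidableEq F] (q : ℕ) (S : Finset (F × F)) (S0 : Finset F) : Prop where
  zero : (0 : F) ∈ S0
  c0 : S0.card = q
  tan : ∀ x, (x, (0 : F)) ∉ S
  row : ∀ c : F, c ≠ 0 → (Finset.univ.filter fun x : F => (x, c) ∈ S).card = q
  line : ∀ a b : F, (Finset.univ.filter fun z : F => (a * z + b, z) ∈ S).card + (if a ∈ S0 then 1 else 0) = 1 ∨
    (Finset.univ.filter fun z : F => (a * z + b, z) ∈ S).card + (if a ∈ S0 then 1 else 0) = q + 1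
  grp : ∃ G : Finset (F × F), q ^ 2 - 1 ≤ G.card ∧ ∀ t ∈ G, Gam S S0 t

namespace AH
open Finset
variable {F : Type*} [Field F] [Fintype F] [DecidableEq F] {q p h : ℕ} {S : Finset (F × F)} {S0 : Finset F}

lemma gam_mul {s t : F × F} (hs : Gam S S0 s) (ht : Gam S S0 t) : Gam S S0 (s * t) := by
  refine ⟨mul_ne_zero hs.1 ht.1, mul_ne_zero hs.2.1 ht.2.1, fun x z hxz => ?_, fun x hx => ?_⟩
  · have := hs.2.2.1 _ _ (ht.2.2.1 x z hxz)
    simpa [mul_assoc] using this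
  · have := hs.2.2.2 _ (ht.2.2.2 x hx)
    convert this using 1
    simp only [Prod.fst_mul, Prod.snd_mul]
    rw [← mul_assoc, mul_div_mul_comm]

lemma gam_pow {s : F × F} (hs : Gam S S0 s) (n : ℕ) : Gam S S0 (s ^ (n + 1)) := by
  induction n with
  | zero => simpa using hs
  | succ n ih => rw [pow_succ]; exact gam_mul ih hs

lemma gam_inv (H : QF F q p h) {s : F × F} (hs : Gam S S0 s) : Gam S S0 (s.1⁻¹, s.2⁻¹) := by
  have h9 := H.q2pos
  have h1 := gam_pow hs (q ^ 2 - 3)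
  have e : s ^ (q ^ 2 - 3 + 1) = (s.1⁻¹, s.2⁻¹) := by
    have : ∀ a : F, a ≠ 0 → a ^ (q ^ 2 - 3 + 1) = a⁻¹ := by
      intro a ha
      have h2 := H.pow1 ha
      rw [show q ^ 2 - 1 = q ^ 2 - 3 + 1 + 1 by omega, pow_succ] at h2
      exact eq_inv_of_mul_eq_one_left h2
    ext
    · exact this _ hs.1
    · exact this _ hs.2.1
  rwa [e] at h1

open Classical in
/-- scalars acting as homologies -/
noncomputable def Hs (S : Finset (F × F)) (S0 : Finset F) : Finset F := univ.filter fun b : F => Gam S S0 (b, b)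

omit [DecidableEq F] in
lemma mem_Hs {b : F} : b ∈ Hs S S0 ↔ Gam S S0 (b, b) := by simp [Hs]

lemma Hs_mul {a b : F} (ha : a ∈ Hs S S0) (hb : b ∈ Hs S S0) : a * b ∈ Hs S S0 := by
  rw [mem_Hs] at *
  exact gam_mul ha hb

lemma delta_FU (H : QF F q p h) (A : AH q S S0) {t : F × F} (ht : Gam S S0 t) : (t.1 / t.2) ^ (q - 1) = 1 := by
  have h1 : (S0.erase 0).card = q - 1 := by rw [card_erase_of_mem A.zero, A.c0]
  rw [← h1]
  have hd : t.1 / t.2 ≠ 0 := div_ne_zero ht.1 ht.2.1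
  apply uc_prod_trick _ (by simp) _ hd
  intro x hx
  rw [mem_erase] at hx ⊢
  exact ⟨mul_ne_zero hd hx.1, ht.2.2.2 x hx.2⟩

lemma fiber_le (H : QF F q p h) (G : Finset (F × F)) (hG : ∀ t ∈ G, Gam S S0 t) (d : F) :
    (G.filter fun t => t.1 / t.2 = d).card ≤ (Hs S S0).card := by
  rcases (G.filter fun t => t.1 / t.2 = d).eq_empty_or_nonempty with h | ⟨t0, ht0⟩
  · rw [h]; simp
  rw [mem_filter] at ht0
  have g0 := hG t0 ht0.1
  refine Finset.card_le_card_of_injOn (fun t => t.2 * t0.2⁻¹) ?_ ?_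
  · intro t ht
    rw [mem_coe, mem_filter] at ht
    have g1 := hG t ht.1
    rw [mem_coe, mem_Hs]
    have g2 := gam_mul g1 (gam_inv H g0)
    have e : t * (t0.1⁻¹, t0.2⁻¹) = (t.2 * t0.2⁻¹, t.2 * t0.2⁻¹) := by
      ext
      · have e1 : t.1 = d * t.2 := by rw [← ht.2, div_mul_cancel₀ _ g1.2.1]
        have e2 : t0.1 = d * t0.2 := by rw [← ht0.2, div_mul_cancel₀ _ g0.2.1]
        have hd : d ≠ 0 := by rw [← ht0.2]; exact div_ne_zero g0.1 g0.2.1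
        show t.1 * t0.1⁻¹ = t.2 * t0.2⁻¹
        rw [e1, e2, mul_inv]
        field_simp
      · rfl
    rwa [e] at g2
  · intro t ht s hs hts
    rw [mem_coe, mem_filter] at ht hs
    have g1 := hG t ht.1
    have g2 := hG s hs.1
    have e2 : t.2 = s.2 := mul_right_cancel₀ (inv_ne_zero g0.2.1) hts
    have e1 : t.1 = s.1 := by
      have e1 : t.1 = d * t.2 := by rw [← ht.2, div_mul_cancel₀ _ g1.2.1]
      have e3 : s.1 = d * s.2 := by rw [← hs.2, div_mul_cancel₀ _ g2.2.1]
      rw [e1, e3, e2]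
    exact Prod.ext e1 e2

lemma image_sub (H : QF F q p h) (A : AH q S S0) (G : Finset (F × F)) (hG : ∀ t ∈ G, Gam S S0 t) :
    G.image (fun t => t.1 / t.2) ⊆ univ.filter (fun β : F => β ^ (q - 1) = 1) := by
  intro d hd
  obtain ⟨t, ht, rfl⟩ := mem_image.1 hd
  simp only [mem_filter, mem_univ, true_and]
  exact delta_FU H A (hG t ht)

lemma z_ne (A : AH q S S0) {x z : F} (hx : (x, z) ∈ S) : z ≠ 0 := by
  rintro rfl; exact A.tan x hx

lemma Hs_line (A : AH q S S0) {c z : F} (hx : (c * z, z) ∈ S) :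
    (Hs S S0).image (fun b => b * z) ⊆ univ.filter fun z : F => (c * z + 0, z) ∈ S := by
  intro y hy
  obtain ⟨b, hb, rfl⟩ := mem_image.1 hy
  simp only [mem_filter, mem_univ, true_and, add_zero]
  have := (mem_Hs.1 hb).2.2.1 _ _ hx
  convert this using 2
  ring

lemma card_Hs_img (A : AH q S S0) {c z : F} (hx : (c * z, z) ∈ S) :
    ((Hs S S0).image (fun b => b * z)).card = (Hs S S0).card :=
  card_image_of_injective _ (mul_left_injective₀ (z_ne A hx))

lemma Hs_ge (H : QF F q p h) (A : AH q S S0) : q + 1 ≤ (Hs S S0).card := by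
  have hq := H.q2
  obtain ⟨G, hGc, hG⟩ := A.grp
  have h1 := Finset.card_le_mul_card_image (f := fun t : F × F => t.1 / t.2) G (Hs S S0).card 
    (fun d _ => fiber_le H G hG d)
  have h2 := (card_le_card (image_sub H A G hG)).trans_eq H.card_FU
  have h3 : (q + 1) * (q - 1) ≤ (Hs S S0).card * (q - 1) := by
    rw [← H.qfac]
    exact hGc.trans (h1.trans (Nat.mul_le_mul_left _ h2))
  exact Nat.le_of_mul_le_mul_right h3 (by omega)

lemma line_full (H : QF F q p h) (A : AH q S S0) {c z : F} (hx : (c * z, z) ∈ S) :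
    c ∉ S0 ∧ (Hs S S0).card = q + 1 ∧ 
    (Hs S S0).image (fun b => b * z) = univ.filter fun z : F => (c * z + 0, z) ∈ S := by
  have h1 := card_le_card (Hs_line A hx)
  rw [card_Hs_img A hx] at h1
  have h2 := Hs_ge H A
  have h3 := A.line c 0
  have hc : c ∉ S0 := by
    intro hc
    rw [if_pos hc] at h3
    omega
  rw [if_neg hc] at h3
  have h4 : (Hs S S0).card = q + 1 := by omega
  refine ⟨hc, h4, Finset.eq_of_subset_of_card_le (Hs_line A hx) ?_⟩
  rw [card_Hs_img A hx]; omega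

lemma Hs_card (H : QF F q p h) (A : AH q S S0) : (Hs S S0).card = q + 1 := by
  have hq := H.q2
  obtain ⟨x, hx⟩ := Finset.card_pos.1 (show 0 < (univ.filter fun x : F => (x, (1 : F)) ∈ S).card by
    rw [A.row 1 one_ne_zero]; omega)
  have hx' : (x * 1, (1 : F)) ∈ S := by simpa using hx
  exact (line_full H A hx').2.1

lemma Hs_eq (H : QF F q p h) (A : AH q S S0) : Hs S S0 = univ.filter fun b : F => b ^ (q + 1) = 1 := by
  apply Finset.eq_of_subset_of_card_le
  · intro b hb
    simp only [mem_filter, mem_univ, true_and]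
    have hb0 := (mem_Hs.1 hb).1
    rw [← Hs_card H A]
    exact uc_prod_trick _ (fun h => (mem_Hs.1 h).1 rfl) b hb0 fun x hx => Hs_mul hb hx
  · rw [Hs_card H A, H.card_norm (one_pow _)]

lemma delta_surj (H : QF F q p h) (A : AH q S S0) (d : F) (hd : d ^ (q - 1) = 1) : 
    ∃ b : F, Gam S S0 (d * b, b) := by
  have hq := H.q2
  obtain ⟨G, hGc, hG⟩ := A.grp
  have h1 := Finset.card_le_mul_card_image (f := fun t : F × F => t.1 / t.2) G (Hs S S0).card 
    (fun d _ => fiber_le H G hG d)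
  rw [Hs_card H A] at h1
  have h3 : (q + 1) * (q - 1) ≤ (q + 1) * (G.image (fun t : F × F => t.1 / t.2)).card := by
    rw [← H.qfac]
    exact hGc.trans h1
  have h4 := Nat.le_of_mul_le_mul_left h3 (by omega)
  have h5 := Finset.eq_of_subset_of_card_le (image_sub H A G hG) (by rw [H.card_FU]; exact h4)
  have h6 : d ∈ G.image (fun t : F × F => t.1 / t.2) := by rw [h5]; simp [hd]
  obtain ⟨t, ht, rfl⟩ := mem_image.1 h6
  refine ⟨t.2, ?_⟩
  rw [div_mul_cancel₀ _ (hG t ht).2.1]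
  exact hG t ht

lemma ex_g (H : QF F q p h) (A : AH q S S0) : ∃ g : F → F, (∀ c, g c ^ q = g c) ∧ (∀ c, g c = 0 ↔ c ∈ S0) ∧
    ∀ c z, (c * z, z) ∈ S ↔ z ^ (q + 1) * g c = 1 := by
  have hq := H.q2
  have : ∀ c : F, ∃ y : F, y ^ q = y ∧ (y = 0 ↔ c ∈ S0) ∧ ∀ z, (c * z, z) ∈ S ↔ z ^ (q + 1) * y = 1 := by
    intro c
    by_cases hc : c ∈ S0
    · refine ⟨0, H.zero_pow', by simp [hc], fun z => ?_⟩
      simp only [mul_zero, zero_ne_one, iff_false]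
      intro hx
      exact (line_full H A hx).1 hc
    · have h1 := A.line c 0
      rw [if_neg hc] at h1
      obtain ⟨z0, hz0⟩ := Finset.card_pos.1 (show 0 < (univ.filter fun z : F => (c * z + 0, z) ∈ S).card by omega)
      have hz : (c * z0, z0) ∈ S := by simpa using hz0
      have hz0 := z_ne A hz
      have hz1 := pow_ne_zero (q + 1) hz0
      refine ⟨(z0 ^ (q + 1))⁻¹, by rw [inv_pow, H.norm_q], by simp [hc, hz0], fun z => ?_⟩
      have h2 := (line_full H A hz).2.2
      rw [Hs_eq H A] at h2
      have h3 : (c * z, z) ∈ S ↔ z ∈ univ.filter fun z : F => (c * z + 0, z) ∈ S := by simp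
      rw [h3, ← h2]
      simp only [mem_image, mem_filter, mem_univ, true_and]
      rw [← div_eq_mul_inv, ← div_pow]
      constructor
      · rintro ⟨b, hb, rfl⟩
        rwa [mul_div_cancel_right₀ _ hz0]
      · intro h
        exact ⟨z / z0, h, div_mul_cancel₀ _ hz0⟩
  choose g h1 h2 h3 using this
  exact ⟨g, h1, h2, h3⟩

lemma ex_eps (H : QF F q p h) (A : AH q S S0) : ∃ e : F, e ≠ 0 ∧ ∀ x, e * x ∈ S0 ↔ x ^ q = x := by
  have hq := H.q2
  obtain ⟨e, he⟩ := Finset.card_pos.1 (show 0 < (S0.erase 0).card by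
    rw [card_erase_of_mem A.zero, A.c0]; omega)
  rw [mem_erase] at he
  have h1 : (univ.filter (fun β : F => β ^ q = β)).image (fun x => e * x) = S0 := by
    apply Finset.eq_of_subset_of_card_le
    · intro y hy
      obtain ⟨x, hx, rfl⟩ := mem_image.1 hy
      simp only [mem_filter, mem_univ, true_and] at hx
      by_cases hx0 : x = 0
      · rw [hx0, mul_zero]; exact A.zero
      · obtain ⟨b, hb⟩ := delta_surj H A x ((H.fu_iff x).2 ⟨hx, hx0⟩)
        have := hb.2.2.2 e he.2
        rwa [mul_div_cancel_right₀ _ hb.2.1, mul_comm] at this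
    · rw [card_image_of_injective _ (mul_right_injective₀ he.1), H.card_Fs, A.c0]
  refine ⟨e, he.1, fun x => ?_⟩
  rw [← h1]
  simp only [mem_image, mem_filter, mem_univ, true_and]
  constructor
  · rintro ⟨y, hy, hxy⟩
    rwa [← mul_left_cancel₀ he.1 hxy]
  · intro hx; exact ⟨x, hx, rfl⟩

lemma ghyp (H : QF F q p h) (A : AH q S S0) : ∃ e : F, e ≠ 0 ∧ (∀ x, e * x ∈ S0 ↔ x ^ q = x) ∧
    ∃ g : F → F, GHyp q g ∧ ∀ c z, (e * c * z, z) ∈ S ↔ z ^ (q + 1) * g c = 1 := by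
  have hq := H.q2
  obtain ⟨g, gq, g0, gS⟩ := ex_g H A
  obtain ⟨e, he, heS⟩ := ex_eps H A
  have lineCount : ∀ m β : F, β ^ (q - 1) = 1 → 
      (univ.filter fun c : F => c ^ q ≠ c ∧ (c - m) ^ (q + 1) = β * g (e * c)).card
        + (if m ^ q = m then 1 else 0) = 1 ∨ 
      (univ.filter fun c : F => c ^ q ≠ c ∧ (c - m) ^ (q + 1) = β * g (e * c)).card
        + (if m ^ q = m then 1 else 0) = q + 1 := by
    intro m β hβ
    obtain ⟨y, hy⟩ := H.exists_norm hβ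
    have hy0 : y ≠ 0 := by
      rintro rfl; rw [zero_pow (by omega)] at hy
      exact ((H.fu_iff β).1 hβ).2 hy.symm
    have hβ0 := ((H.fu_iff β).1 hβ).2
    have h1 := A.line (e * m) (e * y)
    simp only [heS] at h1
    have h2 : (univ.filter fun c : F => c ^ q ≠ c ∧ (c - m) ^ (q + 1) = β * g (e * c)).card =
       (univ.filter fun z : F => (e * m * z + e * y, z) ∈ S).card := by
      refine Finset.card_nbij' (fun c => y / (c - m)) (fun z => m + y / z) ?_ ?_ ?_ ?_
      · intro c hc
        simp only [coe_filter, mem_univ, true_and, Set.mem_ofPred_eq] at hc ⊢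
        have hcm : c - m ≠ 0 := by
          intro h
          rw [h, zero_pow (by omega)] at hc
          have := (mul_eq_zero.1 hc.2.symm).resolve_left hβ0
          rw [g0, heS] at this
          exact hc.1 this
        have e1 : e * m * (y / (c - m)) + e * y = (e * c) * (y / (c - m)) := by field_simp; ring
        rw [e1, gS, div_pow, hy, div_mul_eq_mul_div, ← hc.2, div_self (pow_ne_zero _ hcm)]
      · intro z hz
        simp only [coe_filter, mem_univ, true_and, Set.mem_ofPred_eq] at hz ⊢
        have hz0 := z_ne A hz
        have e1 : e * m * z + e * y = (e * (m + y / z)) * z := by field_simp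
        rw [e1, gS] at hz
        constructor
        · intro h
          rw [← heS, ← g0] at h
          rw [h, mul_zero] at hz
          exact zero_ne_one hz
        · rw [add_sub_cancel_left, div_pow, hy, div_eq_iff (pow_ne_zero _ hz0), mul_assoc, mul_comm (g _), hz, mul_one]
      · intro c hc
        simp only [coe_filter, mem_univ, true_and, Set.mem_ofPred_eq] at hc
        have hcm : c - m ≠ 0 := by
          intro h
          rw [h, zero_pow (by omega)] at hc
          have := (mul_eq_zero.1 hc.2.symm).resolve_left hβ0
          rw [g0, heS] at this
          exact hc.1 this
        show m + y / (y / (c - m)) = c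
        field_simp
        ring
      · intro z hz
        simp only [coe_filter, mem_univ, true_and, Set.mem_ofPred_eq] at hz
        have hz0 := z_ne A hz
        show y / (m + y / z - m) = z
        rw [add_sub_cancel_left]
        field_simp
    rw [h2]; exact h1
  refine ⟨e, he, heS, fun c => g (e * c), ⟨fun x => gq _, fun x => by rw [g0, heS], ?_, ?_, ?_, ?_⟩, fun c z => gS _ _⟩
  · intro β hβ
    have hβ0 := ((H.fu_iff β).1 hβ).2
    obtain ⟨y, hy⟩ := H.exists_norm (β := β⁻¹) (by rw [inv_pow, hβ, inv_one])
    have hy0 : y ≠ 0 := by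
      rintro rfl; rw [zero_pow (by omega)] at hy
      exact (inv_ne_zero hβ0) hy.symm
    rw [← A.row y hy0]
    refine Finset.card_nbij' (fun c => e * c * y) (fun x => x / (e * y)) ?_ ?_ ?_ ?_
    · intro c hc
      simp only [coe_filter, mem_univ, true_and, Set.mem_ofPred_eq] at hc ⊢
      rw [gS, hy, hc, inv_mul_cancel₀ hβ0]
    · intro x hx
      simp only [coe_filter, mem_univ, true_and, Set.mem_ofPred_eq] at hx ⊢
      have e1 : x = e * (x / (e * y)) * y := by field_simp
      rw [e1, gS, hy, inv_mul_eq_one₀ hβ0] at hx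
      exact hx.symm
    · intro c _
      show e * c * y / (e * y) = c
      field_simp
    · intro x _
      show e * (x / (e * y)) * y = x
      field_simp
  · intro m hm β hβ
    have := lineCount m β hβ
    simpa [hm] using this
  · intro m hm β hβ
    have := lineCount m β hβ
    simp only [hm, if_true] at this
    omega
  · intro l hl
    have hl0 := ((H.fu_iff l).1 hl).2
    obtain ⟨b, hb⟩ := delta_surj H A l hl
    refine ⟨(b ^ (q + 1))⁻¹, fun x => ?_⟩
    have hb1 := pow_ne_zero (q + 1) hb.2.1
    have e1 : e * (l * x) = l * (e * x) := by ring
    rw [e1]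
    generalize e * x = c
    by_cases hc : c ∈ S0
    · have h1 := hb.2.2.2 c hc
      simp only [mul_div_cancel_right₀ _ hb.2.1] at h1
      rw [(g0 _).2 hc, (g0 _).2 h1, mul_zero]
    · have hg : g c ≠ 0 := fun h => hc ((g0 c).1 h)
      obtain ⟨z, hz⟩ := H.exists_norm (β := (g c)⁻¹) (by rw [inv_pow, (H.fu_iff (g c)).2 ⟨gq c, hg⟩, inv_one])
      have h1 : (c * z, z) ∈ S := by rw [gS, hz, inv_mul_cancel₀ hg]
      have h2 := hb.2.2.1 _ _ h1
      have e2 : l * b * (c * z) = (l * c) * (b * z) := by ring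
      simp only [e2] at h2
      rw [gS, mul_pow, hz] at h2
      rw [eq_inv_mul_iff_mul_eq₀ hb1]
      field_simp at h2
      exact h2

theorem conclusion (H : QF F q p h) (A : AH q S S0) : ∃ e b : F, e ≠ 0 ∧ b ≠ 0 ∧ b ^ q = - b ∧ 
    (∀ x, e * x ∈ S0 ↔ x ^ q = x) ∧ ∀ x z, (e * x, z) ∈ S ↔ b * (x ^ q * z - x * z ^ q) = 1 := by
  have hq := H.q2
  obtain ⟨e, he, heS, g, hg, gS⟩ := ghyp H A
  obtain ⟨b, hb, hgb⟩ := GHyp.main H hg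
  refine ⟨e, b, he, hb, ?_, heS, fun x z => ?_⟩
  · obtain ⟨c, hc⟩ := Finset.card_pos.1 (show 0 < (univ.filter fun c : F => g c = 1).card by 
      rw [hg.fib 1 (one_pow _)]; omega)
    have hc1 : g c = 1 := (mem_filter.1 hc).2
    rw [hgb] at hc1
    have h1 : c ^ q - c ≠ 0 := by intro h; rw [h, mul_zero] at hc1; exact zero_ne_one hc1
    have h2 := congrArg (· ^ q) hc1
    simp only [mul_pow, H.sub_pow, H.powqq, one_pow] at h2
    apply mul_right_cancel₀ h1
    linear_combination hc1 - h2
  · by_cases hz : z = 0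
    · subst hz
      rw [H.zero_pow', mul_zero, mul_zero, sub_zero, mul_zero]
      simp [A.tan]
    · have e1 : e * x = e * (x / z) * z := by field_simp
      rw [e1, gS, hgb, div_pow, pow_succ]
      have hz' := pow_ne_zero q hz
      have e2 : z ^ q * z * (b * (x ^ q / z ^ q - x / z)) = b * (x ^ q * z - x * z ^ q) := by
        field_simp
      rw [e2]

end AH

namespace UGeo
open Finset
open scoped LinearAlgebra.Projectivization
variable {K : Type*} [Field K]

/-- the cone over a point set -/
def TT (U : Set (PGPt K)) (v : Fin 3 → K) : Prop := ∃ h : v ≠ 0, Projectivization.mk K v h ∈ U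

lemma TT_mk {U : Set (PGPt K)} {v : Fin 3 → K} (h : v ≠ 0) : Projectivization.mk K v h ∈ U ↔ TT U v :=
  ⟨fun h' => ⟨h, h'⟩, fun h' => h'.2⟩

lemma TT_smul {U : Set (PGPt K)} {v : Fin 3 → K} {a : K} (ha : a ≠ 0) : TT U (a • v) ↔ TT U v := by
  have e : ∀ (h : v ≠ 0) (h' : a • v ≠ 0), Projectivization.mk K (a • v) h' = Projectivization.mk K v h := by
    intro h h'
    rw [Projectivization.mk_eq_mk_iff']
    exact ⟨a, rfl⟩
  constructor
  · rintro ⟨h', h⟩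
    have h0 : v ≠ 0 := by rintro rfl; simp at h'
    exact ⟨h0, by rwa [e h0 h'] at h⟩
  · rintro ⟨h, h1⟩
    have h' : a • v ≠ 0 := smul_ne_zero ha h
    exact ⟨h', by rwa [e h h']⟩

/-- frames -/
structure Fr (f0 f1 f2 : Fin 3 → K) : Prop where
  li : ∀ x y z : K, x • f0 + y • f1 + z • f2 = 0 → x = 0 ∧ y = 0 ∧ z = 0
  sp : ∀ v : Fin 3 → K, ∃ x y z : K, v = x • f0 + y • f1 + z • f2

open Classical in
lemma line_count [Fintype K] {q : ℕ} {U : Set (PGPt K)} (hU : IsUnital q U) (u v : Fin 3 → K)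
    (li : ∀ x y : K, x • u + y • v = 0 → x = 0 ∧ y = 0) :
    (univ.filter fun t : K => TT U (t • u + v)).card + (if TT U u then 1 else 0) = 1 ∨
    (univ.filter fun t : K => TT U (t • u + v)).card + (if TT U u then 1 else 0) = q + 1 := by
  have hu : u ≠ 0 := by
    intro h
    have := (li 1 0 (by simp [h])).1
    exact one_ne_zero this
  have hv : ∀ t : K, t • u + v ≠ 0 := by
    intro t h
    have := (li t 1 (by simpa using h)).2
    exact one_ne_zero this
  have hLI : LinearIndependent K ![u, v] := LinearIndependent.pair_iff.2 li
  have hfr : Module.finrank K (Submodule.span K {u, v}) = 2 := by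
    have := finrank_span_eq_card hLI
    rwa [Matrix.range_cons, Matrix.range_cons, Matrix.range_empty, Set.union_empty, Set.singleton_union, Fintype.card_fin] at this
  let L : PGLn K := ⟨Submodule.span K {u, v}, hfr⟩
  let f : Option K → PGPt K := fun o => match o with
    | none => Projectivization.mk K u hu
    | some t => Projectivization.mk K (t • u + v) (hv t)
  have finj : Function.Injective f := by
    intro a b hab
    rcases a with _ | a <;> rcases b with _ | b
    · rfl
    · exfalso
      simp only [f, Projectivization.mk_eq_mk_iff'] at hab
      obtain ⟨c, hc⟩ := hab
      have h1 := li (c * b - 1) c (by rw [← sub_eq_zero] at hc; rw [← hc]; module)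
      have := h1.1
      rw [h1.2] at this
      simp at this
    · exfalso
      simp only [f, Projectivization.mk_eq_mk_iff'] at hab
      obtain ⟨c, hc⟩ := hab
      have h1 := li (a - c) 1 (by rw [← sub_eq_zero] at hc; rw [← neg_eq_zero, ← hc]; module)
      exact one_ne_zero h1.2
    · simp only [f, Projectivization.mk_eq_mk_iff'] at hab
      obtain ⟨c, hc⟩ := hab
      have h1 := li (c * b - a) (c - 1) (by rw [← sub_eq_zero] at hc; rw [← hc]; module)
      have h2 : c = 1 := sub_eq_zero.1 h1.2
      have h3 := h1.1
      rw [h2, one_mul, sub_eq_zero] at h3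
      rw [h3]
  have himg : {P ∈ U | PGMem P L} = f '' {o | f o ∈ U} := by
    ext P
    simp only [Set.mem_ofPred_eq, Set.mem_image]
    constructor
    · rintro ⟨hP, hL⟩
      induction P using Projectivization.ind with
      | h w hw =>
      have hw' : w ∈ Submodule.span K {u, v} := by
        have : (Projectivization.mk K w hw).submodule ≤ Submodule.span K {u, v} := hL
        rw [Projectivization.submodule_mk, Submodule.span_singleton_le_iff_mem] at this
        exact this
      obtain ⟨a, b, hab⟩ := Submodule.mem_span_pair.1 hw'
      by_cases hb : b = 0
      · have e : f none = Projectivization.mk K w hw := by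
          simp only [f, Projectivization.mk_eq_mk_iff']
          have ha : a ≠ 0 := by rintro rfl; apply hw; rw [← hab, hb]; simp
          refine ⟨a⁻¹, ?_⟩
          rw [← hab, hb, zero_smul, add_zero, smul_smul, inv_mul_cancel₀ ha, one_smul]
        exact ⟨none, by rw [e]; exact hP, e⟩
      · have e : f (some (a / b)) = Projectivization.mk K w hw := by
          simp only [f, Projectivization.mk_eq_mk_iff']
          refine ⟨b⁻¹, ?_⟩
          rw [← hab, smul_add, smul_smul, smul_smul, inv_mul_cancel₀ hb, one_smul, div_eq_inv_mul]
        exact ⟨some (a / b), by rw [e]; exact hP, e⟩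
    · rintro ⟨o, ho, rfl⟩
      refine ⟨ho, ?_⟩
      rcases o with _ | t
      · show (Projectivization.mk K u hu).submodule ≤ Submodule.span K {u, v}
        rw [Projectivization.submodule_mk, Submodule.span_singleton_le_iff_mem]
        exact Submodule.subset_span (by simp)
      · show (Projectivization.mk K (t • u + v) (hv t)).submodule ≤ Submodule.span K {u, v}
        rw [Projectivization.submodule_mk, Submodule.span_singleton_le_iff_mem]
        exact Submodule.mem_span_pair.2 ⟨t, 1, by simp⟩
  have hc := hU.2 L
  rw [himg, Set.ncard_image_of_injective _ finj] at hc
  have e : {o | f o ∈ U}.ncard = (univ.filter fun t : K => TT U (t • u + v)).card + (if TT U u then 1 else 0) := by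
    have : {o | f o ∈ U} = ((univ.filter fun o : Option K => f o ∈ U : Finset (Option K)) : Set (Option K)) := by
      ext o; simp
    rw [this, Set.ncard_coe_finset, Finset.card_filter, Fintype.sum_option, Finset.card_filter, add_comm]
    congr 1
    · refine Finset.sum_congr rfl fun t _ => ?_
      simp only [f, TT_mk]
    · simp only [f, TT_mk]
  rwa [e] at hc

open Classical in
lemma total_count [Fintype K] {q : ℕ} {U : Set (PGPt K)} (hU : IsUnital q U) {f0 f1 f2 : Fin 3 → K} (hf : Fr f0 f1 f2) :
    (univ.filter fun t : K × K => TT U (t.1 • f0 + f1 + t.2 • f2)).card + 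
    (univ.filter fun t : K => TT U (t • f0 + f2)).card + (if TT U f0 then 1 else 0) = q ^ 3 + 1 := by
  have h0 : f0 ≠ 0 := by
    intro h
    exact one_ne_zero (hf.li 1 0 0 (by simp [h])).1
  have h1 : ∀ x : K, x • f0 + f2 ≠ 0 := by
    intro x h
    exact one_ne_zero (hf.li x 0 1 (by simpa using h)).2.2
  have h2 : ∀ t : K × K, t.1 • f0 + f1 + t.2 • f2 ≠ 0 := by
    intro x h
    exact one_ne_zero (hf.li x.1 1 x.2 (by simpa using h)).2.1
  let f : Option (K ⊕ K × K) → PGPt K := fun o => match o with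
    | none => Projectivization.mk K f0 h0
    | some (Sum.inl x) => Projectivization.mk K (x • f0 + f2) (h1 x)
    | some (Sum.inr t) => Projectivization.mk K (t.1 • f0 + f1 + t.2 • f2) (h2 t)
  have finj : Function.Injective f := by
    intro a b hab
    rcases a with _ | a | a <;> rcases b with _ | b | b <;>
      simp only [f, Projectivization.mk_eq_mk_iff'] at hab
    · rfl
    · obtain ⟨c, hc⟩ := hab
      have h1 := hf.li (c * b - 1) 0 c (by rw [← sub_eq_zero] at hc; rw [← hc]; module)
      have := h1.1
      rw [h1.2.2] at this
      simp at this
    · obtain ⟨c, hc⟩ := hab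
      have h1 := hf.li (c * b.1 - 1) c (c * b.2) (by rw [← sub_eq_zero] at hc; rw [← hc]; module)
      have := h1.1
      rw [h1.2.1] at this
      simp at this
    · obtain ⟨c, hc⟩ := hab
      have h1 := hf.li (c - a) 0 (-1) (by rw [← sub_eq_zero] at hc; rw [← hc]; module)
      simpa using h1.2.2
    · obtain ⟨c, hc⟩ := hab
      have h1 := hf.li (c * b - a) 0 (c - 1) (by rw [← sub_eq_zero] at hc; rw [← hc]; module)
      have h2 : c = 1 := sub_eq_zero.1 h1.2.2
      have h3 := h1.1
      rw [h2, one_mul, sub_eq_zero] at h3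
      rw [h3]
    · obtain ⟨c, hc⟩ := hab
      have h1 := hf.li (c * b.1 - a) c (c * b.2 - 1) (by rw [← sub_eq_zero] at hc; rw [← hc]; module)
      have := h1.2.2
      rw [h1.2.1] at this
      simp at this
    · obtain ⟨c, hc⟩ := hab
      have h1 := hf.li (c - a.1) (-1) (-a.2) (by rw [← sub_eq_zero] at hc; rw [← hc]; module)
      simpa using h1.2.1
    · obtain ⟨c, hc⟩ := hab
      have h1 := hf.li (c * b - a.1) (-1) (c -a.2) (by rw [← sub_eq_zero] at hc; rw [← hc]; module)
      simpa using h1.2.1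
    · obtain ⟨c, hc⟩ := hab
      have h1 := hf.li (c * b.1 - a.1) (c - 1) (c * b.2 - a.2) (by rw [← sub_eq_zero] at hc; rw [← hc]; module)
      have h2 : c = 1 := sub_eq_zero.1 h1.2.1
      have h3 := h1.1
      have h4 := h1.2.2
      rw [h2, one_mul, sub_eq_zero] at h3 h4
      rw [Prod.ext h3 h4]
  have fsurj : Function.Surjective f := by
    intro P
    induction P using Projectivization.ind with
    | h w hw =>
    obtain ⟨x, y, z, hxyz⟩ := hf.sp w
    by_cases hy : y = 0
    · by_cases hz : z = 0
      · refine ⟨none, ?_⟩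
        simp only [f, Projectivization.mk_eq_mk_iff']
        have hx : x ≠ 0 := by rintro rfl; apply hw; rw [hxyz, hy, hz]; simp
        refine ⟨x⁻¹, ?_⟩
        rw [hxyz, hy, hz, zero_smul, zero_smul, add_zero, add_zero, smul_smul, inv_mul_cancel₀ hx, one_smul]
      · refine ⟨some (Sum.inl (x / z)), ?_⟩
        simp only [f, Projectivization.mk_eq_mk_iff']
        refine ⟨z⁻¹, ?_⟩
        rw [hxyz, hy, zero_smul, add_zero, smul_add, smul_smul, smul_smul, inv_mul_cancel₀ hz, one_smul, div_eq_inv_mul]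
    · refine ⟨some (Sum.inr (x / y, z / y)), ?_⟩
      simp only [f, Projectivization.mk_eq_mk_iff']
      refine ⟨y⁻¹, ?_⟩
      rw [hxyz, smul_add, smul_add, smul_smul, smul_smul, smul_smul, inv_mul_cancel₀ hy, one_smul, div_eq_inv_mul, div_eq_inv_mul]
  have hc := hU.1
  rw [← Set.image_preimage_eq U fsurj, Set.ncard_image_of_injective _ finj] at hc
  rw [← hc]
  have : f ⁻¹' U = ((univ.filter fun o : Option (K ⊕ K × K) => f o ∈ U : Finset _) : Set _) := by
    ext o; simp
  rw [this, Set.ncard_coe_finset, Finset.card_filter, Finset.card_filter, Finset.card_filter,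
    Fintype.sum_option, Fintype.sum_sum_type]
  have e1 : (if f none ∈ U then 1 else 0) = (if TT U f0 then 1 else 0) := by simp only [f, TT_mk]
  have e2 : ∀ x, (if f (some (Sum.inl x)) ∈ U then 1 else 0) = (if TT U (x • f0 + f2) then 1 else 0) := by
    intro x; simp only [f, TT_mk]
  have e3 : ∀ t, (if f (some (Sum.inr t)) ∈ U then 1 else 0) = (if TT U (t.1 • f0 + f1 + t.2 • f2) then 1 else 0) := by
    intro x; simp only [f, TT_mk]
  simp only [e1, e2, e3]
  ring

lemma Fr.equiv {f0 f1 f2 : Fin 3 → K} (hf : Fr f0 f1 f2) : ∃ φ : (Fin 3 → K) ≃ₗ[K] (Fin 3 → K),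
    ∀ v, φ v = v 0 • f0 + v 1 • f1 + v 2 • f2 := by
  let l : (Fin 3 → K) →ₗ[K] (Fin 3 → K) :=
    { toFun := fun v => v 0 • f0 + v 1 • f1 + v 2 • f2
      map_add' := by intro u v; simp only [Pi.add_apply]; module
      map_smul' := by intro a v; simp only [Pi.smul_apply, smul_eq_mul, RingHom.id_apply]; module }
  have hl : ∀ v, l v = v 0 • f0 + v 1 • f1 + v 2 • f2 := fun v => rfl
  refine ⟨LinearEquiv.ofBijective l ⟨?_, ?_⟩, fun v => rfl⟩
  · rw [← LinearMap.ker_eq_bot, LinearMap.ker_eq_bot']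
    intro v hv
    obtain ⟨h0, h1, h2⟩ := hf.li _ _ _ hv
    ext i; fin_cases i
    · exact h0
    · exact h1
    · exact h2
  · intro w
    obtain ⟨x, y, z, h⟩ := hf.sp w
    exact ⟨![x, y, z], by rw [h, hl]; simp⟩

lemma Fr.shift {f0 f1 f2 : Fin 3 → K} (hf : Fr f0 f1 f2) (a c : K) : Fr f0 (a • f0 + f1 + c • f2) f2 where
  li := by
    intro x y z h
    obtain ⟨h0, h1, h2⟩ := hf.li (x + y * a) y (z + y * c) (by rw [← h]; module)
    subst h1
    simp at h0 h2
    exact ⟨h0, rfl, h2⟩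
  sp := by
    intro v
    obtain ⟨x, y, z, h⟩ := hf.sp v
    exact ⟨x - y * a, y, z - y * c, by rw [h]; module⟩

lemma ex_frame {u v : Fin 3 → K} (li : ∀ x y : K, x • u + y • v = 0 → x = 0 ∧ y = 0) : ∃ f, Fr u f v := by
  have hLI : LinearIndependent K ![u, v] := LinearIndependent.pair_iff.2 li
  have hfr : Module.finrank K (Submodule.span K {u, v}) = 2 := by
    have := finrank_span_eq_card hLI
    rwa [Matrix.range_cons, Matrix.range_cons, Matrix.range_empty, Set.union_empty, Set.singleton_union, Fintype.card_fin] at this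
  have hne : Submodule.span K {u, v} ≠ ⊤ := by
    intro h
    rw [h, finrank_top, Module.finrank_fin_fun] at hfr
    omega
  obtain ⟨f, hf⟩ : ∃ f, f ∉ Submodule.span K {u, v} := by
    by_contra! h
    exact hne (eq_top_iff.2 fun x _ => h x)
  have hli : ∀ x y z : K, x • u + y • f + z • v = 0 → x = 0 ∧ y = 0 ∧ z = 0 := by
    intro x y z h
    have hy : y = 0 := by
      by_contra hy
      apply hf
      rw [Submodule.mem_span_pair]
      refine ⟨-x / y, -z / y, ?_⟩
      have : f = y⁻¹ • (y • f) := by rw [smul_smul, inv_mul_cancel₀ hy, one_smul]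
      rw [this]
      have h2 : y • f = -(x • u) - z • v := by rw [eq_sub_iff_add_eq, eq_neg_iff_add_eq_zero, ← h]; module
      rw [h2, smul_sub, smul_neg, smul_smul, smul_smul, div_eq_inv_mul, div_eq_inv_mul]
      module
    subst hy
    obtain ⟨h1, h2⟩ := li x z (by simpa using h)
    exact ⟨h1, rfl, h2⟩
  refine ⟨f, hli, fun w => ?_⟩
  have h3 : LinearIndependent K ![u, f, v] := by
    rw [Fintype.linearIndependent_iff]
    intro g hg
    simp only [Fin.sum_univ_three, Matrix.cons_val_zero, Matrix.cons_val_one, Matrix.cons_val_two, Matrix.head_cons, Matrix.tail_cons] at hg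
    obtain ⟨h0, h1, h2⟩ := hli _ _ _ hg
    intro i; fin_cases i
    · exact h0
    · exact h1
    · exact h2
  have h4 := h3.span_eq_top_of_card_eq_finrank (by simp)
  have h5 : w ∈ Submodule.span K (Set.range ![u, f, v]) := by rw [h4]; trivial
  obtain ⟨c, hc⟩ := (Submodule.mem_span_range_iff_exists_fun K).1 h5
  refine ⟨c 0, c 1, c 2, ?_⟩
  rw [← hc, Fin.sum_univ_three]
  rfl

end UGeo

namespace UGeo
open Finset
open scoped LinearAlgebra.Projectivization

lemma one_tangent {ι : Type*} [Fintype ι] [DecidableEq ι] {q : ℕ} (hq : 2 < q) (hι : Fintype.card ι = q ^ 2) (n : ι → ℕ)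
    (hn : ∀ c, n c + 1 = 1 ∨ n c + 1 = q + 1) (hs : ∑ c, n c + q + 1 = q ^ 3 + 1) :
    ∃ c0, n c0 = 0 ∧ ∀ c, c ≠ c0 → n c = q := by
  have h1 : ∀ c, n c + (if n c = 0 then q else 0) = q := by
    intro c
    rcases hn c with h | h
    · rw [if_pos (by omega)]; omega
    · rw [if_neg (by omega)]; omega
  have h2 : ∑ c, n c + (univ.filter fun c => n c = 0).card * q = q ^ 2 * q := by
    have := Finset.sum_congr (rfl : (univ : Finset ι) = univ) fun c _ => h1 c
    rw [Finset.sum_add_distrib, ← Finset.sum_filter, Finset.sum_const, Finset.sum_const, card_univ, hι] at this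
    simpa using this
  have h3 : q ^ 3 = q ^ 2 * q := by ring
  have h4 : (univ.filter fun c => n c = 0).card * q = 1 * q := by omega
  have h5 := Nat.eq_of_mul_eq_mul_right (by omega) h4
  obtain ⟨c0, hc0⟩ := card_eq_one.1 h5
  have h6 : ∀ c, n c = 0 ↔ c = c0 := by
    intro c
    have : c ∈ (univ.filter fun c => n c = 0) ↔ c ∈ ({c0} : Finset ι) := by rw [hc0]
    simpa using this
  refine ⟨c0, (h6 c0).2 rfl, fun c hc => ?_⟩
  have := hn c
  have h7 : n c ≠ 0 := fun h => hc ((h6 c).1 h)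
  omega

variable {K : Type*} [Field K] [Fintype K]

open Classical in
/-- affine part -/
noncomputable def SS (U : Set (PGPt K)) (f0 f1 f2 : Fin 3 → K) : Finset (K × K) :=
  univ.filter fun t : K × K => TT U (t.1 • f0 + f1 + t.2 • f2)

open Classical in
/-- part at infinity -/
noncomputable def SZ (U : Set (PGPt K)) (f0 f2 : Fin 3 → K) : Finset K :=
  univ.filter fun t : K => TT U (t • f0 + f2)

lemma mem_SS {U : Set (PGPt K)} {f0 f1 f2 : Fin 3 → K} {x z : K} : (x, z) ∈ SS U f0 f1 f2 ↔ TT U (x • f0 + f1 + z • f2) := by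
  simp [SS]

lemma mem_SZ {U : Set (PGPt K)} {f0 f2 : Fin 3 → K} {x : K} : x ∈ SZ U f0 f2 ↔ TT U (x • f0 + f2) := by
  simp [SZ]

section
variable {q : ℕ} {U : Set (PGPt K)} {f0 f1 f2 : Fin 3 → K} [DecidableEq K]

lemma cSZ (hq : 2 < q) (hU : IsUnital q U) (hf : Fr f0 f1 f2) (h0 : TT U f0) (h2 : TT U f2) : 
    (SZ U f0 f2).card = q := by
  classical
  have h := line_count hU f0 f2 (fun x y h => by
    have := hf.li x 0 y (by simpa using h); exact ⟨this.1, this.2.2⟩)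
  rw [if_pos h0] at h
  have hm : 0 < (SZ U f0 f2).card := Finset.card_pos.2 ⟨0, by rw [mem_SZ]; simpa using h2⟩
  have e : (SZ U f0 f2).card = (univ.filter fun t : K => TT U (t • f0 + f2)).card := by
    congr 1
  omega

lemma rowSS (hU : IsUnital q U) (hf : Fr f0 f1 f2) (h0 : TT U f0) (c : K) :
    (univ.filter fun x : K => (x, c) ∈ SS U f0 f1 f2).card + 1 = 1 ∨
    (univ.filter fun x : K => (x, c) ∈ SS U f0 f1 f2).card + 1 = q + 1 := by
  classical
  have h := line_count hU f0 (f1 + c • f2) (fun x y h => by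
    have := hf.li x y (y * c) (by rw [← h]; module); exact ⟨this.1, this.2.1⟩)
  rw [if_pos h0] at h
  have e : (univ.filter fun x : K => (x, c) ∈ SS U f0 f1 f2).card = 
      (univ.filter fun t : K => TT U (t • f0 + (f1 + c • f2))).card := by
    congr 1; ext x; simp only [mem_filter, mem_univ, true_and]; rw [mem_SS]; rw [show x • f0 + f1 + c • f2 = x • f0 + (f1 + c • f2) by module]
  rwa [e]

lemma colSS (hU : IsUnital q U) (hf : Fr f0 f1 f2) (h2 : TT U f2) (c : K) :
    (univ.filter fun z : K => (c, z) ∈ SS U f0 f1 f2).card + 1 = 1 ∨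
    (univ.filter fun z : K => (c, z) ∈ SS U f0 f1 f2).card + 1 = q + 1 := by
  classical
  have h := line_count hU f2 (c • f0 + f1) (fun x y h => by
    have := hf.li (y * c) y x (by rw [← h]; module); exact ⟨this.2.2, this.2.1⟩)
  rw [if_pos h2] at h
  have e : (univ.filter fun z : K => (c, z) ∈ SS U f0 f1 f2).card = 
      (univ.filter fun t : K => TT U (t • f2 + (c • f0 + f1))).card := by
    congr 1; ext x; simp only [mem_filter, mem_univ, true_and]; rw [mem_SS]; rw [show c • f0 + f1 + x • f2 = x • f2 + (c • f0 + f1) by module]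
  rwa [e]

lemma lineSS (hU : IsUnital q U) (hf : Fr f0 f1 f2) (a b : K) :
    (univ.filter fun z : K => (a * z + b, z) ∈ SS U f0 f1 f2).card + (if a ∈ SZ U f0 f2 then 1 else 0) = 1 ∨
    (univ.filter fun z : K => (a * z + b, z) ∈ SS U f0 f1 f2).card + (if a ∈ SZ U f0 f2 then 1 else 0) = q + 1 := by
  classical
  have h := line_count hU (a • f0 + f2) (b • f0 + f1) (fun x y h => by
    have := hf.li (x * a + y * b) y x (by rw [← h]; module); exact ⟨this.2.2, this.2.1⟩)
  have e : (univ.filter fun z : K => (a * z + b, z) ∈ SS U f0 f1 f2).card = 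
      (univ.filter fun t : K => TT U (t • (a • f0 + f2) + (b • f0 + f1))).card := by
    congr 1; ext x
    simp only [mem_SS, mem_filter, mem_univ, true_and]
    rw [show (a * x + b) • f0 + f1 + x • f2 = x • (a • f0 + f2) + (b • f0 + f1) by module]
  have e2 : (if a ∈ SZ U f0 f2 then 1 else 0) = (if TT U (a • f0 + f2) then 1 else 0) := by
    simp only [mem_SZ]
  rwa [e, e2]

lemma totSS (hq : 2 < q) (hU : IsUnital q U) (hf : Fr f0 f1 f2) (h0 : TT U f0) (h2 : TT U f2) : 
    (SS U f0 f1 f2).card + q + 1 = q ^ 3 + 1 := by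
  classical
  have h := total_count hU hf
  rw [if_pos h0] at h
  have e1 : (SS U f0 f1 f2).card = (univ.filter fun t : K × K => TT U (t.1 • f0 + f1 + t.2 • f2)).card := by
    congr 1
  have e2 : (SZ U f0 f2).card = (univ.filter fun t : K => TT U (t • f0 + f2)).card := by
    congr 1
  rw [← e1, ← e2, cSZ hq hU hf h0 h2] at h
  exact h

lemma sum_rows (S : Finset (K × K)) : ∑ c, (univ.filter fun x : K => (x, c) ∈ S).card = S.card := by
  rw [Finset.card_eq_sum_card_fiberwise (s := S) (f := Prod.snd) (t := univ) (by intro _ _; simp)]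
  refine Finset.sum_congr rfl fun c _ => ?_
  refine Finset.card_nbij' (fun x => (x, c)) Prod.fst ?_ ?_ ?_ ?_
  · intro x hx; simpa using hx
  · rintro ⟨x, z⟩ hx
    simp only [coe_filter, Set.mem_ofPred_eq, mem_univ, true_and] at hx ⊢
    rw [← hx.2]; exact hx.1
  · intro x _; rfl
  · rintro ⟨x, z⟩ hx
    simp only [coe_filter, Set.mem_ofPred_eq] at hx
    rw [← hx.2]

lemma sum_cols (S : Finset (K × K)) : ∑ c, (univ.filter fun z : K => (c, z) ∈ S).card = S.card := by
  rw [Finset.card_eq_sum_card_fiberwise (s := S) (f := Prod.fst) (t := univ) (by intro _ _; simp)]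
  refine Finset.sum_congr rfl fun c _ => ?_
  refine Finset.card_nbij' (fun x => (c, x)) Prod.snd ?_ ?_ ?_ ?_
  · intro x hx; simpa using hx
  · rintro ⟨x, z⟩ hx
    simp only [coe_filter, Set.mem_ofPred_eq, mem_univ, true_and] at hx ⊢
    rw [← hx.2]; exact hx.1
  · intro x _; rfl
  · rintro ⟨x, z⟩ hx
    simp only [coe_filter, Set.mem_ofPred_eq] at hx
    rw [← hx.2]

/-- choose the third frame point on both tangents -/
lemma good_frame (hq : 2 < q) (hK : Fintype.card K = q ^ 2) (hU : IsUnital q U) (hf : Fr f0 f1 f2) (h0 : TT U f0) (h2 : TT U f2) :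
    ∃ g1, Fr f0 g1 f2 ∧ (∀ x, (x, (0 : K)) ∉ SS U f0 g1 f2) ∧ (∀ z, ((0 : K), z) ∉ SS U f0 g1 f2) ∧
    (∀ c : K, c ≠ 0 → (univ.filter fun x : K => (x, c) ∈ SS U f0 g1 f2).card = q) ∧
    (∀ c : K, c ≠ 0 → (univ.filter fun z : K => (c, z) ∈ SS U f0 g1 f2).card = q) := by
  obtain ⟨c, hc, hc'⟩ := one_tangent hq hK (fun c => (univ.filter fun x : K => (x, c) ∈ SS U f0 f1 f2).card)
    (rowSS hU hf h0) (by rw [sum_rows]; exact totSS hq hU hf h0 h2)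
  obtain ⟨a, ha, ha'⟩ := one_tangent hq hK (fun c => (univ.filter fun x : K => (c, x) ∈ SS U f0 f1 f2).card)
    (colSS hU hf h2) (by rw [sum_cols]; exact totSS hq hU hf h0 h2)
  have e : ∀ x z, (x, z) ∈ SS U f0 (a • f0 + f1 + c • f2) f2 ↔ (x + a, z + c) ∈ SS U f0 f1 f2 := by
    intro x z
    rw [mem_SS, mem_SS]
    rw [show x • f0 + (a • f0 + f1 + c • f2) + z • f2 = (x + a) • f0 + f1 + (z + c) • f2 by module]
  simp only [card_eq_zero, filter_eq_empty_iff, mem_univ, forall_true_left] at hc ha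
  refine ⟨a • f0 + f1 + c • f2, hf.shift a c, ?_, ?_, ?_, ?_⟩
  · intro x; rw [e, zero_add]; apply hc
  · intro z; rw [e, zero_add]; apply ha
  · intro d hd
    rw [← hc' (d + c) (by simpa using hd)]
    refine Finset.card_nbij' (fun x => x + a) (fun x => x - a) ?_ ?_ ?_ ?_
    · intro x hx; simpa [e] using hx
    · intro x hx; simpa [e] using hx
    · intro x _; ring
    · intro x _; ring
  · intro d hd
    rw [← ha' (d + a) (by simpa using hd)]
    refine Finset.card_nbij' (fun x => x + c) (fun x => x - c) ?_ ?_ ?_ ?_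
    · intro x hx; simpa [e] using hx
    · intro x hx; simpa [e] using hx
    · intro x _; ring
    · intro x _; ring

end
end UGeo

namespace UGeo
open Finset
open scoped LinearAlgebra.Projectivization
section grp
variable {K : Type*} [Field K] [Fintype K] [DecidableEq K]
variable {q : ℕ} {U : Set (PGPt K)} {f0 f1 f2 : Fin 3 → K}

omit [Fintype K] [DecidableEq K] in
lemma TT_map {σ : Equiv.Perm (PGPt K)} {e : (Fin 3 → K) ≃ₗ[K] (Fin 3 → K)} (he : projHom e = σ)
    (hσ : σ '' U = U) (v : Fin 3 → K) : TT U (e v) ↔ TT U v := by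
  have key : ∀ P, σ P ∈ U ↔ P ∈ U := by
    intro P
    constructor
    · intro h
      rw [← hσ] at h
      obtain ⟨R, hR, hRP⟩ := h
      rwa [← σ.injective hRP]
    · intro h
      rw [← hσ]
      exact ⟨P, h, rfl⟩
  constructor
  · rintro ⟨h, h'⟩
    have hv : v ≠ 0 := by rintro rfl; simp at h
    refine ⟨hv, (key _).1 ?_⟩
    rw [← he]; exact h'
  · rintro ⟨h, h'⟩
    have hv : e v ≠ 0 := by simpa using h
    refine ⟨hv, ?_⟩
    have := (key _).2 h'
    rw [← he] at this; exact this

omit [Fintype K] [DecidableEq K] in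
lemma fix_vec {σ : Equiv.Perm (PGPt K)} {e : (Fin 3 → K) ≃ₗ[K] (Fin 3 → K)} (he : projHom e = σ)
    (v : Fin 3 → K) (hv : v ≠ 0) (hs : σ (Projectivization.mk K v hv) = Projectivization.mk K v hv) :
    ∃ l : K, l ≠ 0 ∧ e v = l • v := by
  have hv' : e v ≠ 0 := by simpa using hv
  have h1 : Projectivization.mk K (e v) hv' = Projectivization.mk K v hv := by
    rw [← hs, ← he]; rfl
  rw [Projectivization.mk_eq_mk_iff'] at h1
  obtain ⟨a, ha⟩ := h1
  refine ⟨a, ?_, ha.symm⟩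
  rintro rfl
  rw [zero_smul] at ha
  exact hv' ha.symm

/-- the diagonal form of an element of the stabiliser -/
lemma diag (hq : 2 < q) (hf : Fr f0 f1 f2) (r0 : ∀ x, (x, (0 : K)) ∉ SS U f0 f1 f2)
    (c0 : ∀ z, ((0 : K), z) ∉ SS U f0 f1 f2)
    (hr : ∀ c : K, c ≠ 0 → (univ.filter fun x : K => (x, c) ∈ SS U f0 f1 f2).card = q)
    (hc : ∀ c : K, c ≠ 0 → (univ.filter fun z : K => (c, z) ∈ SS U f0 f1 f2).card = q)
    (h0 : f0 ≠ 0) (h2 : f2 ≠ 0) {σ : Equiv.Perm (PGPt K)}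
    (hσ : σ ∈ twoPtStab U (Projectivization.mk K f0 h0) (Projectivization.mk K f2 h2)) :
    ∃ (t : K × K) (e : (Fin 3 → K) ≃ₗ[K] (Fin 3 → K)) (b : K), projHom e = σ ∧ b ≠ 0 ∧ t.1 ≠ 0 ∧ t.2 ≠ 0 ∧
      (∀ v, TT U (e v) ↔ TT U v) ∧ ∀ x y z : K, e (x • f0 + y • f1 + z • f2) = 
        b • ((t.1 * x) • f0 + y • f1 + (t.2 * z) • f2) := by
  obtain ⟨⟨⟨e, he⟩, hU⟩, hP, hQ⟩ := hσ
  have hT := TT_map he hU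
  obtain ⟨l, hl, hl'⟩ := fix_vec he f0 h0 hP
  obtain ⟨n, hn, hn'⟩ := fix_vec he f2 h2 hQ
  obtain ⟨a, b, c, habc⟩ := hf.sp (e f1)
  have hb : b ≠ 0 := by
    rintro rfl
    have h1 : e ((-a / l) • f0 + (1 : K) • f1 + (-c / n) • f2) = 0 := by
      rw [map_add, map_add, map_smul, map_smul, map_smul, hl', hn', habc, smul_smul, smul_smul,
        div_mul_cancel₀ _ hl, div_mul_cancel₀ _ hn]
      module
    rw [LinearEquiv.map_eq_zero_iff] at h1
    exact one_ne_zero (hf.li _ _ _ h1).2.1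
  have hc0 : c = 0 := by
    by_contra hcc
    obtain ⟨x, hx⟩ := Finset.card_pos.1 (show 0 < (univ.filter fun x : K => (x, c / b) ∈ SS U f0 f1 f2).card by
      rw [hr _ (div_ne_zero hcc hb)]; omega)
    simp only [mem_filter, mem_univ, true_and] at hx
    rw [mem_SS, ← TT_smul hb] at hx
    have h1 : e (((b * x - a) / l) • f0 + f1 + (0 : K) • f2) = b • (x • f0 + f1 + (c / b) • f2) := by
      rw [map_add, map_add, map_smul, map_smul, hl', hn', habc, smul_smul, 
        div_mul_cancel₀ _ hl, smul_add, smul_add, smul_smul b (c / b), mul_div_cancel₀ _ hb]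
      module
    rw [← h1, hT, ← mem_SS] at hx
    exact r0 _ hx
  have ha0 : a = 0 := by
    by_contra hcc
    obtain ⟨z, hx⟩ := Finset.card_pos.1 (show 0 < (univ.filter fun x : K => (a / b, x) ∈ SS U f0 f1 f2).card by
      rw [hc _ (div_ne_zero hcc hb)]; omega)
    simp only [mem_filter, mem_univ, true_and] at hx
    rw [mem_SS, ← TT_smul hb] at hx
    have h1 : e ((0 : K) • f0 + f1 + ((b * z - c) / n) • f2) = b • ((a / b) • f0 + f1 + z • f2) := by
      rw [map_add, map_add, map_smul, map_smul, hl', hn', habc, smul_smul ((b * z - c) / n), 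
        div_mul_cancel₀ _ hn, smul_add, smul_add, smul_smul b (a / b), mul_div_cancel₀ _ hb]
      module
    rw [← h1, hT, ← mem_SS] at hx
    exact c0 _ hx
  subst hc0 ha0
  refine ⟨(l / b, n / b), e, b, he, hb, div_ne_zero hl hb, div_ne_zero hn hb, hT, fun x y z => ?_⟩
  rw [map_add, map_add, map_smul, map_smul, map_smul, hl', hn', habc, smul_add b, smul_add b, smul_smul b, smul_smul b, smul_smul b]
  rw [show b * ((l / b, n / b).1 * x) = l * x by field_simp, show b * ((l / b, n / b).2 * z) = n * z by field_simp]
  module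

lemma mkAH (hq : 2 < q) (hU : IsUnital q U) (hf : Fr f0 f1 f2) (t0 : TT U f0) (t2 : TT U f2) 
    (r0 : ∀ x, (x, (0 : K)) ∉ SS U f0 f1 f2)
    (c0 : ∀ z, ((0 : K), z) ∉ SS U f0 f1 f2)
    (hr : ∀ c : K, c ≠ 0 → (univ.filter fun x : K => (x, c) ∈ SS U f0 f1 f2).card = q)
    (hc : ∀ c : K, c ≠ 0 → (univ.filter fun z : K => (c, z) ∈ SS U f0 f1 f2).card = q)
    (h0 : f0 ≠ 0) (h2 : f2 ≠ 0) 
    (hst : Nat.card (twoPtStab U (Projectivization.mk K f0 h0) (Projectivization.mk K f2 h2)) = q ^ 2 - 1) :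
    AH q (SS U f0 f1 f2) (SZ U f0 f2) := by
  classical
  refine ⟨by rw [mem_SZ]; simpa using t2, cSZ hq hU hf t0 t2, r0, hr, lineSS hU hf, ?_⟩
  set M := twoPtStab U (Projectivization.mk K f0 h0) (Projectivization.mk K f2 h2) with hM
  have hd := fun σ : M => diag hq hf r0 c0 hr hc h0 h2 σ.2
  choose t e b he hb t1 t2' hT hE using hd
  have hfin : Finite M := by
    apply Nat.finite_of_card_ne_zero
    rw [hst]
    have : 9 ≤ q ^ 2 := by nlinarith
    omega
  have : Fintype M := Fintype.ofFinite M
  have tinj : Function.Injective t := by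
    intro σ τ h
    apply Subtype.ext
    rw [← he σ, ← he τ]
    apply Equiv.ext
    intro P
    induction P using Projectivization.ind with
    | h w hw =>
    have hs : e σ w ≠ 0 := by simpa using hw
    have ht : e τ w ≠ 0 := by simpa using hw
    show Projectivization.mk K (e σ w) hs = Projectivization.mk K (e τ w) ht
    rw [Projectivization.mk_eq_mk_iff']
    obtain ⟨x, y, z, rfl⟩ := hf.sp w
    refine ⟨b σ / b τ, ?_⟩
    rw [hE, hE, h, smul_smul, div_mul_cancel₀ _ (hb τ)]
  refine ⟨univ.image t, ?_, ?_⟩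
  · rw [Finset.card_image_of_injective _ tinj, Finset.card_univ, ← Nat.card_eq_fintype_card, hst]
  · intro s hs
    obtain ⟨σ, -, rfl⟩ := Finset.mem_image.1 hs
    refine ⟨t1 σ, t2' σ, ?_, ?_⟩
    · intro x z hxz
      rw [mem_SS] at hxz ⊢
      rw [← hT σ, show x • f0 + f1 + z • f2 = x • f0 + (1 : K) • f1 + z • f2 by rw [one_smul], hE, TT_smul (hb σ), one_smul] at hxz
      exact hxz
    · intro x hx
      rw [mem_SZ] at hx ⊢
      rw [← hT σ, show x • f0 + f2 = x • f0 + (0 : K) • f1 + (1 : K) • f2 by module, hE, TT_smul (hb σ), 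
        ← TT_smul (inv_ne_zero (t2' σ))] at hx
      have := t2' σ
      convert hx using 1
      rw [smul_add, smul_add, smul_smul, smul_smul, smul_smul]
      rw [show (t σ).2⁻¹ * ((t σ).1 * x) = (t σ).1 / (t σ).2 * x by field_simp, mul_zero, zero_smul, mul_one, inv_mul_cancel₀ this]
      module

omit [Fintype K] [DecidableEq K] in
lemma herm_of [Fintype K] {p h : ℕ} (H : QF K q p h) (hf : Fr f0 f1 f2) (t0 : TT U f0) {e b : K} (he : e ≠ 0) (hb : b ≠ 0)
    (hbq : b ^ q = -b) (hZ : ∀ x, e * x ∈ SZ U f0 f2 ↔ x ^ q = x)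
    (hS : ∀ x z, (e * x, z) ∈ SS U f0 f1 f2 ↔ b * (x ^ q * z - x * z ^ q) = 1) (x y z : K) 
    (hne : x ≠ 0 ∨ y ≠ 0 ∨ z ≠ 0) :
    TT U ((e * x) • f0 + y • f1 + z • f2) ↔ b * (x ^ q * z - x * z ^ q) = y ^ (q + 1) := by
  classical
  have hq0 : q ≠ 0 := by have := H.q2; omega
  by_cases hy : y = 0
  · subst hy
    rw [zero_pow (by omega)]
    by_cases hz : z = 0
    · subst hz
      have hx : x ≠ 0 := by simpa using hne
      rw [zero_smul, zero_smul, add_zero, add_zero, TT_smul (mul_ne_zero he hx)]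
      simp [t0, H.zero_pow']
    · have h1 := hZ (x / z)
      rw [mem_SZ, ← TT_smul hz, smul_add, smul_smul, show z * (e * (x / z)) = e * x by field_simp, div_pow,
        div_eq_div_iff (pow_ne_zero _ hz) hz] at h1
      rw [zero_smul, add_zero, h1]
      simp [hb, sub_eq_zero]
  · have h1 := hS (x / y) (z / y)
    rw [mem_SS, ← TT_smul hy, smul_add, smul_add, smul_smul, smul_smul, show y * (e * (x / y)) = e * x by field_simp, 
      mul_div_cancel₀ _ hy] at h1
    rw [h1, pow_succ, div_pow, div_pow]
    have := pow_ne_zero q hy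
    rw [show b * (x ^ q / y ^ q * (z / y) - x / y * (z ^ q / y ^ q)) = b * (x ^ q * z - x * z ^ q) / (y ^ q * y) by field_simp,
      div_eq_one_iff_eq (by positivity)]

lemma classical_of {p h : ℕ} (H : QF K q p h) (hf : Fr f0 f1 f2) (t0 : TT U f0) {e b : K} (he : e ≠ 0) (hb : b ≠ 0)
    (hbq : b ^ q = -b) (hZ : ∀ x, e * x ∈ SZ U f0 f2 ↔ x ^ q = x)
    (hS : ∀ x z, (e * x, z) ∈ SS U f0 f1 f2 ↔ b * (x ^ q * z - x * z ^ q) = 1) : IsClassicalUnital q U := by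
  have hT := herm_of H hf t0 he hb hbq hZ hS
  have hq := H.q2
  obtain ⟨c, hc⟩ := Finset.card_pos.1 (show 0 < (univ.filter fun c : K => c ^ q ≠ c).card by
    rw [H.card_C]; have : q * 1 < q ^ 2 := by rw [pow_two]; gcongr; omega
    omega)
  simp only [mem_filter, mem_univ, true_and] at hc
  have hu : b * (c ^ q - c) ≠ 0 := mul_ne_zero hb (sub_ne_zero.2 hc)
  have huq : (b * (c ^ q - c)) ^ q = b * (c ^ q - c) := by
    rw [mul_pow, H.sub_pow, H.powqq, hbq]; ring
  obtain ⟨a, ha⟩ : ∃ a : K, b * (a ^ q - a) = -1 := by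
    refine ⟨-c / (b * (c ^ q - c)), ?_⟩
    rw [div_pow, huq, H.neg_pow']
    have := sub_ne_zero.2 hc
    field_simp
    ring
  have ha0 : a ^ q - a ≠ 0 := by
    intro h; rw [h, mul_zero] at ha; simp at ha
  obtain ⟨d, hd⟩ := H.exists_norm (β := (-1 : K)) (by
    rw [H.fu_iff]; exact ⟨by rw [H.neg_pow', one_pow], by simp⟩)
  have hd0 : d ≠ 0 := by
    rintro rfl
    rw [zero_pow (by omega)] at hd
    simp at hd
  have hF : Fr ((a * e) • f0 + f2) f1 ((a ^ q * d * e) • f0 + d • f2) := by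
    constructor
    · intro x y z h
      obtain ⟨h0, h1, h2⟩ := hf.li (x * (a * e) + z * (a ^ q * d * e)) y (x + z * d) (by rw [← h]; module)
      have h3 : x = - (z * d) := eq_neg_of_add_eq_zero_left h2
      rw [h3] at h0
      have h4 : z * (d * e * (a ^ q - a)) = 0 := by rw [← h0]; ring
      have h5 : z = 0 := (mul_eq_zero.1 h4).resolve_right (mul_ne_zero (mul_ne_zero hd0 he) ha0)
      subst h5
      exact ⟨by simpa using h3, h1, rfl⟩
    · intro v
      obtain ⟨x, y, z, rfl⟩ := hf.sp v
      refine ⟨(a ^ q * z - x / e) / (a ^ q - a), y, (x / e - a * z) / (a ^ q - a) / d, ?_⟩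
      have e1 : (a ^ q * z - x / e) / (a ^ q - a) * (a * e) + (x / e - a * z) / (a ^ q - a) / d * (a ^ q * d * e) = x := by
        field_simp; ring
      have e2 : (a ^ q * z - x / e) / (a ^ q - a) + (x / e - a * z) / (a ^ q - a) / d * d = z := by
        field_simp; ring
      generalize (a ^ q * z - x / e) / (a ^ q - a) = X at e1 e2 ⊢
      generalize (x / e - a * z) / (a ^ q - a) / d = Z at e1 e2 ⊢
      rw [← e1, ← e2]
      module
  obtain ⟨φ, hφ⟩ := hF.equiv
  have key : ∀ v, v ≠ 0 → (TT U (φ v) ↔ v 0 ^ (q + 1) + v 1 ^ (q + 1) + v 2 ^ (q + 1) = 0) := by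
    intro v hv
    have e0 : φ v = (e * (a * v 0 + a ^ q * d * v 2)) • f0 + v 1 • f1 + (v 0 + d * v 2) • f2 := by
      rw [hφ]; module
    have hne : a * v 0 + a ^ q * d * v 2 ≠ 0 ∨ v 1 ≠ 0 ∨ v 0 + d * v 2 ≠ 0 := by
      by_contra! hh
      apply hv
      have : φ v = 0 := by rw [e0, hh.1, hh.2.1, hh.2.2]; simp
      simpa using this
    rw [e0, hT _ _ _ hne]
    have e3 : b * ((a * v 0 + a ^ q * d * v 2) ^ q * (v 0 + d * v 2) - (a * v 0 + a ^ q * d * v 2) * (v 0 + d * v 2) ^ q)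
       = - (v 0 ^ (q + 1) + v 2 ^ (q + 1)) := by
      rw [H.add_pow, H.add_pow, mul_pow, mul_pow, mul_pow, mul_pow, H.powqq]
      have h1 : d ^ q * d = -1 := by rw [← pow_succ, hd]
      rw [pow_succ (v 0), pow_succ (v 2)]
      linear_combination (v 0 ^ q * v 0 - d ^ q * d * v 2 ^ q * v 2) * ha + v 2 ^ q * v 2 * h1
    rw [e3]
    constructor
    · intro h; linear_combination -h
    · intro h; linear_combination -h
  refine ⟨projHom φ, ⟨φ, rfl⟩, ?_⟩
  have hmap : ∀ P : PGPt K, projHom φ P ∈ U ↔ P.rep 0 ^ (q + 1) + P.rep 1 ^ (q + 1) + P.rep 2 ^ (q + 1) = 0 := by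
    intro P
    rw [← key _ P.rep_nonzero]
    have h1 : φ P.rep ≠ 0 := by simpa using P.rep_nonzero
    rw [← TT_mk h1]
    have : projHom φ P = Projectivization.mk K (φ P.rep) h1 := by
      conv_lhs => rw [← P.mk_rep]
      rfl
    rw [this]
  ext P
  constructor
  · rintro ⟨R, hR, rfl⟩
    exact (hmap R).2 hR
  · intro hP
    refine ⟨(projHom φ).symm P, ?_, by simp⟩
    rw [Set.mem_ofPred_eq, ← hmap]
    simpa using hP

end grp

lemma main_thm (q : ℕ) (hq : IsPrimePow q) (hq2 : 2 < q)
    {K : Type*} [Field K] [Fintype K] (hK : Fintype.card K = q ^ 2)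
    (U : Set (PGPt K)) (hU : IsUnital q U)
    (P Q : PGPt K) (hP : P ∈ U) (hQ : Q ∈ U) (hPQ : P ≠ Q)
    (hstab : Nat.card (twoPtStab U P Q) = q ^ 2 - 1) :
    IsClassicalUnital q U := by
  classical
  obtain ⟨p, h, hp, hh, hph⟩ := (isPrimePow_nat_iff q).1 hq
  have hchar : CharP K p := by
    obtain ⟨r, hr⟩ := CharP.exists K
    obtain ⟨n, hrp, hn⟩ := FiniteField.card K r
    have h1 : p ∣ r ^ (n : ℕ) := by
      rw [← hn, hK, ← hph, ← pow_mul]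
      exact dvd_pow_self _ (by positivity)
    have h2 := (Nat.prime_dvd_prime_iff_eq hp hrp).1 (hp.dvd_of_dvd_pow h1)
    rwa [h2]
  have H : QF K q p h := ⟨hK, hph.symm, hp, hchar, hh, hq2⟩
  induction P using Projectivization.ind with
  | h f0 h0 =>
  induction Q using Projectivization.ind with
  | h f2 h2 =>
  have t0 := (TT_mk h0).1 hP
  have t2 := (TT_mk h2).1 hQ
  obtain ⟨f1, hf⟩ := ex_frame (u := f0) (v := f2) (by
    intro x y hxy
    have hx : x = 0 := by
      by_contra hx
      apply hPQ
      rw [Projectivization.mk_eq_mk_iff']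
      refine ⟨-y / x, ?_⟩
      have h3 : x • f0 = (-y) • f2 := by rw [neg_smul]; exact eq_neg_of_add_eq_zero_left hxy
      rw [div_eq_inv_mul, mul_smul, ← h3, smul_smul, inv_mul_cancel₀ hx, one_smul]
    subst hx
    rw [zero_smul, zero_add] at hxy
    exact ⟨rfl, (smul_eq_zero.1 hxy).resolve_right h2⟩)
  obtain ⟨g1, hg, r0, c0, hr, hc⟩ := good_frame hq2 hK hU hf t0 t2
  obtain ⟨e, b, he, hb, hbq, hZ, hS⟩ := AH.conclusion H (mkAH hq2 hU hg t0 t2 r0 c0 hr hc h0 h2 hstab)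
  exact classical_of H hg t0 he hb hbq hZ hS

end UGeo

/-- **Main theorem.** Let `q > 2` be a prime power and `K` the field with `q²` elements. If a
unital `U` in `PG(2,q²)` has two distinct points `P, Q` whose stabiliser in the subgroup of
`PGL(3,K)` preserving `U` has order `q² - 1`, then `U` is classical. -/
theorem unital_classical_of_two_point_stabiliser
    (q : ℕ) (hq : IsPrimePow q) (hq2 : 2 < q)
    {K : Type*} [Field K] [Fintype K] (hK : Fintype.card K = q ^ 2)
    (U : Set (PGPt K)) (hU : IsUnital q U)
    (P Q : PGPt K) (hP : P ∈ U) (hQ : Q ∈ U) (hPQ : P ≠ Q)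
    (hstab : Nat.card (twoPtStab U P Q) = q ^ 2 - 1) :
    IsClassicalUnital q U := by
  exact UGeo.main_thm q hq hq2 hK U hU P Q hP hQ hPQ hstab
end

section
/- Let q be a prime power, K a finite field with q² elements, λ a generator of the multiplicative group K*, and let g : K × K → K × K be the bijection g(x,y) = (λx, λ^{q+1}y); let G be the cyclic group generated by g. Then: (i) the G-orbit of any point (x,y) with x ≠ 0 has exactly q² − 1 elements, and there are exactly q² such orbits; (ii) the G-orbit of any point (0,y) with y ≠ 0 has exactly q − 1 elements, and there are exactly q + 1 such orbits; (iii) consequently G has exactly q² + q + 1 orbits on (K × K) \ {(0,0)}. -/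
/-- The permutation `(x, y) ↦ (λ x, λ^{q+1} y)` of `K × K`. -/
def gPerm {K : Type*} [Field K] (q : ℕ) (u : Kˣ) : Equiv.Perm (K × K) :=
  Equiv.prodCongr (MulAction.toPerm u) (MulAction.toPerm (u ^ (q + 1)))

/-- The cyclic group generated by `gPerm q u`, as a subgroup of the permutations of `K × K`. -/
def gGroup {K : Type*} [Field K] (q : ℕ) (u : Kˣ) : Subgroup (Equiv.Perm (K × K)) :=
  Subgroup.zpowers (gPerm q u)

lemma gPerm_zpow_apply {K : Type*} [Field K] (q : ℕ) (u : Kˣ) (n : ℤ) (s : K × K) :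
    ((gPerm q u) ^ n) s = (((u ^ n : Kˣ) : K) * s.1, (((u ^ n) ^ (q + 1) : Kˣ) : K) * s.2) := by
  have h : ∀ (v : Kˣ) (s : K × K), gPerm q v s = ((v : K) * s.1, ((v ^ (q + 1) : Kˣ) : K) * s.2) :=
    fun v s => rfl
  have hm : ∀ v w : Kˣ, gPerm q (v * w) = gPerm q v * gPerm q w := by
    intro v w
    ext t
    · simp [h, mul_assoc]
    · simp [h, mul_pow, mul_assoc]
  let f : Kˣ →* Equiv.Perm (K × K) := MonoidHom.mk' (gPerm q) hm
  have : gPerm q u ^ n = gPerm q (u ^ n) := (map_zpow f u n).symm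
  rw [this, h]

lemma mem_orbit_gGroup {K : Type*} [Field K] (q : ℕ) (u : Kˣ)
    (hu : ∀ x : Kˣ, x ∈ Subgroup.zpowers u) (s p : K × K) :
    p ∈ MulAction.orbit (gGroup q u) s ↔
      ∃ v : Kˣ, ((v : K) * s.1, ((v ^ (q + 1) : Kˣ) : K) * s.2) = p := by
  constructor
  · rintro ⟨⟨g, hg⟩, rfl⟩
    obtain ⟨n, rfl⟩ := Subgroup.mem_zpowers_iff.1 hg
    exact ⟨u ^ n, (gPerm_zpow_apply q u n s).symm⟩
  · rintro ⟨v, rfl⟩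
    obtain ⟨n, rfl⟩ := Subgroup.mem_zpowers_iff.1 (hu v)
    exact ⟨⟨gPerm q u ^ n, Subgroup.mem_zpowers_iff.2 ⟨n, rfl⟩⟩, gPerm_zpow_apply q u n s⟩

/-- Orbit structure of `G = ⟨(x,y) ↦ (λx, λ^{q+1}y)⟩` on `K × K`, `λ` a generator of `K*`:
the orbits of points with `x ≠ 0` have size `q² - 1` and there are `q²` of them; the orbits of
points `(0,y)`, `y ≠ 0`, have size `q - 1` and there are `q + 1` of them; altogether `G` has
`q² + q + 1` orbits on the nonzero vectors. -/
theorem gGroup_orbit_structure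
    (q : ℕ) (hq : IsPrimePow q)
    (K : Type*) [Field K] [Fintype K] (hK : Fintype.card K = q ^ 2)
    (u : Kˣ) (hu : ∀ x : Kˣ, x ∈ Subgroup.zpowers u) :
    (∀ x y : K, x ≠ 0 →
        (MulAction.orbit (gGroup q u) ((x, y) : K × K)).ncard = q ^ 2 - 1) ∧
    {O : Set (K × K) | ∃ x y : K, x ≠ 0 ∧
        O = MulAction.orbit (gGroup q u) ((x, y) : K × K)}.ncard = q ^ 2 ∧
    (∀ y : K, y ≠ 0 →
        (MulAction.orbit (gGroup q u) ((0, y) : K × K)).ncard = q - 1) ∧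
    {O : Set (K × K) | ∃ y : K, y ≠ 0 ∧
        O = MulAction.orbit (gGroup q u) ((0, y) : K × K)}.ncard = q + 1 ∧
    {O : Set (K × K) | ∃ s : K × K, s ≠ (0, 0) ∧
        O = MulAction.orbit (gGroup q u) s}.ncard = q ^ 2 + q + 1 := by
  have hm := mem_orbit_gGroup q u hu
  have hq2 : 2 ≤ q := hq.two_le
  have hcard : Nat.card Kˣ = (q - 1) * (q + 1) := by
    rw [Nat.card_units, Nat.card_eq_fintype_card, hK, mul_comm, ← Nat.sq_sub_sq, one_pow]
  have hcard' : Nat.card Kˣ = q ^ 2 - 1 := by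
    rw [Nat.card_units, Nat.card_eq_fintype_card, hK]
  have hcyc : IsCyclic Kˣ := ⟨u, hu⟩
  let H : Subgroup Kˣ := (powMonoidHom (q + 1) : Kˣ →* Kˣ).range
  have hidx : H.index = q + 1 := by
    rw [IsCyclic.index_powMonoidHom_range, hcard, Nat.gcd_mul_left_left]
  have hH : Nat.card H = q - 1 := by
    have := H.card_mul_index
    rw [hidx, hcard] at this
    exact Nat.eq_of_mul_eq_mul_right (Nat.succ_pos q) this
  have h2 : {O : Set (K × K) | ∃ x y : K, x ≠ 0 ∧
        O = MulAction.orbit (gGroup q u) ((x, y) : K × K)}.ncard = q ^ 2 := by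
    have : {O : Set (K × K) | ∃ x y : K, x ≠ 0 ∧
        O = MulAction.orbit (gGroup q u) ((x, y) : K × K)} =
        Set.range (fun c : K => MulAction.orbit (gGroup q u) ((1, c) : K × K)) := by
      ext O
      constructor
      · rintro ⟨x, y, hx, rfl⟩
        refine ⟨(((Units.mk0 x hx)⁻¹ ^ (q + 1) : Kˣ) : K) * y, ?_⟩
        refine MulAction.orbit_eq_iff.2 ((hm _ _).2 ⟨(Units.mk0 x hx)⁻¹, ?_⟩)
        simp [hx]
      · rintro ⟨c, rfl⟩
        exact ⟨1, c, one_ne_zero, rfl⟩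
    rw [this, ← Set.image_univ, Set.ncard_image_of_injective, Set.ncard_univ,
      Nat.card_eq_fintype_card, hK]
    intro c d hcd
    obtain ⟨v, hv⟩ := (hm _ _).1 (MulAction.orbit_eq_iff.1 hcd)
    simp only [Prod.mk.injEq, mul_one, Units.val_eq_one] at hv
    obtain ⟨rfl, hv⟩ := hv
    simpa using hv.symm
  have h4 : {O : Set (K × K) | ∃ y : K, y ≠ 0 ∧
        O = MulAction.orbit (gGroup q u) ((0, y) : K × K)}.ncard = q + 1 := by
    have key : ∀ y z : Kˣ, y⁻¹ * z ∈ H ↔ MulAction.orbit (gGroup q u) ((0, (y : K)) : K × K) =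
        MulAction.orbit (gGroup q u) ((0, (z : K)) : K × K) := by
      intro y z
      rw [eq_comm, MulAction.orbit_eq_iff, hm]
      constructor
      · rintro ⟨v, hv⟩
        refine ⟨v, ?_⟩
        have : v ^ (q + 1) * y = z := by
          rw [show v ^ (q + 1) = y⁻¹ * z from hv, mul_comm, mul_inv_cancel_left]
        simp [← this]
      · rintro ⟨v, hv⟩
        refine ⟨v, ?_⟩
        have h : v ^ (q + 1) * y = z := by
          ext
          simpa using hv
        simp [← h, mul_comm]
    let f : Kˣ ⧸ H → Set (K × K) := Quotient.lift
      (fun y : Kˣ => MulAction.orbit (gGroup q u) ((0, (y : K)) : K × K))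
      (fun y z h => (key y z).1 (QuotientGroup.leftRel_apply.1 h))
    have hf : Function.Injective f := by
      intro a b
      induction a using QuotientGroup.induction_on
      induction b using QuotientGroup.induction_on
      intro h
      exact QuotientGroup.eq.2 ((key _ _).2 h)
    have : {O : Set (K × K) | ∃ y : K, y ≠ 0 ∧
        O = MulAction.orbit (gGroup q u) ((0, y) : K × K)} = Set.range f := by
      ext O
      constructor
      · rintro ⟨y, hy, rfl⟩
        exact ⟨QuotientGroup.mk (Units.mk0 y hy), rfl⟩
      · rintro ⟨c, rfl⟩
        induction c using QuotientGroup.induction_on with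
        | H z => exact ⟨z, z.ne_zero, rfl⟩
    rw [this, ← Set.image_univ, Set.ncard_image_of_injective _ hf, Set.ncard_univ]
    exact hidx
  refine ⟨?_, h2, ?_, h4, ?_⟩
  · intro x y hx
    have : MulAction.orbit (gGroup q u) ((x, y) : K × K) =
        Set.range (fun v : Kˣ => ((v : K) * x, ((v ^ (q + 1) : Kˣ) : K) * y)) := by
      ext p
      exact hm _ _
    rw [this, ← Set.image_univ, Set.ncard_image_of_injective, Set.ncard_univ, hcard']
    intro v w h
    ext
    exact mul_right_cancel₀ hx (Prod.mk.inj h).1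
  · intro y hy
    have : MulAction.orbit (gGroup q u) ((0, y) : K × K) =
        Set.range (fun v : H => ((0 : K), ((v : Kˣ) : K) * y)) := by
      ext p
      rw [hm]
      constructor
      · rintro ⟨v, rfl⟩
        exact ⟨⟨v ^ (q + 1), v, rfl⟩, by simp⟩
      · rintro ⟨⟨_, v, rfl⟩, rfl⟩
        exact ⟨v, by simp⟩
    rw [this, ← Set.image_univ, Set.ncard_image_of_injective, Set.ncard_univ, hH]
    intro v w h
    ext
    exact mul_right_cancel₀ hy (Prod.mk.inj h).2
  · have hU : {O : Set (K × K) | ∃ s : K × K, s ≠ (0, 0) ∧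
        O = MulAction.orbit (gGroup q u) s} =
        {O : Set (K × K) | ∃ x y : K, x ≠ 0 ∧
          O = MulAction.orbit (gGroup q u) ((x, y) : K × K)} ∪
        {O : Set (K × K) | ∃ y : K, y ≠ 0 ∧
          O = MulAction.orbit (gGroup q u) ((0, y) : K × K)} := by
      ext O
      constructor
      · rintro ⟨⟨x, y⟩, hs, rfl⟩
        by_cases hx : x = 0
        · subst hx
          exact Or.inr ⟨y, fun h => hs (by rw [h]), rfl⟩
        · exact Or.inl ⟨x, y, hx, rfl⟩
      · rintro (⟨x, y, hx, rfl⟩ | ⟨y, hy, rfl⟩)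
        · exact ⟨(x, y), fun h => hx (Prod.mk.inj h).1, rfl⟩
        · exact ⟨(0, y), fun h => hy (Prod.mk.inj h).2, rfl⟩
    rw [hU, Set.ncard_union_eq ?_ (Set.toFinite _) (Set.toFinite _), h2, h4, add_assoc]
    rw [Set.disjoint_left]
    rintro O ⟨x, y, hx, rfl⟩ ⟨z, hz, h⟩
    obtain ⟨v, hv⟩ := (hm _ _).1 (MulAction.orbit_eq_iff.1 h)
    exact hx (by simpa using (Prod.mk.inj hv).1.symm)
end
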